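/- Let ω^T ∈ A^{[AB]}(T), let u* be the backward-forward solution associated to ω^T, and let u be any AB-entropy solution with initial datum u_0 ∈ I_T^{[AB]}(ω^T) (so that u(·,T) = ω^T a.e.). Then for every x ∈ ℝ one has C(u*, x) ∩ C(u, x) ≠ ∅, i.e. u* and u share an AB-genuine/interface characteristic reaching x at time T. -/

import Mathlib

open MeasureTheory Set Filter

noncomputable section

/-- The discontinuous flux `f(x,u) = f_l(u)` for `x < 0`, `f_r(u)` for `x > 0`
(the value at the interface is taken to be `f_r(u)`). -/
def dflux (fl fr : ℝ → ℝ) (x u : ℝ) : ℝ := if x < 0 then fl u else fr u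

/-- The connection function `c^{AB}`. -/
def cAB (A B : ℝ) (x : ℝ) : ℝ := if x ≤ 0 then A else B

/-- An `AB`-entropy solution of `u_t + f(x,u)_x = 0` on `ℝ × [0,∞)` with
initial datum `u0`, for the flux `f(x,·) = fl` on `x<0` and `fr` on `x>0`,
relative to the connection `(A,B)`.  The structure bundles the solution `u`
(as a function of `(x,t)`), its one-sided spatial limits `um x t = u(x-,t)` and
`up x t = u(x+,t)` (for `t > 0`), the weak (distributional) formulation, the
Kružkov entropy inequalities away from the interface, the `AB`-interface
entropy inequality, `L¹_loc`-continuity in time and the initial condition. -/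
structure ABSol (fl fr : ℝ → ℝ) (A B : ℝ) (u0 : ℝ → ℝ) where
  u : ℝ → ℝ → ℝ
  meas : Measurable (Function.uncurry u)
  bdd : ∃ M : ℝ, ∀ x t, |u x t| ≤ M
  um : ℝ → ℝ → ℝ
  up : ℝ → ℝ → ℝ
  um_spec : ∀ x t, 0 < t →
    Tendsto (fun y => u y t) (nhdsWithin x (Iio x)) (nhds (um x t))
  up_spec : ∀ x t, 0 < t →
    Tendsto (fun y => u y t) (nhdsWithin x (Ioi x)) (nhds (up x t))
  weak : ∀ φ : ℝ → ℝ → ℝ,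
    ContDiff ℝ 1 (fun p : ℝ × ℝ => φ p.1 p.2) →
    HasCompactSupport (fun p : ℝ × ℝ => φ p.1 p.2) →
    (∀ x t, t ≤ 0 → φ x t = 0) →
    (∫ p : ℝ × ℝ, (u p.1 p.2 * deriv (fun s => φ p.1 s) p.2 +
        dflux fl fr p.1 (u p.1 p.2) * deriv (fun y => φ y p.2) p.1)) = 0
  kruzkov_l : ∀ (k : ℝ) (φ : ℝ → ℝ → ℝ),
    ContDiff ℝ 1 (fun p : ℝ × ℝ => φ p.1 p.2) →
    HasCompactSupport (fun p : ℝ × ℝ => φ p.1 p.2) →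
    (∀ x t, 0 ≤ φ x t) →
    (∀ x t, 0 ≤ x ∨ t ≤ 0 → φ x t = 0) →
    0 ≤ ∫ p : ℝ × ℝ, (|u p.1 p.2 - k| * deriv (fun s => φ p.1 s) p.2 +
        Real.sign (u p.1 p.2 - k) * (fl (u p.1 p.2) - fl k) *
          deriv (fun y => φ y p.2) p.1)
  kruzkov_r : ∀ (k : ℝ) (φ : ℝ → ℝ → ℝ),
    ContDiff ℝ 1 (fun p : ℝ × ℝ => φ p.1 p.2) →
    HasCompactSupport (fun p : ℝ × ℝ => φ p.1 p.2) →
    (∀ x t, 0 ≤ φ x t) →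
    (∀ x t, x ≤ 0 ∨ t ≤ 0 → φ x t = 0) →
    0 ≤ ∫ p : ℝ × ℝ, (|u p.1 p.2 - k| * deriv (fun s => φ p.1 s) p.2 +
        Real.sign (u p.1 p.2 - k) * (fr (u p.1 p.2) - fr k) *
          deriv (fun y => φ y p.2) p.1)
  interfaceEntropy : ∀ φ : ℝ → ℝ → ℝ,
    ContDiff ℝ 1 (fun p : ℝ × ℝ => φ p.1 p.2) →
    HasCompactSupport (fun p : ℝ × ℝ => φ p.1 p.2) →
    (∀ x t, 0 ≤ φ x t) →
    (∀ x t, t ≤ 0 → φ x t = 0) →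
    0 ≤ ∫ p : ℝ × ℝ, (|u p.1 p.2 - cAB A B p.1| * deriv (fun s => φ p.1 s) p.2 +
        Real.sign (u p.1 p.2 - cAB A B p.1) *
          (dflux fl fr p.1 (u p.1 p.2) - dflux fl fr p.1 (cAB A B p.1)) *
          deriv (fun y => φ y p.2) p.1)
  timeCont : ∀ (r t₀ : ℝ), 0 ≤ t₀ →
    Tendsto (fun t => ∫ x in Icc (-r) r, |u x t - u x t₀|)
      (nhdsWithin t₀ (Ici 0)) (nhds 0)
  init : ∀ᵐ x : ℝ ∂volume, u x 0 = u0 x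

/-- `AB`-genuine/interface characteristic for the `AB`-entropy solution `sol`,
on the time interval `[0,T]`, where `γ = f_l(A) = f_r(B)`. -/
def IsABgic (T : ℝ) (fl fr : ℝ → ℝ) (γ : ℝ) {A B : ℝ} {u0 : ℝ → ℝ}
    (sol : ABSol fl fr A B u0) (ζ : ℝ → ℝ) : Prop :=
  (∃ K : NNReal, LipschitzOnWith K ζ (Icc 0 T)) ∧
  (∀ᵐ t ∂(volume.restrict (Icc 0 T)),
    (ζ t < 0 → HasDerivAt ζ (deriv fl (sol.um (ζ t) t)) t ∧
      deriv fl (sol.um (ζ t) t) = deriv fl (sol.up (ζ t) t)) ∧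
    (0 < ζ t → HasDerivAt ζ (deriv fr (sol.um (ζ t) t)) t ∧
      deriv fr (sol.um (ζ t) t) = deriv fr (sol.up (ζ t) t)) ∧
    (ζ t = 0 → fl (sol.um 0 t) = γ ∧ fr (sol.up 0 t) = γ))

/-- `C(u,x)`: the set of `AB`-genuine/interface characteristics of `sol`
reaching `x` at time `T`. -/
def charSet (T : ℝ) (fl fr : ℝ → ℝ) (γ : ℝ) {A B : ℝ} {u0 : ℝ → ℝ}
    (sol : ABSol fl fr A B u0) (x : ℝ) : Set (ℝ → ℝ) :=
  {ζ | IsABgic T fl fr γ sol ζ ∧ ζ T = x}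

/-- `C₀(u,x)`: the set of initial positions `ζ(0)` of characteristics in `C(u,x)`. -/
def charSet0 (T : ℝ) (fl fr : ℝ → ℝ) (γ : ℝ) {A B : ℝ} {u0 : ℝ → ℝ}
    (sol : ABSol fl fr A B u0) (x : ℝ) : Set ℝ :=
  (fun ζ : ℝ → ℝ => ζ 0) '' charSet T fl fr γ sol x

/-- Membership in `L^∞(ℝ)`: measurable and (essentially) bounded. -/
def IsLinf (g : ℝ → ℝ) : Prop :=
  Measurable g ∧ ∃ M : ℝ, ∀ᵐ x : ℝ ∂volume, |g x| ≤ M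

/-- `ω ∈ A^{[AB]}(T)`: the profile `ω` is attainable at time `T`. -/
def Attainable (T : ℝ) (fl fr : ℝ → ℝ) (A B : ℝ) (ω : ℝ → ℝ) : Prop :=
  ∃ u0 : ℝ → ℝ, IsLinf u0 ∧
    ∃ sol : ABSol fl fr A B u0, ∀ᵐ x : ℝ ∂volume, sol.u x T = ω x

/-- `I_T^{[AB]}(ω)`: the set of (bounded) initial data whose `AB`-entropy
solution coincides a.e. with `ω` at time `T`. -/
def InitialSet (T : ℝ) (fl fr : ℝ → ℝ) (A B : ℝ) (ω : ℝ → ℝ) : Set (ℝ → ℝ) :=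
  {u0 | IsLinf u0 ∧
    ∃ sol : ABSol fl fr A B u0, ∀ᵐ x : ℝ ∂volume, sol.u x T = ω x}

/-- `x` is a point of continuity of `ω`: the one-sided limits exist and coincide. -/
def ContinuityPt (ω : ℝ → ℝ) (x : ℝ) : Prop :=
  ∃ l : ℝ, Tendsto ω (nhdsWithin x (Iio x)) (nhds l) ∧
    Tendsto ω (nhdsWithin x (Ioi x)) (nhds l)


/-! ### Uniformly convex functions and Legendre transform -/

structure UC (f : ℝ → ℝ) (a : ℝ) : Prop where
  c2 : ContDiff ℝ 2 f
  pos : 0 < a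
  bd : ∀ w, a ≤ deriv (deriv f) w

def gInv (f : ℝ → ℝ) : ℝ → ℝ := Function.invFun (deriv f)
def Leg (f : ℝ → ℝ) (q : ℝ) : ℝ := q * gInv f q - f (gInv f q)

namespace UC
variable {f : ℝ → ℝ} {a : ℝ}

theorem hasDeriv (h : UC f a) (x : ℝ) : HasDerivAt f (deriv f x) x :=
  ((h.c2.differentiable (by norm_num)) x).hasDerivAt

theorem diffD (h : UC f a) : Differentiable ℝ (deriv f) := by
  have := (contDiff_succ_iff_deriv (n := 1)).1 (by rw [one_add_one_eq_two]; exact h.c2)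
  exact this.2.2.differentiable (by norm_num)

theorem contD (h : UC f a) : Continuous (deriv f) := h.diffD.continuous

theorem cont (h : UC f a) : Continuous f := h.c2.continuous

theorem mono (h : UC f a) {x y : ℝ} (hxy : x ≤ y) : a * (y - x) ≤ deriv f y - deriv f x := by
  have := Convex.mul_sub_le_image_sub_of_le_deriv (D := univ) convex_univ
    h.contD.continuousOn h.diffD.differentiableOn (C := a) (fun x _ => h.bd x)
    x (mem_univ _) y (mem_univ _) hxy
  exact this

theorem strictMono (h : UC f a) : StrictMono (deriv f) := by
  intro x y hxy
  have := h.mono hxy.le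
  have := mul_pos h.pos (sub_pos.2 hxy)
  linarith

theorem surj (h : UC f a) : Function.Surjective (deriv f) := by
  apply h.contD.surjective
  · apply tendsto_atTop_mono' (f₁ := fun x => deriv f 0 + a * x)
    · filter_upwards [eventually_ge_atTop 0] with x hx
      have := h.mono hx
      simp at this
      linarith
    · exact tendsto_atTop_add_const_left _ _ (tendsto_id.const_mul_atTop h.pos)
  · refine Filter.tendsto_atBot_mono' (β := ℝ) _ (f₂ := deriv f) (f₁ := fun x => deriv f 0 + a * x) ?_ ?_
    · filter_upwards [eventually_le_atBot 0] with x hx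
      have := h.mono hx
      simp at this
      linarith
    · exact tendsto_atBot_add_const_left _ _ (tendsto_id.const_mul_atBot h.pos)

theorem d_g (h : UC f a) (q : ℝ) : deriv f (gInv f q) = q := Function.invFun_eq (h.surj q)
theorem g_d (h : UC f a) (p : ℝ) : gInv f (deriv f p) = p :=
  Function.leftInverse_invFun h.strictMono.injective p

theorem tangent (h : UC f a) (k p : ℝ) : f p + deriv f p * (k - p) ≤ f k := by
  have hc : ConvexOn ℝ univ f :=
    MonotoneOn.convexOn_of_deriv convex_univ h.cont.continuousOn
      ((h.c2.differentiable (by norm_num)).differentiableOn)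
      (h.strictMono.monotone.monotoneOn _)
  rcases lt_trichotomy k p with hk | hk | hk
  · have := hc.slope_le_of_hasDerivAt (x := k) (y := p) (mem_univ _) (mem_univ _) hk (h.hasDeriv p)
    rw [slope_def_field, div_le_iff₀ (by linarith)] at this
    nlinarith
  · subst hk; simp
  · have := hc.le_slope_of_hasDerivAt (x := p) (y := k) (mem_univ _) (mem_univ _) hk (h.hasDeriv p)
    rw [slope_def_field, le_div_iff₀ (by linarith)] at this
    nlinarith

theorem fenchel (h : UC f a) (k q : ℝ) : k * q - f k ≤ Leg f q := by
  have := h.tangent k (gInv f q)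
  rw [h.d_g] at this
  unfold Leg
  nlinarith

theorem leg_deriv (h : UC f a) (p : ℝ) : Leg f (deriv f p) = p * deriv f p - f p := by
  unfold Leg; rw [h.g_d]; ring

theorem g_mono (h : UC f a) : Monotone (gInv f) := by
  intro x y hxy
  by_contra hc
  push Not at hc
  have := h.strictMono hc
  rw [h.d_g, h.d_g] at this
  linarith

theorem g_lip (h : UC f a) {x y : ℝ} (hxy : x ≤ y) : a * (gInv f y - gInv f x) ≤ y - x := by
  have := h.mono (h.g_mono hxy)
  rwa [h.d_g, h.d_g] at this

theorem hasDerivLeg (h : UC f a) (q : ℝ) : HasDerivAt (Leg f) (gInv f q) q := by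
  rw [hasDerivAt_iff_isLittleO]
  have key : ∀ x, ‖Leg f x - Leg f q - (x - q) • gInv f q‖ ≤ a⁻¹ * ‖(x - q) ^ 2‖ := by
    intro x
    have h1 := h.fenchel (gInv f q) x
    have h2 := h.fenchel (gInv f x) q
    have h3 : (gInv f x - gInv f q) * (x - q) ≤ a⁻¹ * (x - q) ^ 2 := by
      rw [inv_mul_eq_div, le_div_iff₀ h.pos]
      rcases le_total q x with hx | hx
      · have := h.g_lip hx
        nlinarith
      · have := h.g_lip hx
        nlinarith
    have h4 : Leg f q = q * gInv f q - f (gInv f q) := rfl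
    have h5 : Leg f x = x * gInv f x - f (gInv f x) := rfl
    rw [Real.norm_eq_abs, Real.norm_eq_abs, abs_of_nonneg (sq_nonneg (x - q)), smul_eq_mul, abs_le]
    have : 0 ≤ a⁻¹ * (x - q) ^ 2 := mul_nonneg (inv_nonneg.2 h.pos.le) (sq_nonneg _)
    constructor <;> nlinarith
  have hO : (fun x => Leg f x - Leg f q - (x - q) • gInv f q) =O[nhds q] fun x => (x - q) ^ 2 :=
    Asymptotics.IsBigO.of_bound _ (Eventually.of_forall key)
  refine hO.trans_isLittleO ?_
  have : (fun x : ℝ => (x - q) ^ 2) = fun x => (x - q) * (x - q) := by ext; ring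
  rw [this]
  have h0 : (fun x : ℝ => x - q) =o[nhds q] (fun _ => (1 : ℝ)) := by
    rw [Asymptotics.isLittleO_one_iff]
    have : Tendsto (fun x : ℝ => x - q) (nhds q) (nhds (q - q)) := by
      exact (continuous_id.sub continuous_const).tendsto q
    simpa using this
  simpa using h0.mul_isBigO (Asymptotics.isBigO_refl (fun x : ℝ => x - q) (nhds q))

theorem contLeg (h : UC f a) : Continuous (Leg f) :=
  continuous_iff_continuousAt.2 fun q => (h.hasDerivLeg q).continuousAt

theorem neg (h : UC f a) : UC (fun x => f (-x)) a := by
  refine ⟨h.c2.comp contDiff_neg, h.pos, fun w => ?_⟩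
  have e1 : deriv (fun x => f (-x)) = fun x => - deriv f (-x) := by
    ext x; exact deriv_comp_neg f x
  rw [e1]
  have : deriv (fun x => - deriv f (-x)) w = deriv (deriv f) (-w) := by
    rw [deriv.fun_neg, deriv_comp_neg]; ring
  rw [this]
  exact h.bd _

theorem deriv_negf (_h : UC f a) (x : ℝ) : deriv (fun x => f (-x)) x = - deriv f (-x) :=
  deriv_comp_neg f x

theorem g_neg (h : UC f a) (q : ℝ) : gInv (fun x => f (-x)) q = - gInv f (-q) := by
  apply h.neg.strictMono.injective
  rw [h.neg.d_g, h.deriv_negf, neg_neg, h.d_g]; ring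

theorem leg_neg (h : UC f a) (q : ℝ) : Leg (fun x => f (-x)) q = Leg f (-q) := by
  unfold Leg; simp only [h.g_neg]; ring_nf

/-- coercivity -/
theorem coercive (h : UC f a) (M q : ℝ) : (M * |q|) - max (f M) (f (-M)) ≤ Leg f q := by
  rcases le_total 0 q with hq | hq
  · rw [abs_of_nonneg hq]
    have := h.fenchel M q
    have := le_max_left (f M) (f (-M))
    linarith
  · rw [abs_of_nonpos hq]
    have := h.fenchel (-M) q
    have := le_max_right (f M) (f (-M))
    linarith

theorem lipOn (h : UC f a) (M : ℝ) : ∃ C, 0 ≤ C ∧ ∀ x y, |x| ≤ M → |y| ≤ M → |f x - f y| ≤ C * |x - y| := by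
  obtain ⟨C, hC⟩ := (isCompact_Icc (a := -M) (b := M)).exists_bound_of_continuousOn h.contD.continuousOn
  refine ⟨max C 0, le_max_right _ _, fun x y hx hy => ?_⟩
  have := Convex.norm_image_sub_le_of_norm_deriv_le (s := Icc (-M) M) (f := f) (C := max C 0)
    (fun x _ => (h.hasDeriv x).differentiableAt) (fun x hx => (hC x hx).trans (le_max_left _ _))
    (convex_Icc _ _) (abs_le.1 hy) (abs_le.1 hx)
  simpa using this

end UC

/-! ### Mollification -/

def bmp (n : ℕ) : ContDiffBump (0 : ℝ × ℝ) :=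
  ⟨1 / (2 * ((n : ℝ) + 1)), 1 / ((n : ℝ) + 1), by positivity, by
    apply one_div_lt_one_div_of_lt <;> nlinarith [(Nat.cast_nonneg n : (0:ℝ) ≤ n)]⟩

def mol (n : ℕ) (Φ : ℝ × ℝ → ℝ) : ℝ × ℝ → ℝ :=
  convolution ((bmp n).normed volume) Φ (ContinuousLinearMap.lsmul ℝ ℝ) volume

theorem mol_eq (n : ℕ) (Φ : ℝ × ℝ → ℝ) (z : ℝ × ℝ) :
    mol n Φ z = ∫ y, (bmp n).normed volume y * Φ (z - y) := rfl

theorem bmp_rOut (n : ℕ) : (bmp n).rOut = 1 / ((n : ℝ) + 1) := rfl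

theorem bmp_rOut_tendsto : Tendsto (fun n => (bmp n).rOut) atTop (nhds 0) := by
  simp only [bmp_rOut]
  exact tendsto_one_div_add_atTop_nhds_zero_nat

theorem bmp_zero {n : ℕ} {y : ℝ × ℝ} (hy : (bmp n).rOut ≤ ‖y‖) : (bmp n).normed volume y = 0 := by
  have := (bmp n).support_normed_eq (μ := (volume : Measure (ℝ × ℝ)))
  by_contra hc
  have h2 : y ∈ Function.support ((bmp n).normed volume) := hc
  rw [this] at h2
  simp at h2
  linarith

theorem mol_contDiff (n : ℕ) {Φ : ℝ × ℝ → ℝ} (hΦ : Continuous Φ) : ContDiff ℝ 1 (mol n Φ) := by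
  exact (bmp n).hasCompactSupport_normed.contDiff_convolution_left _ (bmp n).contDiff_normed
    (hΦ.locallyIntegrable)

theorem mol_dist (n : ℕ) {Φ : ℝ × ℝ → ℝ} {K : NNReal} (hΦ : LipschitzWith K Φ) (z : ℝ × ℝ) :
    dist (mol n Φ z) (Φ z) ≤ K * (bmp n).rOut := by
  apply (bmp n).dist_normed_convolution_le hΦ.continuous.aestronglyMeasurable
  intro x hx
  exact (hΦ.dist_le_mul _ _).trans (mul_le_mul_of_nonneg_left (le_of_lt hx) K.2)

theorem mol_tendsto {Φ : ℝ × ℝ → ℝ} {K : NNReal} (hΦ : LipschitzWith K Φ) (z : ℝ × ℝ) :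
    Tendsto (fun n => mol n Φ z) atTop (nhds (Φ z)) := by
  rw [tendsto_iff_dist_tendsto_zero]
  refine squeeze_zero (fun _ => dist_nonneg) (fun n => mol_dist n hΦ z) ?_
  simpa using bmp_rOut_tendsto.const_mul (K : ℝ)

theorem bmp_int (n : ℕ) : Integrable ((bmp n).normed (volume : Measure (ℝ × ℝ))) :=
  (bmp n).integrable_normed

theorem ae_diff_sub {Φ : ℝ × ℝ → ℝ} {K : NNReal} (hΦ : LipschitzWith K Φ) (z : ℝ × ℝ) :
    ∀ᵐ y : ℝ × ℝ, DifferentiableAt ℝ Φ (z - y) :=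
  (Measure.measurePreserving_sub_left volume z).quasiMeasurePreserving.ae hΦ.ae_differentiableAt

theorem mol_hasFDerivAt (n : ℕ) {Φ : ℝ × ℝ → ℝ} {K : NNReal} (hΦ : LipschitzWith K Φ) (z : ℝ × ℝ) :
    Integrable (fun y => (bmp n).normed volume y • fderiv ℝ Φ (z - y)) ∧
    HasFDerivAt (mol n Φ) (∫ y, (bmp n).normed volume y • fderiv ℝ Φ (z - y)) z := by
  have hmeas : Measurable (fun y => fderiv ℝ Φ (z - y)) :=
    (measurable_fderiv ℝ Φ).comp (measurable_const.sub measurable_id)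
  have hb : Continuous ((bmp n).normed (volume : Measure (ℝ × ℝ))) := (bmp n).continuous_normed
  have := hasFDerivAt_integral_of_dominated_loc_of_lip' (𝕜 := ℝ) (μ := (volume : Measure (ℝ × ℝ)))
    (F := fun z y => (bmp n).normed volume y * Φ (z - y)) (x₀ := z) (s := univ)
    (F' := fun y => (bmp n).normed volume y • fderiv ℝ Φ (z - y))
    (bound := fun y => (bmp n).normed volume y * K) univ_mem ?_ ?_ ?_ ?_ ?_ ?_
  · exact ⟨this.1, this.2⟩
  · intro x _
    exact (hb.mul (hΦ.continuous.comp (continuous_const.sub continuous_id))).aestronglyMeasurable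
  · apply Continuous.integrable_of_hasCompactSupport
    · exact (hb.mul (hΦ.continuous.comp (continuous_const.sub continuous_id)))
    · exact (bmp n).hasCompactSupport_normed.mul_right
  · exact (hb.measurable.smul hmeas).aestronglyMeasurable
  · refine Eventually.of_forall fun y x _ => ?_
    rw [← mul_sub, norm_mul, Real.norm_of_nonneg ((bmp n).nonneg_normed y), mul_assoc]
    refine mul_le_mul_of_nonneg_left ?_ ((bmp n).nonneg_normed y)
    have := hΦ.dist_le_mul (x - y) (z - y)
    rw [dist_eq_norm, dist_eq_norm] at this
    simpa using this
  · exact (bmp_int n).mul_const _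
  · filter_upwards [ae_diff_sub hΦ z] with y hy
    have h1 : HasFDerivAt (fun x => Φ (x - y)) (fderiv ℝ Φ (z - y)) z := by
      have := HasFDerivAt.comp (g := Φ) (f := fun x => x - y) z hy.hasFDerivAt ((hasFDerivAt_id z).sub_const y)
      rw [ContinuousLinearMap.comp_id] at this
      exact this
    exact h1.const_mul _

theorem mol_fderiv (n : ℕ) {Φ : ℝ × ℝ → ℝ} {K : NNReal} (hΦ : LipschitzWith K Φ) (z : ℝ × ℝ) :
    fderiv ℝ (mol n Φ) z = ∫ y, (bmp n).normed volume y • fderiv ℝ Φ (z - y) :=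
  (mol_hasFDerivAt n hΦ z).2.fderiv

theorem mol_fderiv_le (n : ℕ) {Φ : ℝ × ℝ → ℝ} {K : NNReal} (hΦ : LipschitzWith K Φ) {z v : ℝ × ℝ}
    {c : ℝ} (h : ∀ᵐ y : ℝ × ℝ, ‖y‖ < (bmp n).rOut → fderiv ℝ Φ (z - y) v ≤ c) :
    fderiv ℝ (mol n Φ) z v ≤ c := by
  rw [mol_fderiv n hΦ, ContinuousLinearMap.integral_apply (mol_hasFDerivAt n hΦ z).1]
  calc _ ≤ ∫ y, (bmp n).normed (volume : Measure (ℝ × ℝ)) y * c := by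
        apply integral_mono_ae
        · exact (mol_hasFDerivAt n hΦ z).1.apply_continuousLinearMap v
        · exact (bmp_int n).mul_const _
        · filter_upwards [h] with y hy
          by_cases hc : ‖y‖ < (bmp n).rOut
          · exact mul_le_mul_of_nonneg_left (hy hc) ((bmp n).nonneg_normed y)
          · simp [bmp_zero (not_lt.1 hc)]
    _ = c := by
        rw [integral_mul_const, (bmp n).integral_normed, one_mul]

theorem line_le_aux {Φ : ℝ × ℝ → ℝ} {K : NNReal} (hΦ : LipschitzWith K Φ) {v : ℝ × ℝ} {c : ℝ}
    (h : ∀ᵐ p : ℝ × ℝ, p.1 < 0 → 0 < p.2 → fderiv ℝ Φ p v ≤ c) {p : ℝ × ℝ} {s : ℝ}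
    (hp1 : p.1 < 0) (hp2 : 0 < p.2) (hs : 0 ≤ s) (hq1 : (p + s • v).1 < 0) (hq2 : 0 < (p + s • v).2) :
    Φ (p + s • v) - Φ p ≤ c * s := by
  -- distance to the boundary
  obtain ⟨r, hr, hr1⟩ : ∃ r > 0, ∀ t ∈ Icc 0 s, (p + t • v).1 < -r ∧ r < (p + t • v).2 := by
    refine ⟨min (min (-p.1) p.2) (min (-(p + s • v).1) (p + s • v).2) / 2, ?_, ?_⟩
    · have : 0 < min (min (-p.1) p.2) (min (-(p + s • v).1) (p + s • v).2) := by
        simp only [lt_min_iff]; constructor <;> constructor <;> linarith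
      linarith
    · intro t ht
      have : 0 < min (min (-p.1) p.2) (min (-(p + s • v).1) (p + s • v).2) := by
        simp only [lt_min_iff]; constructor <;> constructor <;> linarith
      set m := min (min (-p.1) p.2) (min (-(p + s • v).1) (p + s • v).2) with hm
      have a1 : m ≤ -p.1 := (min_le_left _ _).trans (min_le_left _ _)
      have a2 : m ≤ p.2 := (min_le_left _ _).trans (min_le_right _ _)
      have a3 : m ≤ -(p + s • v).1 := (min_le_right _ _).trans (min_le_left _ _)
      have a4 : m ≤ (p + s • v).2 := (min_le_right _ _).trans (min_le_right _ _)
      simp only [Prod.fst_add, Prod.snd_add, Prod.smul_fst, Prod.smul_snd, smul_eq_mul] at *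
      obtain ⟨t0, ts⟩ := ht
      constructor
      · rcases le_total v.1 0 with hv | hv <;> nlinarith
      · rcases le_total v.2 0 with hv | hv <;> nlinarith
  have key : ∀ᶠ n in atTop, mol n Φ (p + s • v) - mol n Φ p ≤ c * s := by
    filter_upwards [bmp_rOut_tendsto.eventually_lt_const hr] with n hn
    have hd : ∀ t ∈ Icc 0 s, fderiv ℝ (mol n Φ) (p + t • v) v ≤ c := by
      intro t ht
      apply mol_fderiv_le n hΦ
      have := (Measure.measurePreserving_sub_left volume (p + t • v)).quasiMeasurePreserving.ae h
      filter_upwards [this] with y hy hyn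
      have h1 := norm_fst_le y
      have h2 := norm_snd_le y
      rw [Real.norm_eq_abs] at h1 h2
      have h3 := abs_le.1 h1
      have h4 := abs_le.1 h2
      have h5 := hr1 t ht
      apply hy
      · simp only [Prod.fst_sub]; linarith
      · simp only [Prod.snd_sub]; linarith
    have hder : ∀ t, HasDerivAt (fun t : ℝ => mol n Φ (p + t • v)) (fderiv ℝ (mol n Φ) (p + t • v) v) t := by
      intro t
      have h1 := (mol_hasFDerivAt n hΦ (p + t • v)).2.differentiableAt.hasFDerivAt
      have h2 : HasDerivAt (fun t : ℝ => p + t • v) v t := by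
        simpa using ((hasDerivAt_id t).smul_const v).const_add p
      exact h1.comp_hasDerivAt t h2
    have := Convex.image_sub_le_mul_sub_of_deriv_le (convex_Icc 0 s)
      (f := fun t : ℝ => mol n Φ (p + t • v)) (fun t _ => (hder t).continuousAt.continuousWithinAt)
      (fun t _ => (hder t).differentiableAt.differentiableWithinAt) (C := c)
      (fun t ht => by rw [(hder t).deriv]; exact hd t (interior_subset ht))
      0 (left_mem_Icc.2 hs) s (right_mem_Icc.2 hs) hs
    simpa using this
  exact le_of_tendsto ((mol_tendsto hΦ _).sub (mol_tendsto hΦ _)) key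

theorem line_le {Φ : ℝ × ℝ → ℝ} {K : NNReal} (hΦ : LipschitzWith K Φ) {v : ℝ × ℝ} {c : ℝ}
    (h : ∀ᵐ p : ℝ × ℝ, p.1 < 0 → 0 < p.2 → fderiv ℝ Φ p v ≤ c) {p : ℝ × ℝ} {s : ℝ}
    (hp1 : p.1 ≤ 0) (hp2 : 0 ≤ p.2) (hs : 0 ≤ s) (hq1 : (p + s • v).1 ≤ 0) (hq2 : 0 ≤ (p + s • v).2) :
    Φ (p + s • v) - Φ p ≤ c * s := by
  have hc := hΦ.continuous
  have : Tendsto (fun e : ℝ => Φ (p + ((-e, e) : ℝ × ℝ) + s • v) - Φ (p + (-e, e)))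
      (nhdsWithin 0 (Ioi 0)) (nhds (Φ (p + ((-0, 0) : ℝ × ℝ) + s • v) - Φ (p + (-0, 0)))) := by
    refine Tendsto.mono_left ?_ nhdsWithin_le_nhds
    have : Continuous (fun e : ℝ => Φ (p + ((-e, e) : ℝ × ℝ) + s • v) - Φ (p + (-e, e))) := by
      fun_prop
    exact this.tendsto 0
  have h0 : ((-0, 0) : ℝ × ℝ) = 0 := by simp
  rw [h0, add_zero] at this
  refine le_of_tendsto this ?_
  filter_upwards [self_mem_nhdsWithin] with e he
  have he : 0 < e := he
  simp only [Prod.fst_add, Prod.snd_add, Prod.smul_fst, Prod.smul_snd, smul_eq_mul] at hq1 hq2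
  apply line_le_aux hΦ h _ _ hs <;>
  simp only [Prod.fst_add, Prod.snd_add, Prod.smul_fst, Prod.smul_snd, smul_eq_mul] <;> linarith

theorem mol_fderiv_tendsto {Φ : ℝ × ℝ → ℝ} {K : NNReal} (hΦ : LipschitzWith K Φ) :
    ∀ᵐ z : ℝ × ℝ, Tendsto (fun n => fderiv ℝ (mol n Φ) z) atTop (nhds (fderiv ℝ Φ z)) := by
  have hli : LocallyIntegrable (fun z => fderiv ℝ Φ z) (volume : Measure (ℝ × ℝ)) := by
    intro x
    refine ⟨Metric.ball x 1, Metric.ball_mem_nhds _ one_pos, ?_⟩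
    refine Measure.integrableOn_of_bounded (M := K) measure_ball_lt_top.ne
      (measurable_fderiv ℝ Φ).aestronglyMeasurable ?_
    exact Eventually.of_forall fun z => norm_fderiv_le_of_lipschitz ℝ hΦ
  have := ContDiffBump.ae_convolution_tendsto_right_of_locallyIntegrable (φ := bmp) (K := 2)
    (μ := (volume : Measure (ℝ × ℝ))) bmp_rOut_tendsto (Eventually.of_forall fun n => ?_) hli
  · filter_upwards [this] with z hz
    refine hz.congr fun n => ?_
    rw [mol_fderiv n hΦ]; rfl
  · change 1 / ((n : ℝ) + 1) ≤ 2 * (1 / (2 * ((n : ℝ) + 1)))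
    have : (0 : ℝ) < n + 1 := by positivity
    apply le_of_eq; field_simp

theorem mol_lip (n : ℕ) {Φ : ℝ × ℝ → ℝ} {K : NNReal} (hΦ : LipschitzWith K Φ) (z v : ℝ × ℝ) :
    |fderiv ℝ (mol n Φ) z v| ≤ K * ‖v‖ := by
  have hb : ∀ z v : ℝ × ℝ, fderiv ℝ Φ z v ≤ K * ‖v‖ := by
    intro z v
    refine (le_abs_self _).trans (((fderiv ℝ Φ z).le_opNorm v).trans ?_)
    exact mul_le_mul_of_nonneg_right (norm_fderiv_le_of_lipschitz ℝ hΦ) (norm_nonneg _)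
  rw [abs_le]
  constructor
  · have := mol_fderiv_le n hΦ (z := z) (v := -v) (c := K * ‖v‖)
      (Eventually.of_forall fun y _ => by simpa using hb (z - y) (-v))
    simp at this
    linarith
  · exact mol_fderiv_le n hΦ (Eventually.of_forall fun y _ => hb _ _)

theorem mol_nonneg (n : ℕ) {Φ : ℝ × ℝ → ℝ} (h : ∀ p, 0 ≤ Φ p) (z : ℝ × ℝ) : 0 ≤ mol n Φ z := by
  rw [mol_eq]
  exact integral_nonneg fun y => mul_nonneg ((bmp n).nonneg_normed y) (h _)

theorem mol_zero (n : ℕ) {Φ : ℝ × ℝ → ℝ} {z : ℝ × ℝ} (h : ∀ y : ℝ × ℝ, ‖y‖ < (bmp n).rOut → Φ (z - y) = 0) :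
    mol n Φ z = 0 := by
  rw [mol_eq]
  have : (fun y => (bmp n).normed (volume : Measure (ℝ × ℝ)) y * Φ (z - y)) = fun _ => 0 := by
    ext y
    by_cases hc : ‖y‖ < (bmp n).rOut
    · simp [h y hc]
    · simp [bmp_zero (not_lt.1 hc)]
  rw [this]; simp

/-- Passing from `C¹` tests to Lipschitz tests. -/
theorem lipTest {G1 G2 : ℝ × ℝ → ℝ} {M : ℝ} (hG1 : Measurable G1) (hG2 : Measurable G2)
    (hM1 : ∀ p, |G1 p| ≤ M) (hM2 : ∀ p, |G2 p| ≤ M)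
    (H : ∀ φ : ℝ × ℝ → ℝ, ContDiff ℝ 1 φ → HasCompactSupport φ → (∀ p, 0 ≤ φ p) →
      (∀ p : ℝ × ℝ, 0 ≤ p.1 ∨ p.2 ≤ 0 → φ p = 0) →
      0 ≤ ∫ p, (G1 p * fderiv ℝ φ p (0, 1) + G2 p * fderiv ℝ φ p (1, 0)))
    {N : ℝ × ℝ → ℝ} {K : NNReal} (hN : LipschitzWith K N) (hN0 : ∀ p, 0 ≤ N p) {r R : ℝ} (hr : 0 < r)
    (hNr : ∀ p : ℝ × ℝ, -r ≤ p.1 ∨ p.2 ≤ r → N p = 0) (hNR : ∀ p : ℝ × ℝ, R ≤ ‖p‖ → N p = 0) :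
    0 ≤ ∫ p, (G1 p * fderiv ℝ N p (0, 1) + G2 p * fderiv ℝ N p (1, 0)) := by
  have hM : 0 ≤ M := (abs_nonneg _).trans (hM1 0)
  have hout : ∀ n, ∀ p : ℝ × ℝ, R + 1 ≤ ‖p‖ → mol n N p = 0 := by
    intro n p hp
    apply mol_zero
    intro y hy
    apply hNR
    have h1 : (bmp n).rOut ≤ 1 := by
      rw [bmp_rOut]
      apply div_le_one_of_le₀ <;> linarith [(Nat.cast_nonneg n : (0:ℝ) ≤ n)]
    have := norm_sub_norm_le p y
    linarith
  have hout' : ∀ n, ∀ p : ℝ × ℝ, R + 1 < ‖p‖ → fderiv ℝ (mol n N) p = 0 := by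
    intro n p hp
    have : mol n N =ᶠ[nhds p] fun _ => 0 := by
      filter_upwards [(isOpen_lt continuous_const continuous_norm).mem_nhds hp] with q hq
      exact hout n q (le_of_lt hq)
    rw [this.fderiv_eq]; simp
  have hlim : Tendsto (fun n => ∫ p, (G1 p * fderiv ℝ (mol n N) p (0, 1) + G2 p * fderiv ℝ (mol n N) p (1, 0)))
      atTop (nhds (∫ p, (G1 p * fderiv ℝ N p (0, 1) + G2 p * fderiv ℝ N p (1, 0)))) := by
    apply tendsto_integral_of_dominated_convergence
      ((Metric.closedBall (0 : ℝ × ℝ) (R + 1)).indicator fun _ => 2 * M * K)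
    · intro n
      have h1 : ∀ v : ℝ × ℝ, Measurable fun p => fderiv ℝ (mol n N) p v := fun v =>
        measurable_fderiv_apply_const ℝ _ v
      exact ((hG1.mul (h1 _)).add (hG2.mul (h1 _))).aestronglyMeasurable
    · rw [integrable_indicator_iff Metric.isClosed_closedBall.measurableSet]
      exact integrableOn_const (measure_closedBall_lt_top.ne)
    · intro n
      refine Eventually.of_forall fun p => ?_
      by_cases hp : p ∈ Metric.closedBall (0 : ℝ × ℝ) (R + 1)
      · rw [indicator_of_mem hp]
        have e1 := mol_lip n hN p (0, 1)
        have e2 := mol_lip n hN p (1, 0)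
        have n1 : ‖((0, 1) : ℝ × ℝ)‖ = 1 := by simp [Prod.norm_def]
        have n2 : ‖((1, 0) : ℝ × ℝ)‖ = 1 := by simp [Prod.norm_def]
        rw [n1, mul_one] at e1
        rw [n2, mul_one] at e2
        calc _ ≤ |G1 p| * |fderiv ℝ (mol n N) p (0, 1)| + |G2 p| * |fderiv ℝ (mol n N) p (1, 0)| := by
              rw [← abs_mul, ← abs_mul]; exact abs_add_le _ _
          _ ≤ M * K + M * K := by
              gcongr
              · exact hM1 p
              · exact hM2 p
          _ = _ := by ring
      · rw [indicator_of_notMem hp]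
        simp at hp
        rw [hout' n p hp]; simp
    · filter_upwards [mol_fderiv_tendsto hN] with p hp
      have h1 : ∀ v : ℝ × ℝ, Tendsto (fun n => fderiv ℝ (mol n N) p v) atTop (nhds (fderiv ℝ N p v)) :=
        fun v => ((ContinuousLinearMap.apply ℝ ℝ v).continuous.tendsto _).comp hp
      exact ((h1 _).const_mul _).add ((h1 _).const_mul _)
  refine ge_of_tendsto hlim ?_
  filter_upwards [bmp_rOut_tendsto.eventually_lt_const hr] with n hn
  apply H
  · exact mol_contDiff n hN.continuous
  · apply HasCompactSupport.of_support_subset_isCompact (isCompact_closedBall (0 : ℝ × ℝ) (R + 1))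
    intro p hp
    by_contra hc
    simp at hc
    exact hp (hout n p hc.le)
  · exact mol_nonneg n hN0
  · intro p hp
    apply mol_zero
    intro y hy
    apply hNr
    have h1 := norm_fst_le y
    have h2 := norm_snd_le y
    rw [Real.norm_eq_abs] at h1 h2
    have h3 := abs_le.1 h1
    have h4 := abs_le.1 h2
    simp only [Prod.fst_sub, Prod.snd_sub]
    rcases hp with hp | hp
    · left; linarith
    · right; linarith

theorem integral_fderiv_zero {N : ℝ × ℝ → ℝ} {K : NNReal} (hN : LipschitzWith K N)
    (hc : HasCompactSupport N) (v : ℝ × ℝ) : ∫ p, fderiv ℝ N p v = 0 := by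
  have h1 := (LipschitzWith.const (1 : ℝ) : LipschitzWith 0 fun _ : ℝ × ℝ => (1 : ℝ))
  have := LipschitzWith.integral_lineDeriv_mul_eq (μ := (volume : Measure (ℝ × ℝ))) h1 hN hc (-v)
  simp only [neg_neg, mul_one] at this
  rw [← integral_congr_ae (f := fun p => lineDeriv ℝ N p v)]
  · rw [← this]
    have e : ∀ x : ℝ × ℝ, lineDeriv ℝ (fun _ : ℝ × ℝ => (1:ℝ)) x (-v) = 0 := by
      intro x; simp [lineDeriv]
    simp [e]
  · filter_upwards [hN.ae_differentiableAt] with p hp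
    exact hp.lineDeriv_eq_fderiv

/-! ### Half plane solutions -/

structure HP (f : ℝ → ℝ) (U : ℝ × ℝ → ℝ) (u : ℝ × ℝ → ℝ) : Prop where
  lip : ∃ K, LipschitzWith K U
  meas : Measurable u
  bdd : ∃ M, ∀ p, |u p| ≤ M
  grad : ∀ᵐ p : ℝ × ℝ, p.1 < 0 → 0 < p.2 →
    fderiv ℝ U p (1, 0) = u p ∧ fderiv ℝ U p (0, 1) = - f (u p)
  kru : ∀ (k : ℝ) (φ : ℝ × ℝ → ℝ), ContDiff ℝ 1 φ → HasCompactSupport φ → (∀ p, 0 ≤ φ p) →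
    (∀ p : ℝ × ℝ, 0 ≤ p.1 ∨ p.2 ≤ 0 → φ p = 0) →
    0 ≤ ∫ p, (|u p - k| * fderiv ℝ φ p (0, 1) +
      Real.sign (u p - k) * (f (u p) - f k) * fderiv ℝ φ p (1, 0))

theorem integrable_of_bdd_supp {G : ℝ × ℝ → ℝ} (hG : Measurable G) {C : ℝ} (hC : ∀ p, |G p| ≤ C)
    {z : ℝ × ℝ} {r : ℝ} (h0 : ∀ p, p ∉ Metric.closedBall z r → G p = 0) : Integrable G := by
  rw [← integrableOn_iff_integrable_of_support_subset (s := Metric.closedBall z r)]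
  · exact Measure.integrableOn_of_bounded (M := C) measure_closedBall_lt_top.ne
      hG.aestronglyMeasurable (Eventually.of_forall hC)
  · intro p hp
    by_contra hc
    exact hp (h0 p hc)

theorem measurable_sign : Measurable Real.sign := by
  unfold Real.sign
  exact Measurable.ite measurableSet_Iio measurable_const
    (Measurable.ite measurableSet_Ioi measurable_const measurable_const)

theorem sign_mul_self' (x : ℝ) : Real.sign x * x = |x| := by
  rcases lt_trichotomy x 0 with h | h | h
  · rw [Real.sign_of_neg h, abs_of_neg h]; ring
  · subst h; simp
  · rw [Real.sign_of_pos h, abs_of_pos h]; ring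

theorem abs_sign_le (x : ℝ) : |Real.sign x| ≤ 1 := by
  rcases Real.sign_apply_eq x with h | h | h <;> rw [h] <;> simp

theorem HP.upper {f : ℝ → ℝ} {a : ℝ} {U u : ℝ × ℝ → ℝ} (hf : UC f a) (H : HP f U u)
    {x1 t1 x2 t2 : ℝ} (h1 : x1 ≤ 0) (h2 : x2 ≤ 0) (ht1 : 0 ≤ t1) (ht : t1 < t2) :
    U (x2, t2) ≤ U (x1, t1) + (t2 - t1) * Leg f ((x2 - x1) / (t2 - t1)) := by
  obtain ⟨K, hK⟩ := H.lip
  have ht' : 0 < t2 - t1 := by linarith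
  set q := (x2 - x1) / (t2 - t1) with hq
  have e : ((x1, t1) : ℝ × ℝ) + (t2 - t1) • ((q, 1) : ℝ × ℝ) = (x2, t2) := by
    ext <;> simp [hq]
    field_simp; ring
  have := line_le hK (v := (q, 1)) (c := Leg f q) (p := (x1, t1)) (s := t2 - t1) ?_ h1 ht1 ht'.le
    (by rw [e]; exact h2) (by rw [e]; simp; linarith)
  · rw [e] at this; linarith
  · filter_upwards [H.grad] with p hp h1 h2
    obtain ⟨g1, g2⟩ := hp h1 h2
    have : ((q, 1) : ℝ × ℝ) = q • (1, 0) + (0, 1) := by ext <;> simp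
    rw [this, map_add, map_smul, g1, g2, smul_eq_mul]
    have := hf.fenchel (u p) q
    linarith

set_option maxHeartbeats 2000000 in
theorem HP.sub {f : ℝ → ℝ} {a : ℝ} {U u : ℝ × ℝ → ℝ} (hf : UC f a) (H : HP f U u) {z0 : ℝ × ℝ}
    (hx : z0.1 < 0) (ht : 0 < z0.2) {p c : ℝ}
    (hsub : ∀ ε > 0, ∀ᶠ z in nhds z0,
      U z0 + (p * (z.1 - z0.1) - c * (z.2 - z0.2)) - ε * ‖z - z0‖ ≤ U z) : c ≤ f p := by
  by_contra hcon
  push Not at hcon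
  obtain ⟨K, hK⟩ := H.lip
  obtain ⟨M, hM⟩ := H.bdd
  obtain ⟨C, hC0, hC⟩ := hf.lipOn (max M |p|)
  set σ := (c - f p) / (2 * (C + 2)) with hσ
  have hσ0 : 0 < σ := by apply div_pos <;> linarith
  have hσ1 : σ * (1 + C) < c - f p := by
    have : σ * (2 * (C + 2)) = c - f p := by rw [hσ]; field_simp
    nlinarith
  have hσ2 : σ < c - f p := by nlinarith
  obtain ⟨r0, hr0, hball0⟩ := Metric.eventually_nhds_iff.1 (hsub (σ / 2) (by linarith))
  set r := min r0 (min (-z0.1) z0.2) with hr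
  have hr1 : 0 < r := by simp only [hr, lt_min_iff]; refine ⟨hr0, by linarith, ht⟩
  have hrx : r ≤ -z0.1 := (min_le_right _ _).trans (min_le_left _ _)
  have hrt : r ≤ z0.2 := (min_le_right _ _).trans (min_le_right _ _)
  have hrr : r ≤ r0 := min_le_left _ _
  let Lc : ℝ × ℝ →L[ℝ] ℝ := p • ContinuousLinearMap.fst ℝ ℝ ℝ - c • ContinuousLinearMap.snd ℝ ℝ ℝ
  have hLc : ∀ z : ℝ × ℝ, Lc z = p * z.1 - c * z.2 := fun z => by simp [Lc]
  let nn : ℝ × ℝ → ℝ := fun z => ‖z - z0‖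
  have hnn : LipschitzWith 1 nn := by
    refine LipschitzWith.of_dist_le_mul fun x y => ?_
    simp only [NNReal.coe_one, one_mul, nn]
    rw [Real.dist_eq, dist_eq_norm]
    have := abs_norm_sub_norm_le (x - z0) (y - z0)
    simpa using this
  let E : ℝ × ℝ → ℝ := fun z => U z - U z0 - Lc (z - z0) + σ * nn z
  have hE0 : ∀ z, ‖z - z0‖ < r → σ / 2 * ‖z - z0‖ ≤ E z := by
    intro z hz
    have := hball0 (y := z) (by rw [dist_eq_norm]; linarith)
    simp only [E, hLc, Prod.fst_sub, Prod.snd_sub, nn]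
    linarith
  set η := σ * r / 4 with hη
  have hη0 : 0 < η := by positivity
  let N : ℝ × ℝ → ℝ := fun z => max 0 (min (η - E z) (σ * (r - nn z)))
  have hσl : LipschitzWith ⟨σ, hσ0.le⟩ (fun x : ℝ => σ * x) := by
    refine LipschitzWith.of_dist_le_mul fun x y => ?_
    rw [Real.dist_eq, Real.dist_eq, ← mul_sub, abs_mul, abs_of_pos hσ0]; rfl
  have hLcl : LipschitzWith ‖Lc‖₊ (fun z => Lc (z - z0)) := by
    refine LipschitzWith.of_dist_le_mul fun x y => ?_
    have := Lc.le_opNorm (x - y)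
    rw [dist_eq_norm, dist_eq_norm, ← map_sub]
    simpa using this
  have hσn := hσl.comp hnn
  have hEl : ∃ K', LipschitzWith K' E :=
    ⟨_, ((hK.sub (LipschitzWith.const (U z0))).sub hLcl).add hσn⟩
  obtain ⟨KE, hKE⟩ := hEl
  have hNl : ∃ K', LipschitzWith K' N :=
    ⟨_, ((((LipschitzWith.const η).sub hKE).min
      (hσl.comp ((LipschitzWith.const r).sub hnn))).const_max 0)⟩
  obtain ⟨KN, hKN⟩ := hNl
  have hN0 : ∀ z, 0 ≤ N z := fun z => le_max_left _ _
  have hNpos : ∀ z, 0 < N z → ‖z - z0‖ < r / 2 := by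
    intro z hz
    by_contra hc
    push Not at hc
    have : min (η - E z) (σ * (r - nn z)) ≤ 0 := by
      by_cases h2 : ‖z - z0‖ < r
      · refine (min_le_left _ _).trans ?_
        have := hE0 z h2
        nlinarith
      · refine (min_le_right _ _).trans ?_
        have : r ≤ nn z := not_lt.1 h2
        nlinarith
    simp only [N, max_eq_left this, lt_self_iff_false] at hz
  have hNzero : ∀ z, r / 2 ≤ ‖z - z0‖ → N z = 0 := by
    intro z hz
    by_contra hc
    have := hNpos z (lt_of_le_of_ne (hN0 z) (Ne.symm hc))
    linarith
  have hNz0 : N z0 = η := by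
    simp only [N, E, nn, sub_self, map_zero, norm_zero, mul_zero, add_zero, sub_zero]
    rw [min_eq_left (by nlinarith), max_eq_right hη0.le]
  have hfN0 : ∀ z, N z = 0 → fderiv ℝ N z = 0 := by
    intro z hz
    apply IsLocalMin.fderiv_eq_zero
    exact Eventually.of_forall fun y => by rw [hz]; exact hN0 y
  -- derivative on the positivity set
  have hder : ∀ᵐ z : ℝ × ℝ, 0 < N z → ∃ e1 e2 : ℝ, |e1| ≤ 1 ∧ |e2| ≤ 1 ∧
      fderiv ℝ N z (1, 0) = -(u z - p) - σ * e1 ∧ fderiv ℝ N z (0, 1) = f (u z) - c - σ * e2 := by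
    filter_upwards [hK.ae_differentiableAt, hnn.ae_differentiableAt, H.grad] with z d1 d2 hg hz
    have hzr := hNpos z hz
    have hz1 : z.1 < 0 := by
      have := (norm_fst_le (z - z0)).trans_lt hzr
      rw [Real.norm_eq_abs, abs_lt, Prod.fst_sub] at this
      linarith
    have hz2 : 0 < z.2 := by
      have := (norm_snd_le (z - z0)).trans_lt hzr
      rw [Real.norm_eq_abs, abs_lt, Prod.snd_sub] at this
      linarith
    obtain ⟨g1, g2⟩ := hg hz1 hz2
    have heq : N =ᶠ[nhds z] fun z => η - E z := by
      have o1 : ∀ᶠ y in nhds z, 0 < N y :=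
        (hKN.continuous.tendsto z).eventually_const_lt hz
      filter_upwards [o1] with y hy
      have hyr := hNpos y hy
      have hE := hE0 y (by linarith)
      have : min (η - E y) (σ * (r - nn y)) = η - E y := by
        apply min_eq_left
        have : nn y < r / 2 := hyr
        have : 0 ≤ nn y := norm_nonneg _
        have : σ / 2 * nn y ≤ E y := hE
        nlinarith
      simp only [N, this] at hy ⊢
      rw [max_eq_right]
      by_contra hc
      push Not at hc
      rw [max_eq_left hc.le] at hy
      exact lt_irrefl _ hy
    have hEd : HasFDerivAt E (fderiv ℝ U z - Lc + σ • fderiv ℝ nn z) z := by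
      have h3 : HasFDerivAt (fun z => Lc (z - z0)) Lc z := by
        have := HasFDerivAt.comp (g := Lc) (f := fun x => x - z0) z Lc.hasFDerivAt
          ((hasFDerivAt_id z).sub_const z0)
        rw [ContinuousLinearMap.comp_id] at this
        exact this
      exact ((d1.hasFDerivAt.sub_const _).sub h3).add (d2.hasFDerivAt.const_mul σ)
    have hNd : fderiv ℝ N z = -(fderiv ℝ U z - Lc + σ • fderiv ℝ nn z) := by
      rw [heq.fderiv_eq]
      exact (hEd.const_sub η).fderiv
    have hb : ∀ v : ℝ × ℝ, ‖v‖ = 1 → |fderiv ℝ nn z v| ≤ 1 := by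
      intro v hv
      have h1 := (fderiv ℝ nn z).le_opNorm v
      have h2 := norm_fderiv_le_of_lipschitz ℝ hnn (x₀ := z)
      rw [hv, mul_one] at h1
      exact h1.trans (by simpa using h2)
    refine ⟨fderiv ℝ nn z (1, 0), fderiv ℝ nn z (0, 1), hb _ (by simp [Prod.norm_def]),
      hb _ (by simp [Prod.norm_def]), ?_, ?_⟩
    · rw [hNd]; simp [g1, hLc]; ring
    · rw [hNd]; simp [g2, hLc]; ring
  have hmv : ∀ v : ℝ × ℝ, Measurable fun z => fderiv ℝ N z v := fun v =>
    measurable_fderiv_apply_const ℝ _ v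
  have hbv : ∀ z v : ℝ × ℝ, ‖v‖ = 1 → |fderiv ℝ N z v| ≤ KN := by
    intro z v hv
    have h1 := (fderiv ℝ N z).le_opNorm v
    have h2 := norm_fderiv_le_of_lipschitz ℝ hKN (x₀ := z)
    rw [hv, mul_one] at h1
    exact h1.trans h2
  have n1 : ‖((0, 1) : ℝ × ℝ)‖ = 1 := by simp [Prod.norm_def]
  have n2 : ‖((1, 0) : ℝ × ℝ)‖ = 1 := by simp [Prod.norm_def]
  have houtz : ∀ z, z ∉ Metric.closedBall z0 r → fderiv ℝ N z = 0 := by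
    intro z hz
    apply hfN0
    apply hNzero
    rw [Metric.mem_closedBall, dist_eq_norm] at hz
    linarith
  have hMp : ∀ z, |u z| ≤ max M |p| := fun z => (hM z).trans (le_max_left _ _)
  have hfu : ∀ z, |f (u z) - f p| ≤ C * |u z - p| := fun z => hC _ _ (hMp z) (le_max_right _ _)
  have hup : ∀ z, |u z - p| ≤ M + |p| := fun z => (abs_sub _ _).trans (by linarith [hM z])
  have hMM : 0 ≤ M + |p| := (abs_nonneg _).trans (hup 0)
  set G1 : ℝ × ℝ → ℝ := fun z => |u z - p| with hG1
  set G2 : ℝ × ℝ → ℝ := fun z => Real.sign (u z - p) * (f (u z) - f p) with hG2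
  have mG1 : Measurable G1 := (H.meas.sub measurable_const).abs
  have mG2 : Measurable G2 := (measurable_sign.comp (H.meas.sub measurable_const)).mul
    ((hf.cont.measurable.comp H.meas).sub measurable_const)
  have bG2' : ∀ z, |G2 z| ≤ C * |u z - p| := by
    intro z
    simp only [hG2]
    rw [abs_mul]
    calc _ ≤ 1 * |f (u z) - f p| := by gcongr; exact abs_sign_le _
      _ ≤ _ := by rw [one_mul]; exact hfu z
  set MM := (1 + C) * (M + |p|) with hMMdef
  have bG1 : ∀ z, |G1 z| ≤ MM := fun z => by
    simp only [hG1, abs_abs]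
    nlinarith [hup z]
  have bG2 : ∀ z, |G2 z| ≤ MM := fun z => (bG2' z).trans (by nlinarith [hup z])
  have hI := lipTest mG1 mG2 bG1 bG2 (H.kru p) hKN hN0 (r := r / 2) (R := ‖z0‖ + r) (by linarith) ?_ ?_
  rotate_left
  · intro z hz
    apply hNzero
    rcases hz with hz | hz
    · refine le_trans ?_ (norm_fst_le (z - z0))
      rw [Real.norm_eq_abs, Prod.fst_sub]
      exact le_trans (by linarith) (le_abs_self _)
    · refine le_trans ?_ (norm_snd_le (z - z0))
      rw [Real.norm_eq_abs, Prod.snd_sub]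
      exact le_trans (by linarith) (neg_le_abs _)
  · intro z hz
    apply hNzero
    have := norm_sub_norm_le z z0
    linarith
  set β := c - f p - σ * (1 + C) with hβ
  have hβ0 : 0 < β := by linarith
  have hIle : ∀ᵐ z : ℝ × ℝ, (0 < N z → G1 z * fderiv ℝ N z (0, 1) + G2 z * fderiv ℝ N z (1, 0)
      ≤ - β * |u z - p|) := by
    filter_upwards [hder] with z hz hzp
    obtain ⟨e1, e2, he1, he2, hx1, hx2⟩ := hz hzp
    rw [hx1, hx2]
    have s1 : G2 z * (u z - p) = (f (u z) - f p) * G1 z := by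
      simp only [hG1, hG2, ← sign_mul_self' (u z - p)]; ring
    have s2 : - (G2 z * e1) ≤ C * |u z - p| := by
      refine (neg_le_abs _).trans ?_
      rw [abs_mul]
      have := bG2' z
      nlinarith [abs_nonneg (G2 z)]
    have s3 : -(G1 z * e2) ≤ G1 z := by
      have h0 : 0 ≤ G1 z := abs_nonneg _
      have := (abs_le.1 he2).1
      nlinarith
    have s4 : |u z - p| = G1 z := rfl
    rw [s4] at s2 ⊢
    have : G1 z * (f (u z) - c - σ * e2) + G2 z * (-(u z - p) - σ * e1)
      = G1 z * (f p - c) + σ * (-(G1 z * e2)) + σ * (-(G2 z * e1)) := by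
      linear_combination (-1) * s1
    rw [this]
    have t1 := mul_le_mul_of_nonneg_left s3 hσ0.le
    have t2 := mul_le_mul_of_nonneg_left s2 hσ0.le
    rw [hβ]
    linarith
  have hIint : Integrable (fun z => G1 z * fderiv ℝ N z (0, 1) + G2 z * fderiv ℝ N z (1, 0)) := by
    apply integrable_of_bdd_supp ((mG1.mul (hmv _)).add (mG2.mul (hmv _))) (C := MM * KN + MM * KN)
      (z := z0) (r := r)
    · intro z
      have hMMn : 0 ≤ MM := (abs_nonneg _).trans (bG1 z)
      refine (abs_add_le _ _).trans ?_
      simp only [Pi.mul_apply]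
      rw [abs_mul, abs_mul]
      gcongr
      · exact bG1 z
      · exact hbv z _ n1
      · exact bG2 z
      · exact hbv z _ n2
    · intro z hz
      simp [houtz z hz]
  have hIneg : ∀ᵐ z : ℝ × ℝ, 0 ≤ -(G1 z * fderiv ℝ N z (0, 1) + G2 z * fderiv ℝ N z (1, 0)) := by
    filter_upwards [hIle] with z hz
    rcases (hN0 z).eq_or_lt with h | h
    · rw [hfN0 z h.symm]; simp
    · have := hz h
      nlinarith [abs_nonneg (u z - p)]
  have hI0 : ∀ᵐ z : ℝ × ℝ, -(G1 z * fderiv ℝ N z (0, 1) + G2 z * fderiv ℝ N z (1, 0)) = 0 := by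
    have := (integral_eq_zero_iff_of_nonneg_ae hIneg hIint.neg).1 ?_
    · exact this
    · apply le_antisymm
      · have e := integral_neg (μ := (volume : Measure (ℝ × ℝ)))
          (fun z => G1 z * fderiv ℝ N z (0, 1) + G2 z * fderiv ℝ N z (1, 0))
        rw [e]
        linarith
      · exact integral_nonneg_of_ae hIneg
  have hNt : ∀ᵐ z : ℝ × ℝ, (0 < N z → fderiv ℝ N z (0, 1) < 0) := by
    filter_upwards [hI0, hIle, hder] with z h0 h1 h2 hz
    have h3 := h1 hz
    have h4 : u z = p := by
      have h5 : β * |u z - p| ≤ 0 := by linarith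
      have h6 : |u z - p| ≤ 0 := by
        by_contra hc
        push Not at hc
        have := mul_pos hβ0 hc
        linarith
      have := abs_nonpos_iff.1 h6
      linarith
    obtain ⟨e1, e2, he1, he2, hx1, hx2⟩ := h2 hz
    rw [hx2, h4]
    have := (abs_le.1 he2).1
    nlinarith
  have hcomp : HasCompactSupport N := by
    apply HasCompactSupport.of_support_subset_isCompact (isCompact_closedBall z0 r)
    intro z hz
    by_contra hc
    apply hz
    apply hNzero
    rw [Metric.mem_closedBall, dist_eq_norm] at hc
    linarith
  have hNtneg : ∀ᵐ z : ℝ × ℝ, 0 ≤ -(fderiv ℝ N z (0, 1)) := by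
    filter_upwards [hNt] with z hz
    rcases (hN0 z).eq_or_lt with h | h
    · rw [hfN0 z h.symm]; simp
    · linarith [hz h]
  have hNtint : Integrable fun z => -(fderiv ℝ N z (0, 1)) := by
    apply integrable_of_bdd_supp (hmv _).neg (C := KN) (z := z0) (r := r)
    · intro z; simp only [Pi.neg_apply, abs_neg]; exact hbv z _ n1
    · intro z hz; simp [houtz z hz]
  have hNt0 := (integral_eq_zero_iff_of_nonneg_ae hNtneg hNtint).1 (by
    rw [integral_neg, integral_fderiv_zero hKN hcomp, neg_zero])
  have hN00 : N =ᵐ[volume] fun _ => (0:ℝ) := by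
    filter_upwards [hNt0, hNt] with z h1 h2
    rcases (hN0 z).eq_or_lt with h | h
    · exact h.symm
    · have := h2 h
      simp only [Pi.zero_apply] at h1
      linarith
  have := (hKN.continuous.ae_eq_iff_eq (μ := (volume : Measure (ℝ × ℝ))) continuous_const).1 hN00
  have := congrFun this z0
  rw [hNz0] at this
  linarith

/-! ### Minimum principle -/

def cst (f : ℝ → ℝ) (y t : ℝ) (z : ℝ × ℝ) : ℝ := (t - z.2) * Leg f ((y - z.1) / (t - z.2))

theorem cst_hasFDerivAt {f : ℝ → ℝ} {a : ℝ} (hf : UC f a) (y t : ℝ) {z : ℝ × ℝ} (hz : z.2 < t) :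
    ∃ k' : ℝ × ℝ →L[ℝ] ℝ, HasFDerivAt (cst f y t) k' z ∧
      k' (1, 0) = - gInv f ((y - z.1) / (t - z.2)) ∧
      k' (0, 1) = f (gInv f ((y - z.1) / (t - z.2))) := by
  have hne : t - z.2 ≠ 0 := by linarith
  have h1 : HasFDerivAt (fun z : ℝ × ℝ => t - z.2) (-(ContinuousLinearMap.snd ℝ ℝ ℝ)) z :=
    hasFDerivAt_snd.const_sub t
  have h2 : HasFDerivAt (fun z : ℝ × ℝ => y - z.1) (-(ContinuousLinearMap.fst ℝ ℝ ℝ)) z :=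
    hasFDerivAt_fst.const_sub y
  have h3 := h2.mul ((hasDerivAt_inv hne).comp_hasFDerivAt z h1)
  have h4 := (hf.hasDerivLeg ((y - z.1) / (t - z.2)))
  have h5 := HasDerivAt.comp_hasFDerivAt (h₂ := Leg f) (f := fun z : ℝ × ℝ => (y - z.1) * (t - z.2)⁻¹) z
    (by rw [div_eq_mul_inv] at h4; exact h4) h3
  have h6 := h1.mul h5
  refine ⟨_, h6, ?_, ?_⟩
  · simp [div_eq_mul_inv]
    field_simp
  · simp [Leg, div_eq_mul_inv]
    field_simp
    ring

theorem HP.sub_min {f : ℝ → ℝ} {a : ℝ} {U u : ℝ × ℝ → ℝ} (hf : UC f a) (H : HP f U u) {z0 : ℝ × ℝ}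
    (hx : z0.1 < 0) (ht : 0 < z0.2) {k : ℝ × ℝ → ℝ} {k' : ℝ × ℝ →L[ℝ] ℝ} (hk : HasFDerivAt k k' z0)
    (hmin : IsLocalMin (fun z => U z + k z) z0) : k' (0, 1) ≤ f (- k' (1, 0)) := by
  apply H.sub hf hx ht
  intro ε hε
  have h1 := hk.isLittleO.def hε
  filter_upwards [h1, hmin] with z h1 h2
  have e : k' (z - z0) = (z.1 - z0.1) * k' (1, 0) + (z.2 - z0.2) * k' (0, 1) := by
    have : z - z0 = (z.1 - z0.1) • ((1, 0) : ℝ × ℝ) + (z.2 - z0.2) • ((0, 1) : ℝ × ℝ) := by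
      ext <;> simp
    rw [this, map_add, map_smul, map_smul]; simp
  rw [Real.norm_eq_abs] at h1
  have h3 := (abs_le.1 h1).2
  rw [e] at h3
  linarith

theorem HP.coer {f : ℝ → ℝ} {a : ℝ} {U u : ℝ × ℝ → ℝ} (hf : UC f a) (H : HP f U u) (y t : ℝ) :
    ∃ c0, ∀ x s, 0 ≤ s → s < t → |x| - c0 ≤ U (x, s) + cst f y t (x, s) := by
  obtain ⟨K, hK⟩ := H.lip
  set m := max (f (K + 1)) (f (-(K + 1)))
  refine ⟨-U (0, 0) + K * t + (K + 1) * |y| + t * |m|, fun x s hs hst => ?_⟩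
  have h1 : U (0, 0) - U (x, s) ≤ K * (|x| + s) := by
    refine (le_abs_self _).trans ?_
    have := hK.dist_le_mul (0, 0) (x, s)
    rw [Real.dist_eq] at this
    refine this.trans (mul_le_mul_of_nonneg_left ?_ K.2)
    rw [dist_comm, dist_eq_norm]
    simp [Prod.norm_def, abs_of_nonneg hs, hs]
  have hts : 0 < t - s := by linarith
  have h2 : (K + 1) * |y - x| - (t - s) * m ≤ cst f y t (x, s) := by
    have := mul_le_mul_of_nonneg_left (hf.coercive (K + 1) ((y - x) / (t - s))) hts.le
    simp only [cst]
    refine le_trans (le_of_eq ?_) this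
    rw [abs_div, abs_of_pos hts]
    field_simp
    rfl
  have h3 : |x| - |y| ≤ |y - x| := by
    rw [abs_sub_comm]; exact abs_sub_abs_le_abs_sub _ _
  have h4 : (t - s) * m ≤ t * |m| := by
    have := le_abs_self m
    have := abs_nonneg m
    nlinarith
  have h5 : (0:ℝ) ≤ K := K.2
  have h6 : (K:ℝ) * s ≤ K * t := by gcongr
  nlinarith

theorem HP.contU {f : ℝ → ℝ} {U u : ℝ × ℝ → ℝ} (H : HP f U u) : Continuous U := by
  obtain ⟨K, hK⟩ := H.lip
  exact hK.continuous

theorem cst_contAt {f : ℝ → ℝ} {a : ℝ} (hf : UC f a) (y t : ℝ) {z : ℝ × ℝ} (hz : z.2 < t) :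
    ContinuousAt (cst f y t) z := by
  obtain ⟨k', hk, _⟩ := cst_hasFDerivAt hf y t hz
  exact hk.continuousAt

theorem HP.minP {f : ℝ → ℝ} {a : ℝ} {U u : ℝ × ℝ → ℝ} (hf : UC f a) (H : HP f U u) {y t s1 l : ℝ}
    (hst : s1 < t) (h0 : ∀ x ≤ 0, l ≤ U (x, 0) + cst f y t (x, 0))
    (hb : ∀ s, 0 ≤ s → s ≤ s1 → l ≤ U (0, s) + cst f y t (0, s)) {x s : ℝ} (hx : x ≤ 0)
    (hs : 0 ≤ s) (hs1 : s < s1) : l ≤ U (x, s) + cst f y t (x, s) := by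
  obtain ⟨c0, hc0⟩ := H.coer hf y t
  suffices h : ∀ δ > 0, l ≤ U (x, s) + cst f y t (x, s) + δ / (s1 - s) by
    have hp : 0 < s1 - s := by linarith
    refine le_of_forall_pos_le_add fun ε hε => ?_
    have := h (ε * (s1 - s)) (by positivity)
    rwa [mul_div_cancel_right₀ _ hp.ne'] at this
  intro δ hδ
  set R := |x| + |l + c0| + 1 with hR
  have hRx : -R < x := by
    have := neg_abs_le x
    have := abs_nonneg (l + c0)
    linarith
  -- crude lower bound
  have hlow : ∀ z : ℝ × ℝ, 0 ≤ z.2 → z.2 < t → - c0 ≤ U z + cst f y t z := by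
    intro z h1 h2
    have := hc0 z.1 z.2 h1 h2
    have := abs_nonneg z.1
    simp only [Prod.mk.eta] at *
    linarith
  set ρ := min ((s1 - s) / 2) (δ / (|l + c0| + 1)) with hρ
  have hρ0 : 0 < ρ := by
    simp only [hρ, lt_min_iff]
    refine ⟨by linarith, by positivity⟩
  set s2 := s1 - ρ with hs2
  have hs2s : s < s2 := by
    have : ρ ≤ (s1 - s) / 2 := min_le_left _ _
    linarith
  have hs21 : s2 < s1 := by linarith
  set k : ℝ × ℝ → ℝ := fun z => cst f y t z + δ / (s1 - z.2) with hk
  set E : ℝ × ℝ → ℝ := fun z => U z + k z with hE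
  have hcont : ContinuousOn E (Icc (-R) 0 ×ˢ Icc 0 s2) := by
    intro z hz
    apply ContinuousAt.continuousWithinAt
    have hz2 : z.2 ≤ s2 := hz.2.2
    refine H.contU.continuousAt.add ((cst_contAt hf y t (by linarith)).add ?_)
    exact continuousAt_const.div (continuousAt_const.sub continuousAt_snd) (by linarith)
  have hne : (x, s) ∈ (Icc (-R) 0 ×ˢ Icc 0 s2 : Set (ℝ × ℝ)) := ⟨⟨hRx.le, hx⟩, ⟨hs, hs2s.le⟩⟩
  obtain ⟨z0, hz0, hzmin⟩ := (isCompact_Icc.prod isCompact_Icc).exists_isMinOn ⟨_, hne⟩ hcont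
  have hmain : l ≤ E z0 := by
    by_contra hcon
    push Not at hcon
    obtain ⟨⟨a1, a2⟩, ⟨b1, b2⟩⟩ := hz0
    have hpos : 0 < δ / (s1 - z0.2) := by apply div_pos hδ; linarith
    have c1 : -R < z0.1 := by
      rcases a1.eq_or_lt with h | h
      · exfalso
        have := hc0 z0.1 z0.2 b1 (by linarith)
        rw [← h, abs_neg, abs_of_nonneg (by positivity)] at this
        have e : (-R, z0.2) = z0 := by rw [h]
        rw [e] at this
        have := le_abs_self (l + c0)
        have := abs_nonneg x
        simp only [hE, hk] at hcon
        linarith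
      · exact h
    have c2 : z0.1 < 0 := by
      rcases a2.eq_or_lt with h | h
      · exfalso
        have := hb z0.2 b1 (by linarith)
        rw [← h, Prod.mk.eta] at this
        simp only [hE, hk] at hcon
        linarith
      · exact h
    have c3 : 0 < z0.2 := by
      rcases b1.eq_or_lt with h | h
      · exfalso
        have := h0 z0.1 c2.le
        rw [h, Prod.mk.eta] at this
        simp only [hE, hk] at hcon
        linarith
      · exact h
    have c4 : z0.2 < s2 := by
      rcases b2.eq_or_lt with h | h
      · exfalso
        have h1 := hlow z0 b1 (by linarith)
        have h2 : s1 - z0.2 = ρ := by rw [h]; ring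
        have h3 : |l + c0| + 1 ≤ δ / ρ := by
          rw [le_div_iff₀ hρ0]
          have : ρ ≤ δ / (|l + c0| + 1) := min_le_right _ _
          rwa [le_div_iff₀ (by positivity), mul_comm] at this
        have := le_abs_self (l + c0)
        simp only [hE, hk, h2] at hcon
        linarith
      · exact h
    obtain ⟨k', hk1, hk2, hk3⟩ := cst_hasFDerivAt hf y t (z := z0) (by linarith)
    have hne' : s1 - z0.2 ≠ 0 := by linarith
    have h1 : HasFDerivAt (fun z : ℝ × ℝ => s1 - z.2) (-(ContinuousLinearMap.snd ℝ ℝ ℝ)) z0 :=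
      hasFDerivAt_snd.const_sub s1
    have h2 := ((hasDerivAt_inv hne').comp_hasFDerivAt z0 h1).const_mul δ
    have h3 := hk1.add h2
    have hloc : IsLocalMin (fun z => U z + k z) z0 := by
      apply hzmin.isLocalMin
      exact prod_mem_nhds (Icc_mem_nhds c1 c2) (Icc_mem_nhds c3 c4)
    have := H.sub_min hf c2 c3 (k := k) h3 hloc
    simp [hk2, hk3] at this
    have h5 : 0 < δ * ((s1 - z0.2) ^ 2)⁻¹ := by positivity
    linarith
  have := isMinOn_iff.1 hzmin (x, s) hne
  simp only [hE, hk] at this hmain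
  linarith

theorem HP.exact0 {f : ℝ → ℝ} {a : ℝ} {U u : ℝ × ℝ → ℝ} (hf : UC f a) (H : HP f U u) {y t : ℝ}
    (ht : 0 < t) (hy : y ≤ 0) (hno : ¬ ∃ x ≤ 0, U (y, t) = U (x, 0) + t * Leg f ((y - x) / t)) :
    ∃ l, U (y, t) < l ∧ ∀ x ≤ 0, l ≤ U (x, 0) + cst f y t (x, 0) := by
  push Not at hno
  have hlt : ∀ x ≤ 0, U (y, t) < U (x, 0) + cst f y t (x, 0) := by
    intro x hx
    have h1 := H.upper hf hx hy le_rfl ht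
    have h2 := hno x hx
    simp only [sub_zero, cst] at h1 ⊢
    exact lt_of_le_of_ne h1 h2
  obtain ⟨c0, hc0⟩ := H.coer hf y t
  set R := |U (y, t) + 1 + c0| with hR
  have hne : (Icc (-R) 0).Nonempty := ⟨0, by simp [hR]⟩
  have hcont : ContinuousOn (fun x => U (x, 0) + cst f y t (x, 0)) (Icc (-R) 0) := by
    intro x _
    apply ContinuousAt.continuousWithinAt
    have h1 : Continuous fun x : ℝ => ((x, 0) : ℝ × ℝ) := by fun_prop
    refine (H.contU.comp h1).continuousAt.add ?_
    exact ContinuousAt.comp (f := fun x : ℝ => ((x, 0) : ℝ × ℝ)) (g := cst f y t)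
      (cst_contAt hf y t ht) h1.continuousAt
  obtain ⟨x0, hx0, hmin⟩ := isCompact_Icc.exists_isMinOn hne hcont
  refine ⟨min (U (x0, 0) + cst f y t (x0, 0)) (U (y, t) + 1),
    lt_min (hlt x0 hx0.2) (by linarith), fun x hx => ?_⟩
  by_cases h : -R ≤ x
  · exact (min_le_left _ _).trans (isMinOn_iff.1 hmin x ⟨h, hx⟩)
  · refine (min_le_right _ _).trans ?_
    have := hc0 x 0 le_rfl ht
    have h2 := neg_le_abs x
    have h3 := le_abs_self (U (y, t) + 1 + c0)
    linarith

theorem HP.phase1 {f : ℝ → ℝ} {a : ℝ} {U u : ℝ × ℝ → ℝ} (hf : UC f a) (H : HP f U u) {y t : ℝ}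
    (ht : 0 < t) (hy : y < 0) :
    (∃ x ≤ 0, U (y, t) = U (x, 0) + t * Leg f ((y - x) / t)) ∨
    ∃ s, 0 < s ∧ s < t ∧ U (y, t) = U (0, s) + (t - s) * Leg f ((y - 0) / (t - s)) := by
  by_contra hcon
  push Not at hcon
  obtain ⟨hc1, hc2⟩ := hcon
  obtain ⟨l0, hl0, hl0'⟩ := H.exact0 hf ht hy.le (by push Not; exact hc1)
  have hlt : ∀ s, 0 ≤ s → s < t → U (y, t) < U (0, s) + cst f y t (0, s) := by
    intro s h1 h2
    rcases h1.eq_or_lt with h | h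
    · rw [← h]; exact hl0.trans_le (hl0' 0 le_rfl)
    · exact lt_of_le_of_ne (H.upper hf le_rfl hy.le h1 h2) (hc2 s h h2)
  -- near `t`
  obtain ⟨s3, hs30, hs3t, hs3⟩ : ∃ s3, 0 ≤ s3 ∧ s3 < t ∧ ∀ s, s3 ≤ s → s < t →
      U (y, t) + 1 ≤ U (0, s) + cst f y t (0, s) := by
    obtain ⟨K, hK⟩ := H.lip
    set m : ℝ := (K * (|y| + t) + 2) / |y| with hm
    set mx := max (f m) (f (-m)) with hmx
    have hy0 : 0 < |y| := abs_pos.2 hy.ne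
    refine ⟨max 0 (t - 1 / (|mx| + 1)), le_max_left _ _, max_lt ht ?_, ?_⟩
    · have : 0 < 1 / (|mx| + 1) := by positivity
      linarith
    · intro s h1 h2
      have h3 : (0:ℝ) ≤ s := (le_max_left _ _).trans h1
      have h4 : t - 1 / (|mx| + 1) ≤ s := (le_max_right _ _).trans h1
      have hts : 0 < t - s := by linarith
      have h5 : (t - s) * mx ≤ 1 := by
        have h6 : t - s ≤ 1 / (|mx| + 1) := by linarith
        rw [le_div_iff₀ (by positivity)] at h6
        nlinarith [le_abs_self mx, abs_nonneg mx]
      have h7 : m * |y| - (t - s) * mx ≤ cst f y t (0, s) := by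
        have := mul_le_mul_of_nonneg_left (hf.coercive m ((y - 0) / (t - s))) hts.le
        simp only [cst]
        refine le_trans (le_of_eq ?_) this
        rw [abs_div, abs_of_pos hts, sub_zero]
        field_simp
        rfl
      have h8 : m * |y| = K * (|y| + t) + 2 := by rw [hm]; field_simp
      have h9 : U (y, t) - U (0, s) ≤ K * (|y| + t) := by
        refine (le_abs_self _).trans ?_
        have := hK.dist_le_mul (y, t) (0, s)
        rw [Real.dist_eq] at this
        refine this.trans (mul_le_mul_of_nonneg_left ?_ K.2)
        rw [dist_eq_norm]
        simp only [Prod.mk_sub_mk, sub_zero, Prod.norm_def, Real.norm_eq_abs]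
        rw [abs_of_pos hts]
        apply max_le <;> linarith
      linarith
  have hcont : ContinuousOn (fun s => U (0, s) + cst f y t (0, s)) (Icc 0 s3) := by
    intro s hs
    apply ContinuousAt.continuousWithinAt
    have h1 : Continuous fun s : ℝ => ((0, s) : ℝ × ℝ) := by fun_prop
    refine (H.contU.comp h1).continuousAt.add ?_
    exact ContinuousAt.comp (f := fun s : ℝ => ((0, s) : ℝ × ℝ)) (g := cst f y t)
      (cst_contAt hf y t (by simp; linarith [hs.2])) h1.continuousAt
  obtain ⟨s0, hs0, hmin⟩ := isCompact_Icc.exists_isMinOn ⟨0, left_mem_Icc.2 hs30⟩ hcont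
  set l := min l0 (min (U (0, s0) + cst f y t (0, s0)) (U (y, t) + 1)) with hl
  have hUl : U (y, t) < l := by
    simp only [hl, lt_min_iff]
    exact ⟨hl0, hlt s0 hs0.1 (by linarith [hs0.2]), by linarith⟩
  have hall : ∀ s, 0 ≤ s → s < t → l ≤ U (y, s) + cst f y t (y, s) := by
    intro s h1 h2
    apply H.minP hf (s1 := (s + t) / 2) (by linarith) (fun x hx => (min_le_left _ _).trans (hl0' x hx))
      _ hy.le h1 (by linarith)
    intro s' h3 h4
    by_cases h5 : s' ≤ s3
    · exact ((min_le_right _ _).trans (min_le_left _ _)).trans (isMinOn_iff.1 hmin s' ⟨h3, h5⟩)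
    · exact ((min_le_right _ _).trans (min_le_right _ _)).trans (hs3 s' (by linarith) (by linarith))
  have hlim : Tendsto (fun s => U (y, s) + (t - s) * Leg f 0) (nhdsWithin t (Iio t))
      (nhds (U (y, t) + (t - t) * Leg f 0)) := by
    refine Tendsto.mono_left ?_ nhdsWithin_le_nhds
    have : Continuous fun s => U (y, s) + (t - s) * Leg f 0 := by
      have := H.contU
      fun_prop
    exact this.tendsto t
  have : l ≤ U (y, t) + (t - t) * Leg f 0 := by
    refine ge_of_tendsto hlim ?_
    filter_upwards [Ioo_mem_nhdsLT ht] with s hs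
    have := hall s hs.1.le hs.2
    simpa [cst] using this
  simp at this
  linarith

theorem deriv_le_zero_of_min {φ : ℝ → ℝ} {d : ℝ} (h : HasDerivWithinAt φ d (Iic 0) 0)
    (hmin : ∀ x ≤ 0, φ 0 ≤ φ x) : d ≤ 0 := by
  rw [hasDerivWithinAt_iff_tendsto_slope] at h
  have e : Iic (0:ℝ) \ {0} = Iio 0 := by
    ext x; simp [lt_iff_le_and_ne]
  rw [e] at h
  refine le_of_tendsto h ?_
  filter_upwards [self_mem_nhdsWithin] with x hx
  have hx : x < 0 := hx
  rw [slope_def_field]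
  apply div_nonpos_of_nonneg_of_nonpos
  · linarith [hmin x hx.le]
  · linarith

theorem HP.phase2 {f : ℝ → ℝ} {a : ℝ} {U u : ℝ × ℝ → ℝ} (hf : UC f a) (H : HP f U u) {r : ℝ}
    (hr : 0 < r) :
    (∃ x ≤ 0, U (0, r) = U (x, 0) + r * Leg f ((0 - x) / r)) ∨
    ∃ δ > 0, δ ≤ r ∧ ∀ s, r - δ < s → s < r → ∀ m,
      HasDerivWithinAt (fun x => U (x, s)) m (Iic 0) 0 → m ≤ gInv f 0 := by
  by_cases hex : ∃ x ≤ 0, U (0, r) = U (x, 0) + r * Leg f ((0 - x) / r)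
  · exact Or.inl hex
  right
  obtain ⟨l0, hl0, hl0'⟩ := H.exact0 hf hr le_rfl hex
  have hc : Continuous fun s => U (0, s) + (r - s) * Leg f 0 := by
    have := H.contU
    fun_prop
  have hD0 : ∀ s, U (0, s) + cst f 0 r (0, s) = U (0, s) + (r - s) * Leg f 0 := by
    intro s; simp [cst]
  have hev : ∀ᶠ s in nhds r, U (0, s) + (r - s) * Leg f 0 < l0 := by
    have := hc.tendsto r
    simp only [sub_self, zero_mul, add_zero] at this
    exact this.eventually_lt_const hl0
  obtain ⟨δ0, hδ0, hδ⟩ := Metric.eventually_nhds_iff.1 hev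
  have hmono : ∀ s s', 0 ≤ s → s ≤ s' → U (0, s') + (r - s') * Leg f 0 ≤ U (0, s) + (r - s) * Leg f 0 := by
    intro s s' h0 h1
    rcases h1.eq_or_lt with h | h
    · rw [h]
    · have := H.upper hf (le_refl (0:ℝ)) (le_refl (0:ℝ)) h0 h
      simp at this
      linarith
  refine ⟨min δ0 r, lt_min hδ0 hr, min_le_right _ _, fun s hs1 hs2 m hm => ?_⟩
  have hδ0' : min δ0 r ≤ δ0 := min_le_left _ _
  have hδr : min δ0 r ≤ r := min_le_right _ _
  have hs0 : 0 < s := by linarith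
  have key : ∀ x ≤ 0, U (0, s) + (r - s) * Leg f 0 ≤ U (x, s) + cst f 0 r (x, s) := by
    intro x hx
    have hlim : Tendsto (fun s => U (0, s) + (r - s) * Leg f 0) (nhdsWithin s (Ioi s))
        (nhds (U (0, s) + (r - s) * Leg f 0)) := (hc.tendsto s).mono_left nhdsWithin_le_nhds
    refine le_of_tendsto hlim ?_
    filter_upwards [Ioo_mem_nhdsGT hs2] with s1 hs1'
    apply H.minP hf (s1 := s1) hs1'.2 _ _ hx hs0.le hs1'.1
    · intro x hx
      refine le_trans (le_of_lt ?_) (hl0' x hx)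
      apply hδ
      rw [Real.dist_eq, abs_lt]
      constructor <;> linarith [hs1'.1, hs1'.2]
    · intro s' h1 h2
      rw [hD0]
      exact hmono s' s1 h1 h2
  have hrs : 0 < r - s := by linarith
  have hd : HasDerivAt (fun x : ℝ => (r - s) * Leg f ((0 - x) / (r - s))) (- gInv f 0) 0 := by
    have h1 : HasDerivAt (fun x : ℝ => (0 - x) / (r - s)) (-1 / (r - s)) 0 :=
      ((hasDerivAt_id (0:ℝ)).const_sub 0).div_const _
    have h2 := hf.hasDerivLeg ((0 - 0) / (r - s))
    have h3 := (HasDerivAt.comp (h₂ := Leg f) (h := fun x : ℝ => (0 - x) / (r - s)) 0 h2 h1).const_mul (r - s)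
    have e : (r - s) * (gInv f ((0 - 0) / (r - s)) * (-1 / (r - s))) = - gInv f 0 := by
      simp; field_simp
    rw [e] at h3
    exact h3
  have := deriv_le_zero_of_min (hm.add hd.hasDerivWithinAt) (fun x hx => by
    have := key x hx
    simp [cst] at this ⊢
    linarith)
  linarith

theorem hasDerivAt_squeeze {lo φ up : ℝ → ℝ} {d z : ℝ} (h1 : HasDerivAt lo d z) (h2 : HasDerivAt up d z)
    (hl : ∀ᶠ x in nhds z, lo x ≤ φ x) (hu : ∀ᶠ x in nhds z, φ x ≤ up x) (he : lo z = up z) :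
    HasDerivAt φ d z := by
  have hz : φ z = lo z := le_antisymm (he ▸ hu.self_of_nhds) hl.self_of_nhds
  rw [hasDerivAt_iff_isLittleO, Asymptotics.isLittleO_iff] at *
  intro c hc
  filter_upwards [h1 hc, h2 hc, hl, hu] with x a1 a2 a3 a4
  rw [Real.norm_eq_abs, abs_le] at *
  rw [smul_eq_mul] at *
  constructor <;> linarith [a1.1, a2.2]

theorem HP.segment {f : ℝ → ℝ} {a : ℝ} {U u : ℝ × ℝ → ℝ} (hf : UC f a) (H : HP f U u)
    {x1 t1 x2 t2 : ℝ} (h1 : x1 ≤ 0) (h2 : x2 ≤ 0) (ht1 : 0 ≤ t1)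
    (hex : U (x2, t2) = U (x1, t1) + (t2 - t1) * Leg f ((x2 - x1) / (t2 - t1))) {τ : ℝ} (h3 : t1 < τ)
    (h4 : τ < t2) (hz : x1 + (x2 - x1) / (t2 - t1) * (τ - t1) < 0) :
    HasDerivAt (fun x => U (x, τ)) (gInv f ((x2 - x1) / (t2 - t1)))
      (x1 + (x2 - x1) / (t2 - t1) * (τ - t1)) := by
  set q := (x2 - x1) / (t2 - t1) with hq
  have hqe : q * (t2 - t1) = x2 - x1 := by rw [hq]; field_simp [(by linarith : t2 - t1 ≠ 0)]
  set z := x1 + q * (τ - t1) with hzz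
  have p1 : 0 < τ - t1 := by linarith
  have p2 : 0 < t2 - τ := by linarith
  have e1 : (z - x1) / (τ - t1) = q := by rw [hzz]; field_simp; ring
  have e2 : (x2 - z) / (t2 - τ) = q := by
    rw [div_eq_iff p2.ne']; rw [hzz]; linarith
  have d1 : HasDerivAt (fun x : ℝ => U (x1, t1) + (τ - t1) * Leg f ((x - x1) / (τ - t1))) (gInv f q) z := by
    have a1 : HasDerivAt (fun x : ℝ => (x - x1) / (τ - t1)) (1 / (τ - t1)) z :=
      ((hasDerivAt_id z).sub_const x1).div_const _
    have a2 := hf.hasDerivLeg ((z - x1) / (τ - t1))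
    have a3 := ((HasDerivAt.comp (h₂ := Leg f) (h := fun x : ℝ => (x - x1) / (τ - t1)) z a2 a1).const_mul
      (τ - t1)).const_add (U (x1, t1))
    rw [e1] at a3
    refine a3.congr_deriv ?_
    field_simp
  have d2 : HasDerivAt (fun x : ℝ => U (x2, t2) - (t2 - τ) * Leg f ((x2 - x) / (t2 - τ))) (gInv f q) z := by
    have a1 : HasDerivAt (fun x : ℝ => (x2 - x) / (t2 - τ)) (-1 / (t2 - τ)) z :=
      ((hasDerivAt_id z).const_sub x2).div_const _
    have a2 := hf.hasDerivLeg ((x2 - z) / (t2 - τ))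
    have a3 := ((HasDerivAt.comp (h₂ := Leg f) (h := fun x : ℝ => (x2 - x) / (t2 - τ)) z a2 a1).const_mul
      (t2 - τ)).const_sub (U (x2, t2))
    rw [e2] at a3
    refine a3.congr_deriv ?_
    field_simp
  have hev : ∀ᶠ x in nhds z, x < 0 := eventually_lt_nhds hz
  refine hasDerivAt_squeeze d2 d1 ?_ ?_ ?_
  · filter_upwards [hev] with x hx
    have := H.upper hf hx.le h2 (by linarith : 0 ≤ τ) h4
    linarith
  · filter_upwards [hev] with x hx
    exact H.upper hf h1 hx.le ht1 h3
  · simp only [e1, e2]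
    rw [hex]; ring

/-! ### Ramps -/

def sS : ℝ → ℝ := Real.smoothTransition
def dS : ℝ → ℝ := deriv sS

theorem sS_contDiff : ContDiff ℝ 1 sS := Real.smoothTransition.contDiff
theorem sS_hasDeriv (x : ℝ) : HasDerivAt sS (dS x) x :=
  ((sS_contDiff.differentiable (by norm_num)) x).hasDerivAt
theorem dS_cont : Continuous dS := sS_contDiff.continuous_deriv (by norm_num)
theorem sS_nonneg (x : ℝ) : 0 ≤ sS x := Real.smoothTransition.nonneg x
theorem sS_le_one (x : ℝ) : sS x ≤ 1 := Real.smoothTransition.le_one x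
theorem sS_zero {x : ℝ} (h : x ≤ 0) : sS x = 0 := Real.smoothTransition.zero_of_nonpos h
theorem sS_one {x : ℝ} (h : 1 ≤ x) : sS x = 1 := Real.smoothTransition.one_of_one_le h
theorem sS_mono : Monotone sS := Real.smoothTransition.monotone

theorem dS_zero {x : ℝ} (h : x ∉ Ioo 0 1) : dS x = 0 := by
  have h' : x ≤ 0 ∨ 1 ≤ x := by
    by_contra hc
    push Not at hc
    exact h ⟨hc.1, hc.2⟩
  rcases h' with h | h
  · apply IsLocalMin.deriv_eq_zero
    exact Eventually.of_forall fun y => by rw [sS_zero h]; exact sS_nonneg y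
  · apply IsLocalMax.deriv_eq_zero
    exact Eventually.of_forall fun y => by rw [sS_one h]; exact sS_le_one y

theorem dS_nonneg (x : ℝ) : 0 ≤ dS x := sS_mono.deriv_nonneg

theorem dS_int : Integrable dS := by
  apply dS_cont.integrable_of_hasCompactSupport
  apply HasCompactSupport.of_support_subset_isCompact (isCompact_Icc (a := (0:ℝ)) (b := 1))
  intro x hx
  by_contra hc
  exact hx (dS_zero fun h => hc ⟨h.1.le, h.2.le⟩)

theorem dS_integral : ∫ x, dS x = 1 := by
  have := integral_of_hasDerivAt_of_tendsto (f := sS) (f' := dS) (m := 0) (n := 1)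
    (fun x => sS_hasDeriv x) dS_int ?_ ?_
  · simpa using this
  · apply tendsto_const_nhds.congr'
    filter_upwards [eventually_le_atBot 0] with x hx
    exact (sS_zero hx).symm
  · apply tendsto_const_nhds.congr'
    filter_upwards [eventually_ge_atTop 1] with x hx
    exact (sS_one hx).symm

def rmp (b c : ℝ) (n : ℕ) (x : ℝ) : ℝ := sS ((x - b) * ((n : ℝ) + 1) + c)

theorem rmp_contDiff (b c : ℝ) (n : ℕ) : ContDiff ℝ 1 (rmp b c n) := by
  apply sS_contDiff.comp
  fun_prop

theorem rmp_hasDeriv (b c : ℝ) (n : ℕ) (x : ℝ) :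
    HasDerivAt (rmp b c n) (dS ((x - b) * ((n : ℝ) + 1) + c) * ((n : ℝ) + 1)) x := by
  have h1 : HasDerivAt (fun x : ℝ => (x - b) * ((n : ℝ) + 1) + c) ((n : ℝ) + 1) x := by
    simpa using (((hasDerivAt_id x).sub_const b).mul_const ((n : ℝ) + 1)).add_const c
  exact HasDerivAt.comp (h₂ := sS) x (sS_hasDeriv _) h1

theorem rmp_deriv (b c : ℝ) (n : ℕ) (x : ℝ) :
    deriv (rmp b c n) x = dS ((x - b) * ((n : ℝ) + 1) + c) * ((n : ℝ) + 1) := (rmp_hasDeriv b c n x).deriv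

theorem rmp_change (b c : ℝ) (n : ℕ) (g : ℝ → ℝ) :
    ∫ x, g x * deriv (rmp b c n) x = ∫ τ, g (b + (τ - c) / ((n : ℝ) + 1)) * dS τ := by
  have hn : (0 : ℝ) < (n : ℝ) + 1 := by positivity
  set H : ℝ → ℝ := fun τ => g (b + (τ - c) / ((n : ℝ) + 1)) * dS τ with hH
  have e : ∀ x, g x * deriv (rmp b c n) x = ((n : ℝ) + 1) * H ((x - b) * ((n : ℝ) + 1) + c) := by
    intro x
    rw [rmp_deriv]
    simp only [hH]
    have : b + ((x - b) * ((n : ℝ) + 1) + c - c) / ((n : ℝ) + 1) = x := by field_simp; ring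
    rw [this]; ring
  simp_rw [e]
  rw [integral_const_mul, integral_sub_right_eq_self (fun x => H (x * ((n : ℝ) + 1) + c)) b,
    Measure.integral_comp_mul_right (fun x => H (x + c)) ((n : ℝ) + 1),
    integral_add_right_eq_self H c, abs_of_pos (by positivity), smul_eq_mul]
  field_simp

theorem rmp_deriv_int (b c : ℝ) (n : ℕ) : Integrable (deriv (rmp b c n)) := by
  have hn : ((n : ℝ) + 1) ≠ 0 := by positivity
  have e : deriv (rmp b c n) = fun x => dS ((x - b) * ((n : ℝ) + 1) + c) * ((n : ℝ) + 1) :=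
    funext (rmp_deriv b c n)
  rw [e]
  exact (((dS_int.comp_add_right c).comp_mul_right' hn).comp_sub_right b).mul_const _

theorem rmp_tendsto {b c C l : ℝ} {g : ℝ → ℝ} (hg : Measurable g) (hC : ∀ x, |g x| ≤ C)
    (hl : ∀ τ ∈ Ioo (0:ℝ) 1, Tendsto (fun n : ℕ => g (b + (τ - c) / ((n : ℝ) + 1))) atTop (nhds l)) :
    Tendsto (fun n : ℕ => ∫ x, g x * deriv (rmp b c n) x) atTop (nhds l) := by
  simp_rw [rmp_change]
  have : l = ∫ τ, l * dS τ := by rw [integral_const_mul, dS_integral, mul_one]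
  rw [this]
  apply tendsto_integral_of_dominated_convergence (fun τ => C * dS τ)
  · intro n
    refine ((hg.comp ?_).mul dS_cont.measurable).aestronglyMeasurable
    fun_prop
  · exact dS_int.const_mul C
  · intro n
    refine Eventually.of_forall fun τ => ?_
    rw [Real.norm_eq_abs, abs_mul, abs_of_nonneg (dS_nonneg τ)]
    exact mul_le_mul_of_nonneg_right (hC _) (dS_nonneg τ)
  · refine Eventually.of_forall fun τ => ?_
    by_cases hτ : τ ∈ Ioo (0:ℝ) 1
    · exact (hl τ hτ).mul_const _
    · simp [dS_zero hτ]

theorem rmp_lim_lt {b c x : ℝ} (h : x < b) : ∀ᶠ n : ℕ in atTop, rmp b c n x = 0 := by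
  have : Tendsto (fun n : ℕ => (x - b) * ((n : ℝ) + 1) + c) atTop atBot := by
    apply tendsto_atBot_add_const_right
    apply Tendsto.const_mul_atTop_of_neg (by linarith)
    exact tendsto_atTop_add_const_right _ _ tendsto_natCast_atTop_atTop
  filter_upwards [this.eventually_le_atBot 0] with n hn
  exact sS_zero hn

theorem rmp_lim_gt {b c x : ℝ} (h : b < x) : ∀ᶠ n : ℕ in atTop, rmp b c n x = 1 := by
  have : Tendsto (fun n : ℕ => (x - b) * ((n : ℝ) + 1) + c) atTop atTop := by
    apply tendsto_atTop_add_const_right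
    apply Tendsto.const_mul_atTop (by linarith)
    exact tendsto_atTop_add_const_right _ _ tendsto_natCast_atTop_atTop
  filter_upwards [this.eventually_ge_atTop 1] with n hn
  exact sS_one hn

def hat (x1 c1 x2 c2 : ℝ) (n : ℕ) (x : ℝ) : ℝ := rmp x1 c1 n x - rmp x2 c2 n x

section hatsec
variable {x1 c1 x2 c2 : ℝ}

theorem hat_contDiff (n : ℕ) : ContDiff ℝ 1 (hat x1 c1 x2 c2 n) :=
  (rmp_contDiff _ _ _).sub (rmp_contDiff _ _ _)

theorem hat_deriv (n : ℕ) (x : ℝ) :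
    deriv (hat x1 c1 x2 c2 n) x = deriv (rmp x1 c1 n) x - deriv (rmp x2 c2 n) x :=
  deriv_sub (rmp_hasDeriv _ _ _ _).differentiableAt (rmp_hasDeriv _ _ _ _).differentiableAt

theorem hat_nonneg (hx : x1 ≤ x2) (hc : c2 ≤ c1) (n : ℕ) (x : ℝ) : 0 ≤ hat x1 c1 x2 c2 n x := by
  apply sub_nonneg.2
  apply sS_mono
  have : (0:ℝ) ≤ (n : ℝ) + 1 := by positivity
  nlinarith

theorem hat_le_one (n : ℕ) (x : ℝ) : hat x1 c1 x2 c2 n x ≤ 1 := by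
  have := sS_le_one ((x - x1) * ((n : ℝ) + 1) + c1)
  have := sS_nonneg ((x - x2) * ((n : ℝ) + 1) + c2)
  unfold hat rmp; linarith

theorem hat_zero (hx : x1 ≤ x2) (h1 : c1 ≤ 1) (h2 : c2 ≤ 1) (h1' : 0 ≤ c1) (h2' : 0 ≤ c2) (n : ℕ) {x : ℝ}
    (hh : x ∉ Icc (x1 - 1) (x2 + 1)) : hat x1 c1 x2 c2 n x = 0 := by
  have hn : (0:ℝ) ≤ (n : ℝ) := by positivity
  rw [mem_Icc, not_and_or, not_le, not_le] at hh
  unfold hat rmp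
  rcases hh with h | h
  · rw [sS_zero, sS_zero, sub_self] <;> nlinarith
  · rw [sS_one, sS_one, sub_self] <;> nlinarith

theorem hat_zero_left (hx : x1 ≤ x2) (n : ℕ) {x : ℝ} (hh : x ≤ x1) : hat x1 0 x2 0 n x = 0 := by
  have hn : (0:ℝ) ≤ (n : ℝ) := by positivity
  unfold hat rmp
  rw [sS_zero, sS_zero, sub_self] <;> nlinarith

theorem hat_supp (hx : x1 ≤ x2) (h1 : c1 ≤ 1) (h2 : c2 ≤ 1) (h1' : 0 ≤ c1) (h2' : 0 ≤ c2) (n : ℕ) :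
    HasCompactSupport (hat x1 c1 x2 c2 n) := by
  apply HasCompactSupport.of_support_subset_isCompact (isCompact_Icc (a := x1 - 1) (b := x2 + 1))
  intro x hh
  by_contra hc
  exact hh (hat_zero hx h1 h2 h1' h2' n hc)

theorem hat_int_tendsto (hx : x1 ≤ x2) (hc : c2 ≤ c1) (h1 : c1 ≤ 1) (h2 : c2 ≤ 1) (h1' : 0 ≤ c1) (h2' : 0 ≤ c2)
    {g : ℝ → ℝ} {C : ℝ} (hg : Measurable g) (hC : ∀ x, |g x| ≤ C) :
    Tendsto (fun n : ℕ => ∫ x, g x * hat x1 c1 x2 c2 n x) atTop (nhds (∫ x in x1..x2, g x)) := by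
  rw [intervalIntegral.integral_of_le hx, ← integral_indicator measurableSet_Ioc]
  have hC0 : 0 ≤ C := (abs_nonneg _).trans (hC 0)
  apply tendsto_integral_of_dominated_convergence ((Icc (x1 - 1) (x2 + 1)).indicator fun _ => C)
  · intro n
    exact (hg.mul (hat_contDiff n).continuous.measurable).aestronglyMeasurable
  · rw [integrable_indicator_iff measurableSet_Icc]
    exact integrableOn_const (measure_Icc_lt_top.ne)
  · intro n
    refine Eventually.of_forall fun x => ?_
    by_cases hh : x ∈ Icc (x1 - 1) (x2 + 1)
    · rw [indicator_of_mem hh, Real.norm_eq_abs, abs_mul, abs_of_nonneg (hat_nonneg hx hc n x)]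
      have := hat_le_one (x1 := x1) (c1 := c1) (x2 := x2) (c2 := c2) n x
      have h0 := hat_nonneg hx hc n x
      nlinarith [hC x, abs_nonneg (g x)]
    · rw [indicator_of_notMem hh, hat_zero hx h1 h2 h1' h2' n hh]; simp
  · have hne : ∀ᵐ x : ℝ, x ≠ x1 ∧ x ≠ x2 := by
      have a1 := (Measure.ae_ne (volume : Measure ℝ) x1)
      have a2 := (Measure.ae_ne (volume : Measure ℝ) x2)
      filter_upwards [a1, a2] with x b1 b2
      exact ⟨b1, b2⟩
    filter_upwards [hne] with x hx'
    rcases lt_or_gt_of_ne hx'.1 with hlt | hgt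
    · rw [indicator_of_notMem (by simp; intro h; linarith)]
      apply tendsto_const_nhds.congr'
      filter_upwards [rmp_lim_lt (c := c1) hlt, rmp_lim_lt (c := c2) (hlt.trans_le hx)] with n e1 e2
      simp [hat, e1, e2]
    · rcases lt_or_gt_of_ne hx'.2 with hlt2 | hgt2
      · rw [indicator_of_mem (show x ∈ Ioc x1 x2 from ⟨hgt, hlt2.le⟩)]
        apply tendsto_const_nhds.congr'
        filter_upwards [rmp_lim_gt (c := c1) hgt, rmp_lim_lt (c := c2) hlt2] with n e1 e2
        simp [hat, e1, e2]
      · rw [indicator_of_notMem (by simp; intro h; linarith)]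
        apply tendsto_const_nhds.congr'
        filter_upwards [rmp_lim_gt (c := c1) hgt, rmp_lim_gt (c := c2) hgt2] with n e1 e2
        simp [hat, e1, e2]

theorem int_mul_hat_deriv {g : ℝ → ℝ} {C : ℝ} (hg : Measurable g) (hC : ∀ x, |g x| ≤ C) (n : ℕ) :
    ∫ x, g x * deriv (hat x1 c1 x2 c2 n) x =
      (∫ x, g x * deriv (rmp x1 c1 n) x) - ∫ x, g x * deriv (rmp x2 c2 n) x := by
  simp_rw [hat_deriv, mul_sub]
  have hi : ∀ b c, Integrable fun x => g x * deriv (rmp b c n) x := fun b c =>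
    (rmp_deriv_int b c n).bdd_mul hg.aestronglyMeasurable (Eventually.of_forall hC)
  exact integral_sub (hi _ _) (hi _ _)

theorem hat_deriv_tendsto {g : ℝ → ℝ} {C l1 l2 : ℝ} (hg : Measurable g) (hC : ∀ x, |g x| ≤ C)
    (hl1 : ∀ τ ∈ Ioo (0:ℝ) 1, Tendsto (fun n : ℕ => g (x1 + (τ - c1) / ((n : ℝ) + 1))) atTop (nhds l1))
    (hl2 : ∀ τ ∈ Ioo (0:ℝ) 1, Tendsto (fun n : ℕ => g (x2 + (τ - c2) / ((n : ℝ) + 1))) atTop (nhds l2)) :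
    Tendsto (fun n : ℕ => ∫ x, g x * deriv (hat x1 c1 x2 c2 n) x) atTop (nhds (l1 - l2)) := by
  simp_rw [int_mul_hat_deriv hg hC]
  exact (rmp_tendsto hg hC hl1).sub (rmp_tendsto hg hC hl2)

theorem hat_deriv_bound {g : ℝ → ℝ} {C : ℝ} (hC : ∀ x, |g x| ≤ C) (hg : Measurable g) (n : ℕ) :
    |∫ x, g x * deriv (hat x1 c1 x2 c2 n) x| ≤ 2 * C := by
  rw [int_mul_hat_deriv hg hC]
  have hb : ∀ b c, |∫ x, g x * deriv (rmp b c n) x| ≤ C := by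
    intro b c
    rw [rmp_change]
    calc _ ≤ ∫ τ, C * dS τ := by
          rw [← Real.norm_eq_abs]
          apply norm_integral_le_of_norm_le (dS_int.const_mul C)
          refine Eventually.of_forall fun τ => ?_
          rw [Real.norm_eq_abs, abs_mul, abs_of_nonneg (dS_nonneg τ)]
          exact mul_le_mul_of_nonneg_right (hC _) (dS_nonneg τ)
      _ = C := by rw [integral_const_mul, dS_integral, mul_one]
  refine (abs_sub _ _).trans ?_
  linarith [hb x1 c1, hb x2 c2]

end hatsec

theorem tendsto_right_pt {b τ : ℝ} (hτ : 0 < τ) :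
    Tendsto (fun n : ℕ => b + τ / ((n : ℝ) + 1)) atTop (nhdsWithin b (Ioi b)) := by
  rw [tendsto_nhdsWithin_iff]
  constructor
  · have := (tendsto_one_div_add_atTop_nhds_zero_nat (𝕜 := ℝ)).const_mul τ
    have := this.const_add b
    simpa [div_eq_mul_inv] using this
  · refine Eventually.of_forall fun n => ?_
    have : 0 < τ / ((n : ℝ) + 1) := by positivity
    simp; exact this

theorem tendsto_left_pt {b τ : ℝ} (hτ : τ < 0) :
    Tendsto (fun n : ℕ => b + τ / ((n : ℝ) + 1)) atTop (nhdsWithin b (Iio b)) := by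
  rw [tendsto_nhdsWithin_iff]
  constructor
  · have := (tendsto_one_div_add_atTop_nhds_zero_nat (𝕜 := ℝ)).const_mul τ
    have := this.const_add b
    simpa [div_eq_mul_inv] using this
  · refine Eventually.of_forall fun n => ?_
    have : τ / ((n : ℝ) + 1) < 0 := div_neg_of_neg_of_pos hτ (by positivity)
    simp; exact this

theorem time_lemma {m n : ℝ → ℝ} {C : ℝ} (hm : Measurable m) (hn : Measurable n) (hmC : ∀ t, |m t| ≤ C)
    (hnC : ∀ t, |n t| ≤ C) (hmc : ContinuousOn m (Ici 0))
    (H : ∀ χ : ℝ → ℝ, ContDiff ℝ 1 χ → HasCompactSupport χ → (∀ t, 0 ≤ χ t) → (∀ t ≤ 0, χ t = 0) →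
      0 ≤ ∫ t, (m t * deriv χ t + n t * χ t)) {t1 t2 : ℝ} (h1 : 0 ≤ t1) (h2 : t1 ≤ t2) :
    m t2 - m t1 ≤ ∫ t in t1..t2, n t := by
  have hlim : ∀ b, 0 ≤ b → ∀ τ ∈ Ioo (0:ℝ) 1,
      Tendsto (fun n : ℕ => m (b + (τ - 0) / ((n : ℝ) + 1))) atTop (nhds (m b)) := by
    intro b hb τ hτ
    rw [sub_zero]
    have h3 : Tendsto m (nhdsWithin b (Ioi b)) (nhds (m b)) :=
      (hmc b hb).mono_left (nhdsWithin_mono _ fun x hx => hb.trans (le_of_lt hx))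
    exact h3.comp (tendsto_right_pt hτ.1)
  have l1 := hat_deriv_tendsto hm hmC (hlim t1 h1) (hlim t2 (h1.trans h2))
  have l2 := hat_int_tendsto h2 le_rfl zero_le_one zero_le_one le_rfl le_rfl hn hnC
  have l3 := l1.add l2
  have : 0 ≤ m t1 - m t2 + ∫ t in t1..t2, n t := by
    refine ge_of_tendsto l3 (Eventually.of_forall fun k => ?_)
    have hk := H (hat t1 0 t2 0 k) (hat_contDiff k) (hat_supp h2 zero_le_one zero_le_one le_rfl le_rfl k)
      (hat_nonneg h2 le_rfl k) (fun t ht => hat_zero_left h2 k (ht.trans h1))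
    rw [integral_add] at hk
    · exact hk
    · have : Integrable (deriv (hat t1 0 t2 0 k)) := by
        have e : deriv (hat t1 0 t2 0 k) = fun x => deriv (rmp t1 0 k) x - deriv (rmp t2 0 k) x :=
          funext (hat_deriv k)
        rw [e]
        exact (rmp_deriv_int _ _ _).sub (rmp_deriv_int _ _ _)
      exact this.bdd_mul hm.aestronglyMeasurable (Eventually.of_forall hmC)
    · have : Integrable (hat t1 0 t2 0 k) :=
        (hat_contDiff k).continuous.integrable_of_hasCompactSupport
          (hat_supp h2 zero_le_one zero_le_one le_rfl le_rfl k)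
      exact this.bdd_mul hn.aestronglyMeasurable (Eventually.of_forall hnC)
  linarith

/-! ### Box balance -/

theorem meas_sec {G : ℝ → ℝ → ℝ} (hG : Measurable (Function.uncurry G)) (t : ℝ) :
    Measurable fun x => G x t := hG.comp (measurable_id.prodMk measurable_const)

theorem box_ineq {u G1 G2 : ℝ → ℝ → ℝ} {C M c2 x1 x2 : ℝ}
    (hG1 : Measurable (Function.uncurry G1)) (hG2 : Measurable (Function.uncurry G2))
    (hC1 : ∀ x t, |G1 x t| ≤ C) (hC2 : ∀ x t, |G2 x t| ≤ C)
    (hu : Measurable (Function.uncurry u)) (hM : ∀ x t, |u x t| ≤ M)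
    (hcont : ∀ x t s, |G1 x t - G1 x s| ≤ |u x t - u x s|)
    (htc : ∀ (r t₀ : ℝ), 0 ≤ t₀ → Tendsto (fun t => ∫ x in Icc (-r) r, |u x t - u x t₀|)
      (nhdsWithin t₀ (Ici 0)) (nhds 0))
    (hx : x1 ≤ x2) (hc0 : 0 ≤ c2) (hc1 : c2 ≤ 1)
    (H : ∀ φ : ℝ → ℝ → ℝ, ContDiff ℝ 1 (fun p : ℝ × ℝ => φ p.1 p.2) →
      HasCompactSupport (fun p : ℝ × ℝ => φ p.1 p.2) → (∀ x t, 0 ≤ φ x t) →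
      (∀ x t, t ≤ 0 → φ x t = 0) →
      0 ≤ ∫ p : ℝ × ℝ, (G1 p.1 p.2 * deriv (fun s => φ p.1 s) p.2 +
        G2 p.1 p.2 * deriv (fun y => φ y p.2) p.1))
    {l1 l2 : ℝ → ℝ}
    (hl1 : ∀ s > 0, ∀ τ ∈ Ioo (0:ℝ) 1,
      Tendsto (fun n : ℕ => G2 (x1 + (τ - 1) / ((n : ℝ) + 1)) s) atTop (nhds (l1 s)))
    (hl2 : ∀ s > 0, ∀ τ ∈ Ioo (0:ℝ) 1,
      Tendsto (fun n : ℕ => G2 (x2 + (τ - c2) / ((n : ℝ) + 1)) s) atTop (nhds (l2 s)))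
    {t1 t2 : ℝ} (h1 : 0 ≤ t1) (h2 : t1 ≤ t2) :
    (∫ x in x1..x2, G1 x t2) - (∫ x in x1..x2, G1 x t1) ≤ ∫ s in t1..t2, (l1 s - l2 s) := by
  have hC0 : 0 ≤ C := (abs_nonneg _).trans (hC1 0 0)
  have key : ∀ n : ℕ, (∫ x, G1 x t2 * hat x1 1 x2 c2 n x) - (∫ x, G1 x t1 * hat x1 1 x2 c2 n x) ≤
      ∫ s in t1..t2, (∫ x, G2 x s * deriv (hat x1 1 x2 c2 n) x) := by
    intro n
    set ψ := hat x1 1 x2 c2 n with hψ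
    have ψc : ContDiff ℝ 1 ψ := hat_contDiff n
    have ψ0 : ∀ x, 0 ≤ ψ x := hat_nonneg hx hc1 n
    have ψ1 : ∀ x, ψ x ≤ 1 := fun x => hat_le_one n x
    have ψs : HasCompactSupport ψ := hat_supp hx le_rfl hc1 zero_le_one hc0 n
    have ψi : Integrable ψ := ψc.continuous.integrable_of_hasCompactSupport ψs
    have dψc : Continuous (deriv ψ) := ψc.continuous_deriv (by norm_num)
    have dψi : Integrable (deriv ψ) := dψc.integrable_of_hasCompactSupport ψs.deriv
    have mm : Measurable fun t => ∫ x, G1 x t * ψ x := by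
      have : StronglyMeasurable (Function.uncurry fun x t => G1 x t * ψ x) :=
        (hG1.mul (ψc.continuous.measurable.comp measurable_fst)).stronglyMeasurable
      exact this.integral_prod_left.measurable
    have nm : Measurable fun t => ∫ x, G2 x t * deriv ψ x := by
      have : StronglyMeasurable (Function.uncurry fun x t => G2 x t * deriv ψ x) :=
        (hG2.mul (dψc.measurable.comp measurable_fst)).stronglyMeasurable
      exact this.integral_prod_left.measurable
    have mb : ∀ t, |∫ x, G1 x t * ψ x| ≤ C * ∫ x, ψ x := by
      intro t
      rw [← integral_const_mul, ← Real.norm_eq_abs]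
      apply norm_integral_le_of_norm_le (ψi.const_mul C)
      refine Eventually.of_forall fun x => ?_
      rw [Real.norm_eq_abs, abs_mul, abs_of_nonneg (ψ0 x)]
      exact mul_le_mul_of_nonneg_right (hC1 _ _) (ψ0 x)
    have nb : ∀ t, |∫ x, G2 x t * deriv ψ x| ≤ 2 * C := fun t =>
      hat_deriv_bound (fun x => hC2 x t) (meas_sec hG2 t) n
    have iG1 : ∀ t, Integrable fun x => G1 x t * ψ x := fun t =>
      ψi.bdd_mul (meas_sec hG1 t).aestronglyMeasurable (Eventually.of_forall fun x => hC1 x t)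
    have iG2 : ∀ t, Integrable fun x => G2 x t * deriv ψ x := fun t =>
      dψi.bdd_mul (meas_sec hG2 t).aestronglyMeasurable (Eventually.of_forall fun x => hC2 x t)
    have mc : ContinuousOn (fun t => ∫ x, G1 x t * ψ x) (Ici 0) := by
      intro t0 ht0
      have ht := htc (max |x1 - 1| |x2 + 1|) t0 ht0
      set r := max |x1 - 1| |x2 + 1|
      rw [ContinuousWithinAt, tendsto_iff_dist_tendsto_zero]
      refine squeeze_zero (fun _ => dist_nonneg) (fun t => ?_) ht
      rw [Real.dist_eq, ← integral_sub (iG1 t) (iG1 t0), ← integral_indicator measurableSet_Icc,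
        ← Real.norm_eq_abs]
      apply norm_integral_le_of_norm_le
      · rw [integrable_indicator_iff measurableSet_Icc]
        refine Measure.integrableOn_of_bounded (M := 2 * M) (measure_Icc_lt_top.ne)
          (((meas_sec hu t).sub (meas_sec hu t0)).norm.aestronglyMeasurable) ?_
        refine Eventually.of_forall fun x => ?_
        rw [Real.norm_eq_abs, abs_abs]
        have := abs_sub (u x t) (u x t0)
        linarith [hM x t, hM x t0]
      · refine Eventually.of_forall fun x => ?_
        rw [← sub_mul, Real.norm_eq_abs, abs_mul, abs_of_nonneg (ψ0 x)]
        by_cases hxr : x ∈ Icc (-r) r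
        · rw [indicator_of_mem hxr]
          exact (mul_le_of_le_one_right (abs_nonneg _) (ψ1 x)).trans (hcont x t t0)
        · rw [indicator_of_notMem hxr]
          rw [hψ, hat_zero hx le_rfl hc1 zero_le_one hc0 n, mul_zero]
          intro hh
          apply hxr
          have e1 : |x1 - 1| ≤ r := le_max_left _ _
          have e2 : |x2 + 1| ≤ r := le_max_right _ _
          exact ⟨by linarith [neg_abs_le (x1 - 1), hh.1], by linarith [le_abs_self (x2 + 1), hh.2]⟩
    refine time_lemma (C := max (C * ∫ x, ψ x) (2 * C)) mm nm (fun t => (mb t).trans (le_max_left _ _))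
      (fun t => (nb t).trans (le_max_right _ _)) mc ?_ h1 h2
    intro χ χc χs χ0 χz
    have dχc : Continuous (deriv χ) := χc.continuous_deriv (by norm_num)
    have hφs : HasCompactSupport (fun p : ℝ × ℝ => ψ p.1 * χ p.2) := by
      apply HasCompactSupport.of_support_subset_isCompact (ψs.isCompact.prod χs.isCompact)
      intro p hp
      have hp' : ψ p.1 * χ p.2 ≠ 0 := hp
      exact ⟨subset_tsupport _ (left_ne_zero_of_mul hp'), subset_tsupport _ (right_ne_zero_of_mul hp')⟩
    have hφ := H (fun x t => ψ x * χ t)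
      ((ψc.comp contDiff_fst).mul (χc.comp contDiff_snd)) hφs
      (fun x t => mul_nonneg (ψ0 x) (χ0 t)) (fun x t ht => by simp [χz t ht])
    have d1 : ∀ p : ℝ × ℝ, deriv (fun s => ψ p.1 * χ s) p.2 = ψ p.1 * deriv χ p.2 := fun p =>
      deriv_const_mul _ ((χc.differentiable (by norm_num)) _)
    have d2 : ∀ p : ℝ × ℝ, deriv (fun y => ψ y * χ p.2) p.1 = deriv ψ p.1 * χ p.2 := fun p =>
      deriv_mul_const ((ψc.differentiable (by norm_num)) _) _
    simp only [d1, d2] at hφ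
    have I1 : Integrable (fun p : ℝ × ℝ => G1 p.1 p.2 * (ψ p.1 * deriv χ p.2)) := by
      refine Integrable.bdd_mul (c := C) (f := fun p : ℝ × ℝ => G1 p.1 p.2) ?_ hG1.aestronglyMeasurable
        (Eventually.of_forall fun p => hC1 _ _)
      exact ψi.mul_prod (dχc.integrable_of_hasCompactSupport χs.deriv)
    have I2 : Integrable (fun p : ℝ × ℝ => G2 p.1 p.2 * (deriv ψ p.1 * χ p.2)) := by
      refine Integrable.bdd_mul (c := C) (f := fun p : ℝ × ℝ => G2 p.1 p.2) ?_ hG2.aestronglyMeasurable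
        (Eventually.of_forall fun p => hC2 _ _)
      exact dψi.mul_prod (χc.continuous.integrable_of_hasCompactSupport χs)
    have e : ∫ p : ℝ × ℝ, (G1 p.1 p.2 * (ψ p.1 * deriv χ p.2) + G2 p.1 p.2 * (deriv ψ p.1 * χ p.2)) =
        ∫ t, ((∫ x, G1 x t * ψ x) * deriv χ t + (∫ x, G2 x t * deriv ψ x) * χ t) := by
      rw [Measure.volume_eq_prod, integral_prod_symm _ (by rw [← Measure.volume_eq_prod]; exact I1.add I2)]
      congr 1
      ext t
      rw [← integral_mul_const, ← integral_mul_const, ← integral_add ((iG1 t).mul_const _) ((iG2 t).mul_const _)]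
      congr 1
      ext x
      ring
    rw [e] at hφ
    exact hφ
  have A1 := hat_int_tendsto hx hc1 le_rfl hc1 zero_le_one hc0 (meas_sec hG1 t2) (fun x => hC1 x t2)
  have A2 := hat_int_tendsto hx hc1 le_rfl hc1 zero_le_one hc0 (meas_sec hG1 t1) (fun x => hC1 x t1)
  have A3 : Tendsto (fun n : ℕ => ∫ s in t1..t2, (∫ x, G2 x s * deriv (hat x1 1 x2 c2 n) x)) atTop
      (nhds (∫ s in t1..t2, (l1 s - l2 s))) := by
    apply intervalIntegral.tendsto_integral_filter_of_dominated_convergence (fun _ => 2 * C)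
    · refine Eventually.of_forall fun n => ?_
      have dψc : Continuous (deriv (hat x1 1 x2 c2 n)) := (hat_contDiff n).continuous_deriv (by norm_num)
      have : StronglyMeasurable (Function.uncurry fun x t => G2 x t * deriv (hat x1 1 x2 c2 n) x) :=
        (hG2.mul (dψc.measurable.comp measurable_fst)).stronglyMeasurable
      exact this.integral_prod_left.aestronglyMeasurable
    · exact Eventually.of_forall fun n => Eventually.of_forall fun s _ =>
        hat_deriv_bound (fun x => hC2 x s) (meas_sec hG2 s) n
    · exact intervalIntegrable_const
    · refine Eventually.of_forall fun s hs => ?_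
      rw [uIoc_of_le h2] at hs
      have hs0 : 0 < s := h1.trans_lt hs.1
      exact hat_deriv_tendsto (meas_sec hG2 s) (fun x => hC2 x s) (hl1 s hs0) (hl2 s hs0)
  exact le_of_tendsto_of_tendsto' (A1.sub A2) A3 key

/-! ### Traces and balance laws of solutions -/

theorem locInt_of_bdd {g : ℝ → ℝ} {C : ℝ} (hg : Measurable g) (hC : ∀ x, |g x| ≤ C) :
    LocallyIntegrable g := by
  intro x
  refine ⟨Icc (x - 1) (x + 1), Icc_mem_nhds (by linarith) (by linarith), ?_⟩
  exact Measure.integrableOn_of_bounded (M := C) (measure_Icc_lt_top.ne) hg.aestronglyMeasurable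
    (Eventually.of_forall hC)

theorem ivInt_of_bdd {g : ℝ → ℝ} {C : ℝ} (hg : Measurable g) (hC : ∀ x, |g x| ≤ C) (a b : ℝ) :
    IntervalIntegrable g volume a b := by
  have h := locInt_of_bdd hg hC
  exact (LocallyIntegrable.integrableOn_isCompact h isCompact_uIcc).intervalIntegrable

theorem ae_nonneg_of_int {g : ℝ → ℝ} {C : ℝ} (hg : Measurable g) (hC : ∀ x, |g x| ≤ C)
    (h : ∀ t1 t2, 0 ≤ t1 → t1 ≤ t2 → 0 ≤ ∫ s in t1..t2, g s) : ∀ᵐ t : ℝ, 0 < t → 0 ≤ g t := by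
  filter_upwards [LocallyIntegrable.ae_hasDerivAt_integral (locInt_of_bdd hg hC)] with t ht ht0
  have h2 := (ht 0).hasDerivWithinAt (s := Ici t)
  rw [hasDerivWithinAt_iff_tendsto_slope] at h2
  have h3 : Ici t \ {t} = Ioi t := by ext; simp [lt_iff_le_and_ne]
  rw [h3] at h2
  refine ge_of_tendsto h2 ?_
  filter_upwards [self_mem_nhdsWithin] with s hs
  have hs' : t < s := hs
  rw [slope_def_field]
  apply div_nonneg _ (by linarith)
  rw [intervalIntegral.integral_interval_sub_left (ivInt_of_bdd hg hC _ _) (ivInt_of_bdd hg hC _ _)]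
  exact h t s ht0.le hs'.le

theorem hasDeriv_left_int {g : ℝ → ℝ} {C l x c : ℝ} (hg : Measurable g) (hC : ∀ x, |g x| ≤ C)
    (hl : Tendsto g (nhdsWithin x (Iio x)) (nhds l)) :
    HasDerivWithinAt (fun y => ∫ z in c..y, g z) l (Iic x) x := by
  apply intervalIntegral.integral_hasDerivWithinAt_of_tendsto_ae_right (ivInt_of_bdd hg hC _ _)
    (s := Iic x) (t := Iic x)
  · exact hg.stronglyMeasurable.stronglyMeasurableAtFilter
  · refine hl.mono_left ?_
    rw [← Iio_union_right, nhdsWithin_union, inf_sup_right]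
    apply sup_le inf_le_left
    have : nhdsWithin x {x} ⊓ ae volume = ⊥ := by
      rw [nhdsWithin_singleton, ← le_bot_iff]
      intro s _
      rw [Filter.mem_inf_iff_superset]
      exact ⟨{x}, by simp, {x}ᶜ, by simp [mem_ae_iff], by simp⟩
    rw [this]; exact bot_le

theorem hasDeriv_right_int {g : ℝ → ℝ} {C l x c : ℝ} (hg : Measurable g) (hC : ∀ x, |g x| ≤ C)
    (hl : Tendsto g (nhdsWithin x (Ioi x)) (nhds l)) :
    HasDerivWithinAt (fun y => ∫ z in c..y, g z) l (Ici x) x := by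
  apply intervalIntegral.integral_hasDerivWithinAt_of_tendsto_ae_right (ivInt_of_bdd hg hC _ _)
    (s := Ici x) (t := Ioi x)
  · exact hg.stronglyMeasurable.stronglyMeasurableAtFilter
  · exact hl.mono_left inf_le_left

section sol
variable {fl fr : ℝ → ℝ} {A B : ℝ} {u0 : ℝ → ℝ}

def ABSol.uz (S : ABSol fl fr A B u0) (x t : ℝ) : ℝ := if 0 < t then S.um x t else 0
def ABSol.pz (S : ABSol fl fr A B u0) (x t : ℝ) : ℝ := if 0 < t then S.up x t else 0

theorem ABSol.uz_meas (S : ABSol fl fr A B u0) : Measurable (Function.uncurry S.uz) := by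
  refine measurable_of_tendsto_metrizable
    (f := fun (n : ℕ) (p : ℝ × ℝ) => if 0 < p.2 then S.u (p.1 + (-1) / ((n : ℝ) + 1)) p.2 else 0) ?_ ?_
  · intro n
    refine Measurable.ite (measurableSet_lt measurable_const measurable_snd) ?_ measurable_const
    exact S.meas.comp ((measurable_fst.add_const _).prodMk measurable_snd)
  · rw [tendsto_pi_nhds]
    rintro ⟨x, t⟩
    by_cases h : 0 < t
    · simp only [Function.uncurry, ABSol.uz, h, if_true]
      exact (S.um_spec x t h).comp (tendsto_left_pt (by norm_num))
    · simp [Function.uncurry, ABSol.uz, h]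

theorem ABSol.pz_meas (S : ABSol fl fr A B u0) : Measurable (Function.uncurry S.pz) := by
  refine measurable_of_tendsto_metrizable
    (f := fun (n : ℕ) (p : ℝ × ℝ) => if 0 < p.2 then S.u (p.1 + 1 / ((n : ℝ) + 1)) p.2 else 0) ?_ ?_
  · intro n
    refine Measurable.ite (measurableSet_lt measurable_const measurable_snd) ?_ measurable_const
    exact S.meas.comp ((measurable_fst.add_const _).prodMk measurable_snd)
  · rw [tendsto_pi_nhds]
    rintro ⟨x, t⟩
    by_cases h : 0 < t
    · simp only [Function.uncurry, ABSol.pz, h, if_true]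
      exact (S.up_spec x t h).comp (tendsto_right_pt (by norm_num))
    · simp [Function.uncurry, ABSol.pz, h]

theorem ABSol.bounds (S : ABSol fl fr A B u0) (hl : Continuous fl) (hr : Continuous fr) :
    ∃ M C : ℝ, 0 ≤ M ∧ (∀ x t, |S.u x t| ≤ M) ∧ (∀ x t, |S.uz x t| ≤ M) ∧ (∀ x t, |S.pz x t| ≤ M) ∧
      (∀ w, |w| ≤ M → |fl w| ≤ C) ∧ (∀ w, |w| ≤ M → |fr w| ≤ C) ∧ 0 ≤ C := by
  obtain ⟨M, hM⟩ := S.bdd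
  have hM0 : 0 ≤ M := (abs_nonneg _).trans (hM 0 0)
  obtain ⟨C1, h1⟩ := (isCompact_Icc (a := -M) (b := M)).exists_bound_of_continuousOn hl.continuousOn
  obtain ⟨C2, h2⟩ := (isCompact_Icc (a := -M) (b := M)).exists_bound_of_continuousOn hr.continuousOn
  refine ⟨M, max C1 C2, hM0, hM, ?_, ?_, ?_, ?_, ?_⟩
  · intro x t
    unfold ABSol.uz
    split_ifs with h
    · exact le_of_tendsto (S.um_spec x t h).abs (Eventually.of_forall fun y => hM y t)
    · simpa using hM0
  · intro x t
    unfold ABSol.pz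
    split_ifs with h
    · exact le_of_tendsto (S.up_spec x t h).abs (Eventually.of_forall fun y => hM y t)
    · simpa using hM0
  · intro w hw
    exact (h1 w (abs_le.1 hw)).trans (le_max_left _ _)
  · intro w hw
    exact (h2 w (abs_le.1 hw)).trans (le_max_right _ _)
  · refine (norm_nonneg _).trans ((h1 0 ?_).trans (le_max_left _ _))
    exact ⟨by linarith, hM0⟩

/-- left flux trace -/
def ABSol.phm (S : ABSol fl fr A B u0) (x t : ℝ) : ℝ := if x ≤ 0 then fl (S.uz x t) else fr (S.uz x t)

theorem ABSol.dflux_left (S : ABSol fl fr A B u0) (hl : Continuous fl) (hr : Continuous fr) {x s : ℝ}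
    (hs : 0 < s) :
    Tendsto (fun y => dflux fl fr y (S.u y s)) (nhdsWithin x (Iio x)) (nhds (S.phm x s)) := by
  have e : S.uz x s = S.um x s := if_pos hs
  unfold ABSol.phm
  rw [e]
  split_ifs with h
  · refine ((hl.tendsto _).comp (S.um_spec x s hs)).congr' ?_
    filter_upwards [self_mem_nhdsWithin] with y hy
    have : y < 0 := lt_of_lt_of_le hy h
    simp [dflux, this]
  · refine ((hr.tendsto _).comp (S.um_spec x s hs)).congr' ?_
    filter_upwards [nhdsWithin_le_nhds (Ioi_mem_nhds (not_le.1 h))] with y hy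
    have : ¬ y < 0 := not_lt.2 (le_of_lt hy)
    simp [dflux, this]

theorem dflux_meas (hl : Continuous fl) (hr : Continuous fr) {w : ℝ → ℝ → ℝ}
    (hw : Measurable (Function.uncurry w)) :
    Measurable (Function.uncurry fun x t => dflux fl fr x (w x t)) :=
  Measurable.ite (measurableSet_lt measurable_fst measurable_const) (hl.measurable.comp hw)
    (hr.measurable.comp hw)

theorem ABSol.balance (S : ABSol fl fr A B u0) (hl : Continuous fl) (hr : Continuous fr) {x1 x2 t1 t2 : ℝ}
    (hx : x1 ≤ x2) (h1 : 0 ≤ t1) (h2 : t1 ≤ t2) :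
    (∫ x in x1..x2, S.u x t2) - (∫ x in x1..x2, S.u x t1) = ∫ s in t1..t2, (S.phm x1 s - S.phm x2 s) := by
  obtain ⟨M, C, hM0, hM, -, -, hCl, hCr, hC0⟩ := S.bounds hl hr
  have hfl : ∀ x t, |dflux fl fr x (S.u x t)| ≤ C := by
    intro x t
    unfold dflux; split_ifs
    · exact hCl _ (hM x t)
    · exact hCr _ (hM x t)
  have hd := dflux_meas hl hr S.meas
  have hlim : ∀ x s, 0 < s → ∀ τ ∈ Ioo (0:ℝ) 1,
      Tendsto (fun n : ℕ => dflux fl fr (x + (τ - 1) / ((n : ℝ) + 1)) (S.u (x + (τ - 1) / ((n : ℝ) + 1)) s))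
        atTop (nhds (S.phm x s)) := fun x s hs τ hτ =>
    (S.dflux_left hl hr hs).comp (tendsto_left_pt (by linarith [hτ.2]))
  apply le_antisymm
  · refine box_ineq (u := S.u) (G1 := S.u) (G2 := fun x t => dflux fl fr x (S.u x t)) (C := max M C) (M := M)
      S.meas hd (fun x t => (hM x t).trans (le_max_left _ _)) (fun x t => (hfl x t).trans (le_max_right _ _))
      S.meas hM (fun x t s => le_rfl) S.timeCont hx zero_le_one le_rfl ?_ (fun s hs => hlim x1 s hs)
      (fun s hs => hlim x2 s hs) h1 h2
    intro φ a1 a2 a3 a4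
    exact (S.weak φ a1 a2 a4).ge
  · have := box_ineq (u := S.u) (G1 := fun x t => - S.u x t) (G2 := fun x t => - dflux fl fr x (S.u x t))
      (C := max M C) (M := M) (c2 := 1) (x1 := x1) (x2 := x2)
      (l1 := fun s => - S.phm x1 s) (l2 := fun s => - S.phm x2 s) (t1 := t1) (t2 := t2)
      S.meas.neg hd.neg (fun x t => by rw [abs_neg]; exact (hM x t).trans (le_max_left _ _))
      (fun x t => by rw [abs_neg]; exact (hfl x t).trans (le_max_right _ _))
      S.meas hM (fun x t s => by rw [← neg_add', abs_neg, ← sub_eq_add_neg]) S.timeCont hx zero_le_one le_rfl ?_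
      (fun s hs τ hτ => (hlim x1 s hs τ hτ).neg)
      (fun s hs τ hτ => (hlim x2 s hs τ hτ).neg) h1 h2
    · simp only [intervalIntegral.integral_neg] at this
      have e : ∫ s in t1..t2, (- S.phm x1 s - - S.phm x2 s) = - ∫ s in t1..t2, (S.phm x1 s - S.phm x2 s) := by
        rw [← intervalIntegral.integral_neg]; congr 1; ext s; ring
      rw [e] at this
      linarith
    intro φ a1 a2 a3 a4
    have := S.weak φ a1 a2 a4
    simp only [neg_mul, ← neg_add, integral_neg, this]
    simp

theorem ABSol.RH (S : ABSol fl fr A B u0) (hl : Continuous fl) (hr : Continuous fr) :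
    ∀ᵐ t : ℝ, 0 < t → fl (S.uz 0 t) = fr (S.pz 0 t) := by
  obtain ⟨M, C, hM0, hM, hMu, hMp, hCl, hCr, hC0⟩ := S.bounds hl hr
  have hfl : ∀ x t, |dflux fl fr x (S.u x t)| ≤ C := by
    intro x t
    unfold dflux; split_ifs
    · exact hCl _ (hM x t)
    · exact hCr _ (hM x t)
  have hd := dflux_meas hl hr S.meas
  have hlim1 : ∀ s, 0 < s → ∀ τ ∈ Ioo (0:ℝ) 1,
      Tendsto (fun n : ℕ => dflux fl fr (0 + (τ - 1) / ((n : ℝ) + 1)) (S.u (0 + (τ - 1) / ((n : ℝ) + 1)) s))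
        atTop (nhds (fl (S.uz 0 s))) := fun s hs τ hτ => by
    have := (S.dflux_left (x := 0) hl hr hs).comp (tendsto_left_pt (τ := τ - 1) (by linarith [hτ.2]))
    simpa [ABSol.phm, Function.comp_def] using this
  have hlim2 : ∀ s, 0 < s → ∀ τ ∈ Ioo (0:ℝ) 1,
      Tendsto (fun n : ℕ => dflux fl fr (0 + (τ - 0) / ((n : ℝ) + 1)) (S.u (0 + (τ - 0) / ((n : ℝ) + 1)) s))
        atTop (nhds (fr (S.pz 0 s))) := fun s hs τ hτ => by
    have e : S.pz 0 s = S.up 0 s := if_pos hs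
    have := ((hr.tendsto _).comp (S.up_spec 0 s hs)).comp (tendsto_right_pt (τ := τ - 0) (by linarith [hτ.1]))
    rw [e]
    refine this.congr fun n => ?_
    have h0 : ¬ (0 + (τ - 0) / ((n : ℝ) + 1) < 0) := by
      have : 0 < τ := hτ.1
      rw [not_lt, zero_add, sub_zero]; positivity
    simp only [Function.comp, dflux, if_neg h0]
  have gm : Measurable fun s => fl (S.uz 0 s) - fr (S.pz 0 s) :=
    (hl.measurable.comp (S.uz_meas.comp (measurable_const.prodMk measurable_id))).sub
      (hr.measurable.comp (S.pz_meas.comp (measurable_const.prodMk measurable_id)))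
  have gb : ∀ s, |fl (S.uz 0 s) - fr (S.pz 0 s)| ≤ 2 * C := fun s => by
    have := abs_sub (fl (S.uz 0 s)) (fr (S.pz 0 s))
    linarith [hCl _ (hMu 0 s), hCr _ (hMp 0 s)]
  have A1 := ae_nonneg_of_int gm gb (by
    intro t1 t2 h1 h2
    have := box_ineq (u := S.u) (G1 := S.u) (G2 := fun x t => dflux fl fr x (S.u x t)) (C := max M C) (M := M)
      S.meas hd (fun x t => (hM x t).trans (le_max_left _ _)) (fun x t => (hfl x t).trans (le_max_right _ _))
      S.meas hM (fun x t s => le_rfl) S.timeCont le_rfl le_rfl zero_le_one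
      (fun φ a1 a2 a3 a4 => (S.weak φ a1 a2 a4).ge) (fun s hs => hlim1 s hs)
      (fun s hs => hlim2 s hs) h1 h2
    simpa using this)
  have A2 := ae_nonneg_of_int (g := fun s => fr (S.pz 0 s) - fl (S.uz 0 s)) (by simpa [Pi.neg_def] using gm.neg)
    (fun s => by rw [abs_sub_comm]; exact gb s) (by
    intro t1 t2 h1 h2
    have := box_ineq (u := S.u) (G1 := fun x t => - S.u x t) (G2 := fun x t => - dflux fl fr x (S.u x t))
      (C := max M C) (M := M) (c2 := 0) (x1 := 0) (x2 := 0)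
      (l1 := fun s => - fl (S.uz 0 s)) (l2 := fun s => - fr (S.pz 0 s)) (t1 := t1) (t2 := t2)
      S.meas.neg hd.neg (fun x t => by rw [abs_neg]; exact (hM x t).trans (le_max_left _ _))
      (fun x t => by rw [abs_neg]; exact (hfl x t).trans (le_max_right _ _))
      S.meas hM (fun x t s => by rw [← neg_add', abs_neg, ← sub_eq_add_neg]) S.timeCont le_rfl le_rfl zero_le_one
      (by
        intro φ a1 a2 a3 a4
        have := S.weak φ a1 a2 a4
        simp only [neg_mul, ← neg_add, integral_neg, this]
        simp)
      (fun s hs τ hτ => (hlim1 s hs τ hτ).neg)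
      (fun s hs τ hτ => (hlim2 s hs τ hτ).neg) h1 h2
    have e : ∀ s, - fl (S.uz 0 s) - - fr (S.pz 0 s) = fr (S.pz 0 s) - fl (S.uz 0 s) := fun s => by ring
    simp only [e] at this
    simpa using this)
  filter_upwards [A1, A2] with t a1 a2 ht
  linarith [a1 ht, a2 ht]

theorem cont_sign_flux {f : ℝ → ℝ} (hf : Continuous f) (k : ℝ) :
    Continuous fun w => Real.sign (w - k) * (f w - f k) := by
  rw [continuous_iff_continuousAt]
  intro w
  rcases lt_trichotomy w k with h | h | h
  · have : ContinuousAt (fun w => (-1:ℝ) * (f w - f k)) w := by fun_prop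
    refine this.congr ?_
    filter_upwards [Iio_mem_nhds h] with y hy
    rw [Real.sign_of_neg (sub_neg.2 hy)]
  · subst h
    rw [ContinuousAt, sub_self (f w), mul_zero, tendsto_zero_iff_abs_tendsto_zero]
    have h0 : Tendsto (fun y => |f y - f w|) (nhds w) (nhds 0) := by
      have : Tendsto (fun y => |f y - f w|) (nhds w) (nhds |f w - f w|) := ContinuousAt.tendsto (by fun_prop)
      simpa using this
    refine squeeze_zero (fun _ => abs_nonneg _) (fun y => ?_) h0
    simp only [Function.comp, abs_mul]
    exact mul_le_of_le_one_left (abs_nonneg _) (abs_sign_le _)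
  · have : ContinuousAt (fun w => (1:ℝ) * (f w - f k)) w := by fun_prop
    refine this.congr ?_
    filter_upwards [Ioi_mem_nhds h] with y hy
    rw [Real.sign_of_pos (sub_pos.2 hy)]

theorem ABSol.IE (S : ABSol fl fr A B u0) (hl : Continuous fl) (hr : Continuous fr) :
    ∀ᵐ t : ℝ, 0 < t → 0 ≤ Real.sign (S.uz 0 t - A) * (fl (S.uz 0 t) - fl A) -
      Real.sign (S.pz 0 t - B) * (fr (S.pz 0 t) - fr B) := by
  obtain ⟨M, C, hM0, hM, hMu, hMp, hCl, hCr, hC0⟩ := S.bounds hl hr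
  have cl := cont_sign_flux hl A
  have cr := cont_sign_flux hr B
  set C' := C + |fl A| + |fr B| + |fl B| + |fr A| with hC'
  have aux : ∀ k y, |Real.sign k * y| ≤ |y| := fun k y => by
    rw [abs_mul]; exact mul_le_of_le_one_left (abs_nonneg _) (abs_sign_le _)
  have b1 : ∀ w, |w| ≤ M → |Real.sign (w - A) * (fl w - fl A)| ≤ C' := fun w hw => by
    have := aux (w - A) (fl w - fl A)
    have h2 := abs_sub (fl w) (fl A)
    have := abs_nonneg (fr B); have := abs_nonneg (fl B); have := abs_nonneg (fr A)
    linarith [hCl w hw]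
  have b2 : ∀ w, |w| ≤ M → |Real.sign (w - B) * (fr w - fr B)| ≤ C' := fun w hw => by
    have := aux (w - B) (fr w - fr B)
    have h2 := abs_sub (fr w) (fr B)
    have := abs_nonneg (fl A); have := abs_nonneg (fl B); have := abs_nonneg (fr A)
    linarith [hCr w hw]
  set G2 : ℝ → ℝ → ℝ := fun x t => Real.sign (S.u x t - cAB A B x) *
    (dflux fl fr x (S.u x t) - dflux fl fr x (cAB A B x)) with hG2
  have cm : Measurable (cAB A B) := Measurable.ite measurableSet_Iic measurable_const measurable_const
  have cm2 : Measurable (Function.uncurry fun (x t : ℝ) => cAB A B x) := cm.comp measurable_fst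
  have hd := dflux_meas hl hr S.meas
  have hd2 := dflux_meas hl hr cm2
  have G2m : Measurable (Function.uncurry G2) :=
    (measurable_sign.comp (S.meas.sub cm2)).mul (hd.sub hd2)
  have G1m : Measurable (Function.uncurry fun x t => |S.u x t - cAB A B x|) := (S.meas.sub cm2).norm
  have G2b : ∀ x t, |G2 x t| ≤ C' := fun x t => by
    refine (aux _ _).trans ((abs_sub _ _).trans ?_)
    have h1 : |dflux fl fr x (S.u x t)| ≤ C := by
      unfold dflux; split_ifs
      · exact hCl _ (hM x t)
      · exact hCr _ (hM x t)
    have n1 := abs_nonneg (fl A); have n2 := abs_nonneg (fl B); have n3 := abs_nonneg (fr A)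
    have n4 := abs_nonneg (fr B)
    have h2 : |dflux fl fr x (cAB A B x)| ≤ |fl A| + |fr B| + |fl B| + |fr A| := by
      unfold dflux cAB; split_ifs <;> linarith
    linarith
  have G1b : ∀ x t, |(|S.u x t - cAB A B x|)| ≤ M + |A| + |B| := fun x t => by
    rw [abs_abs]
    refine (abs_sub _ _).trans ?_
    have : |cAB A B x| ≤ |A| + |B| := by
      have n1 := abs_nonneg A; have n2 := abs_nonneg B
      unfold cAB; split_ifs <;> linarith
    linarith [hM x t]
  have hlim1 : ∀ s, 0 < s → ∀ τ ∈ Ioo (0:ℝ) 1,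
      Tendsto (fun n : ℕ => G2 (0 + (τ - 1) / ((n : ℝ) + 1)) s)
        atTop (nhds (Real.sign (S.uz 0 s - A) * (fl (S.uz 0 s) - fl A))) := fun s hs τ hτ => by
    have e : S.uz 0 s = S.um 0 s := if_pos hs
    have := ((cl.tendsto _).comp (S.um_spec 0 s hs)).comp (tendsto_left_pt (τ := τ - 1) (by linarith [hτ.2]))
    rw [e]
    refine this.congr fun n => ?_
    have h0 : (0 + (τ - 1) / ((n : ℝ) + 1) < 0) := by
      rw [zero_add]; exact div_neg_of_neg_of_pos (by linarith [hτ.2]) (by positivity)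
    simp only [Function.comp, hG2, dflux, cAB, if_pos h0, if_pos h0.le]
  have hlim2 : ∀ s, 0 < s → ∀ τ ∈ Ioo (0:ℝ) 1,
      Tendsto (fun n : ℕ => G2 (0 + (τ - 0) / ((n : ℝ) + 1)) s)
        atTop (nhds (Real.sign (S.pz 0 s - B) * (fr (S.pz 0 s) - fr B))) := fun s hs τ hτ => by
    have e : S.pz 0 s = S.up 0 s := if_pos hs
    have := ((cr.tendsto _).comp (S.up_spec 0 s hs)).comp (tendsto_right_pt (τ := τ - 0) (by linarith [hτ.1]))
    rw [e]
    refine this.congr fun n => ?_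
    have h0 : (0 < 0 + (τ - 0) / ((n : ℝ) + 1)) := by
      have : 0 < τ := hτ.1
      rw [zero_add, sub_zero]; positivity
    simp only [Function.comp, hG2, dflux, cAB, if_neg h0.not_gt, if_neg h0.not_ge]
  have gm : Measurable fun s => Real.sign (S.uz 0 s - A) * (fl (S.uz 0 s) - fl A) -
      Real.sign (S.pz 0 s - B) * (fr (S.pz 0 s) - fr B) :=
    (cl.measurable.comp (S.uz_meas.comp (measurable_const.prodMk measurable_id))).sub
      (cr.measurable.comp (S.pz_meas.comp (measurable_const.prodMk measurable_id)))
  refine ae_nonneg_of_int (C := 2 * C') gm (fun s => (abs_sub _ _).trans ?_) ?_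
  · linarith [b1 _ (hMu 0 s), b2 _ (hMp 0 s)]
  · intro t1 t2 h1 h2
    have := box_ineq (u := S.u) (G1 := fun x t => |S.u x t - cAB A B x|) (G2 := G2)
      (C := max (M + |A| + |B|) C') (M := M)
      G1m G2m (fun x t => (G1b x t).trans (le_max_left _ _)) (fun x t => (G2b x t).trans (le_max_right _ _))
      S.meas hM (fun x t s => by
        refine (abs_abs_sub_abs_le_abs_sub _ _).trans ?_
        rw [sub_sub_sub_cancel_right]) S.timeCont le_rfl le_rfl zero_le_one
      S.interfaceEntropy (fun s hs => hlim1 s hs)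
      (fun s hs => hlim2 s hs) h1 h2
    simpa using this

end sol

/-! ### The potential of a solution -/

theorem iface_alg {fl fr : ℝ → ℝ} {a A B w p : ℝ} (hl : UC fl a) (hr : UC fr a) (hAB : fl A = fr B)
    (hA : deriv fl A ≤ 0) (hB : 0 ≤ deriv fr B) (he : fl w = fr p)
    (h : 0 ≤ Real.sign (w - A) * (fl w - fl A) - Real.sign (p - B) * (fr p - fr B)) :
    fl A ≤ fl w ∧ (w ≤ gInv fl 0 → gInv fr 0 ≤ p → fl w = fl A) := by
  have h1 : fl A ≤ fl w := by
    by_contra hc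
    push Not at hc
    have e1 : A < w := by
      by_contra hw
      push Not at hw
      have := hl.tangent w A
      nlinarith
    have e2 : p < B := by
      by_contra hw
      push Not at hw
      have := hr.tangent p B
      nlinarith
    rw [Real.sign_of_pos (sub_pos.2 e1), Real.sign_of_neg (sub_neg.2 e2)] at h
    linarith
  refine ⟨h1, fun hw hp => ?_⟩
  by_contra hne
  have hlt : fl A < fl w := lt_of_le_of_ne h1 (Ne.symm hne)
  have d1 : deriv fl w ≤ 0 := by
    have := hl.strictMono.monotone hw
    rwa [hl.d_g] at this
  have d2 : 0 ≤ deriv fr p := by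
    have := hr.strictMono.monotone hp
    rwa [hr.d_g] at this
  have e1 : w < A := by
    by_contra hw'
    push Not at hw'
    have := hl.tangent A w
    nlinarith
  have e2 : B < p := by
    by_contra hw'
    push Not at hw'
    have := hr.tangent B p
    nlinarith
  rw [Real.sign_of_neg (sub_neg.2 e1), Real.sign_of_pos (sub_pos.2 e2)] at h
  linarith

structure Pot (fl fr : ℝ → ℝ) (γ : ℝ) (U : ℝ × ℝ → ℝ) (um up : ℝ → ℝ → ℝ) (F : ℝ → ℝ) : Prop where
  hpl : ∃ u, HP fl U u
  hpr : ∃ u, HP (fun x => fr (-x)) (fun p => U (-p.1, p.2)) u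
  dl : ∀ x t, 0 < t → HasDerivWithinAt (fun y => U (y, t)) (um x t) (Iic x) x
  dr : ∀ x t, 0 < t → HasDerivWithinAt (fun y => U (y, t)) (up x t) (Ici x) x
  Fm : Measurable F
  Fb : ∃ C, ∀ t, |F t| ≤ C
  int : ∀ t1 t2, 0 ≤ t1 → t1 ≤ t2 → U (0, t2) = U (0, t1) - ∫ t in t1..t2, F t
  ge : ∀ᵐ t : ℝ, 0 < t → γ ≤ F t
  tr : ∀ᵐ t : ℝ, 0 < t → F t = fl (um 0 t) ∧ F t = fr (up 0 t)
  crit : ∀ᵐ t : ℝ, 0 < t → um 0 t ≤ gInv fl 0 → gInv fr 0 ≤ up 0 t → F t = γ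

section sol
variable {fl fr : ℝ → ℝ} {A B : ℝ} {u0 : ℝ → ℝ}

def ABSol.U (S : ABSol fl fr A B u0) (p : ℝ × ℝ) : ℝ :=
  (∫ y in (0:ℝ)..p.1, S.u y (max p.2 0)) - ∫ s in (0:ℝ)..(max p.2 0), fl (S.uz 0 s)

theorem ABSol.phm_meas (S : ABSol fl fr A B u0) (hl : Continuous fl) (hr : Continuous fr) :
    Measurable (Function.uncurry S.phm) :=
  Measurable.ite (measurableSet_le measurable_fst measurable_const) (hl.measurable.comp S.uz_meas)
    (hr.measurable.comp S.uz_meas)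

theorem ABSol.U_t (S : ABSol fl fr A B u0) (hl : Continuous fl) (hr : Continuous fr) {x t1 t2 : ℝ}
    (h1 : 0 ≤ t1) (h2 : t1 ≤ t2) : S.U (x, t2) = S.U (x, t1) - ∫ s in t1..t2, S.phm x s := by
  obtain ⟨M, C, hM0, hM, hMu, hMp, hCl, hCr, hC0⟩ := S.bounds hl hr
  have pm : ∀ x, Measurable (S.phm x) := fun x =>
    (S.phm_meas hl hr).comp (measurable_const.prodMk measurable_id)
  have pb : ∀ x s, |S.phm x s| ≤ C := fun x s => by
    unfold ABSol.phm; split_ifs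
    · exact hCl _ (hMu _ _)
    · exact hCr _ (hMu _ _)
  have e0 : ∀ s, fl (S.uz 0 s) = S.phm 0 s := fun s => by simp [ABSol.phm]
  unfold ABSol.U
  simp only [e0, max_eq_left h1, max_eq_left (h1.trans h2)]
  have ii : ∀ x a b, IntervalIntegrable (S.phm x) volume a b := fun x => ivInt_of_bdd (pm x) (pb x)
  have eF := intervalIntegral.integral_interval_sub_left (ii 0 0 t2) (ii 0 0 t1)
  rcases le_total 0 x with hx | hx
  · have := S.balance hl hr hx h1 h2
    rw [intervalIntegral.integral_sub (ii _ _ _) (ii _ _ _)] at this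
    linarith
  · have := S.balance hl hr hx h1 h2
    rw [intervalIntegral.integral_sub (ii _ _ _) (ii _ _ _), intervalIntegral.integral_symm 0 x,
      intervalIntegral.integral_symm 0 x] at this
    linarith

theorem ABSol.U_lip (S : ABSol fl fr A B u0) (hl : Continuous fl) (hr : Continuous fr) :
    ∃ K, LipschitzWith K S.U := by
  obtain ⟨M, C, hM0, hM, hMu, hMp, hCl, hCr, hC0⟩ := S.bounds hl hr
  have pb : ∀ x s, |S.phm x s| ≤ C := fun x s => by
    unfold ABSol.phm; split_ifs
    · exact hCl _ (hMu _ _)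
    · exact hCr _ (hMu _ _)
  have hx : ∀ x1 x2 t, |S.U (x1, t) - S.U (x2, t)| ≤ M * |x1 - x2| := by
    intro x1 x2 t
    have e : S.U (x1, t) - S.U (x2, t) = ∫ y in x2..x1, S.u y (max t 0) := by
      unfold ABSol.U
      rw [sub_sub_sub_cancel_right, intervalIntegral.integral_interval_sub_left
        (ivInt_of_bdd (meas_sec S.meas _) (fun x => hM x _) _ _)
        (ivInt_of_bdd (meas_sec S.meas _) (fun x => hM x _) _ _)]
    rw [e, ← Real.norm_eq_abs]
    exact intervalIntegral.norm_integral_le_of_norm_le_const fun y _ => hM y _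
  have ht' : ∀ x t1 t2, 0 ≤ t1 → t1 ≤ t2 → |S.U (x, t2) - S.U (x, t1)| ≤ C * |t2 - t1| := by
    intro x t1 t2 h1 h2
    rw [S.U_t hl hr h1 h2, sub_sub_cancel_left, abs_neg, ← Real.norm_eq_abs]
    exact intervalIntegral.norm_integral_le_of_norm_le_const fun y _ => pb x y
  have emax : ∀ x t, S.U (x, t) = S.U (x, max t 0) := fun x t => by
    unfold ABSol.U; simp
  have ht : ∀ x t1 t2, |S.U (x, t1) - S.U (x, t2)| ≤ C * |t1 - t2| := by
    intro x t1 t2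
    rw [emax x t1, emax x t2]
    have h3 : |max t1 0 - max t2 0| ≤ |t1 - t2| := abs_max_sub_max_le_abs _ _ _
    refine le_trans ?_ (mul_le_mul_of_nonneg_left h3 hC0)
    rcases le_total (max t1 0) (max t2 0) with h | h
    · rw [abs_sub_comm, abs_sub_comm (max t1 0)]
      exact ht' _ _ _ (le_max_right _ _) h
    · exact ht' _ _ _ (le_max_right _ _) h
  refine ⟨⟨M + C, by positivity⟩, LipschitzWith.of_dist_le_mul ?_⟩
  rintro ⟨x1, t1⟩ ⟨x2, t2⟩
  rw [Real.dist_eq, Prod.dist_eq, Real.dist_eq, Real.dist_eq]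
  have a1 := hx x1 x2 t1
  have a2 := ht x2 t1 t2
  have a3 := abs_sub_le (S.U (x1, t1)) (S.U (x2, t1)) (S.U (x2, t2))
  have m1 := le_max_left |x1 - x2| |t1 - t2|
  have m2 := le_max_right |x1 - x2| |t1 - t2|
  have m3 := mul_le_mul_of_nonneg_left m1 hM0
  have m4 := mul_le_mul_of_nonneg_left m2 hC0
  change _ ≤ (M + C) * _
  linarith

theorem ABSol.U_dl (S : ABSol fl fr A B u0) {x t : ℝ} (ht : 0 < t) :
    HasDerivWithinAt (fun y => S.U (y, t)) (S.um x t) (Iic x) x := by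
  obtain ⟨M, hM⟩ := S.bdd
  unfold ABSol.U
  simp only [max_eq_left ht.le]
  exact (hasDeriv_left_int (meas_sec S.meas t) (fun x => hM x t) (S.um_spec x t ht)).sub_const _

theorem ABSol.U_dr (S : ABSol fl fr A B u0) {x t : ℝ} (ht : 0 < t) :
    HasDerivWithinAt (fun y => S.U (y, t)) (S.up x t) (Ici x) x := by
  obtain ⟨M, hM⟩ := S.bdd
  unfold ABSol.U
  simp only [max_eq_left ht.le]
  exact (hasDeriv_right_int (meas_sec S.meas t) (fun x => hM x t) (S.up_spec x t ht)).sub_const _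

theorem fderiv_sec1 {V : ℝ × ℝ → ℝ} {p : ℝ × ℝ} (h : DifferentiableAt ℝ V p) :
    HasDerivAt (fun y => V (y, p.2)) (fderiv ℝ V p (1, 0)) p.1 := by
  have h1 : HasDerivAt (fun y : ℝ => (y, p.2)) ((1:ℝ), (0:ℝ)) p.1 :=
    (hasDerivAt_id _).prodMk (hasDerivAt_const _ _)
  exact HasFDerivAt.comp_hasDerivAt (l := V) p.1 h.hasFDerivAt h1

theorem fderiv_sec2 {V : ℝ × ℝ → ℝ} {p : ℝ × ℝ} (h : DifferentiableAt ℝ V p) :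
    HasDerivAt (fun s => V (p.1, s)) (fderiv ℝ V p (0, 1)) p.2 := by
  have h1 : HasDerivAt (fun y : ℝ => (p.1, y)) ((0:ℝ), (1:ℝ)) p.2 :=
    (hasDerivAt_const _ _).prodMk (hasDerivAt_id _)
  exact HasFDerivAt.comp_hasDerivAt (l := V) p.2 h.hasFDerivAt h1

theorem ABSol.u_eq_uz (S : ABSol fl fr A B u0) : ∀ᵐ p : ℝ × ℝ, 0 < p.2 → S.u p.1 p.2 = S.uz p.1 p.2 := by
  obtain ⟨M, hM⟩ := S.bdd
  have hs : ∀ᵐ q : ℝ × ℝ, 0 < q.1 → S.u q.2 q.1 = S.uz q.2 q.1 := by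
    rw [Measure.volume_eq_prod, Measure.ae_prod_iff_ae_ae]
    · refine Eventually.of_forall fun t => ?_
      by_cases ht : 0 < t
      · filter_upwards [LocallyIntegrable.ae_hasDerivAt_integral
          (locInt_of_bdd (meas_sec S.meas t) (fun x => hM x t))] with x hx _
        have h1 := (hx 0).hasDerivWithinAt (s := Iic x)
        have h2 := hasDeriv_left_int (c := 0) (meas_sec S.meas t) (fun x => hM x t) (S.um_spec x t ht)
        have e : S.uz x t = S.um x t := if_pos ht
        simp only [e]
        exact (uniqueDiffWithinAt_Iic x).eq_deriv _ h1 h2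
      · exact Eventually.of_forall fun x h => absurd h ht
    · have : MeasurableSet {q : ℝ × ℝ | S.u q.2 q.1 = S.uz q.2 q.1} :=
        measurableSet_eq_fun (S.meas.comp measurable_swap) (S.uz_meas.comp measurable_swap)
      have h0 : MeasurableSet {q : ℝ × ℝ | 0 < q.1} := measurableSet_lt measurable_const measurable_fst
      have := h0.compl.union this
      convert this using 1
      ext q
      simp [imp_iff_not_or]
  have := (Measure.measurePreserving_swap (μ := (volume : Measure ℝ)) (ν := (volume : Measure ℝ))).quasiMeasurePreserving.ae
    (p := fun q : ℝ × ℝ => 0 < q.1 → S.u q.2 q.1 = S.uz q.2 q.1) hs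
  exact this

theorem ABSol.grad (S : ABSol fl fr A B u0) (hl : Continuous fl) (hr : Continuous fr) :
    ∀ᵐ p : ℝ × ℝ, 0 < p.2 → DifferentiableAt ℝ S.U p ∧ fderiv ℝ S.U p (1, 0) = S.u p.1 p.2 ∧
      (p.1 < 0 → fderiv ℝ S.U p (0, 1) = - fl (S.u p.1 p.2)) ∧
      (0 < p.1 → fderiv ℝ S.U p (0, 1) = - fr (S.u p.1 p.2)) := by
  obtain ⟨K, hK⟩ := S.U_lip hl hr
  obtain ⟨M, C, hM0, hM, hMu, hMp, hCl, hCr, hC0⟩ := S.bounds hl hr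
  have hdiff := hK.ae_differentiableAt (μ := (volume : Measure (ℝ × ℝ)))
  have pm : ∀ x, Measurable (S.phm x) := fun x =>
    (S.phm_meas hl hr).comp (measurable_const.prodMk measurable_id)
  have pb : ∀ x s, |S.phm x s| ≤ C := fun x s => by
    unfold ABSol.phm; split_ifs
    · exact hCl _ (hMu _ _)
    · exact hCr _ (hMu _ _)
  have ht : ∀ᵐ p : ℝ × ℝ, ¬ (DifferentiableAt ℝ S.U p ∧ 0 < p.2) ∨
      fderiv ℝ S.U p (0, 1) = - S.phm p.1 p.2 := by
    rw [Measure.volume_eq_prod, Measure.ae_prod_iff_ae_ae]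
    · refine Eventually.of_forall fun x => ?_
      filter_upwards [LocallyIntegrable.ae_hasDerivAt_integral (locInt_of_bdd (pm x) (pb x))] with t h
      rw [← imp_iff_not_or]
      rintro ⟨hd, ht0⟩
      have h1 := fderiv_sec2 hd
      have h2 : HasDerivAt (fun s => S.U (x, s)) (- S.phm x t) t := by
        have := ((h 0).const_sub (S.U (x, 0)))
        refine this.congr_of_eventuallyEq ?_
        filter_upwards [Ioi_mem_nhds ht0] with s hs
        exact S.U_t hl hr le_rfl (le_of_lt hs)
      exact h1.unique h2
    · refine MeasurableSet.union (MeasurableSet.compl ?_) ?_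
      · exact (measurableSet_of_differentiableAt ℝ S.U).inter (measurableSet_lt measurable_const measurable_snd)
      · exact measurableSet_eq_fun (measurable_fderiv_apply_const ℝ S.U _) (S.phm_meas hl hr).neg
  filter_upwards [hdiff, ht, S.u_eq_uz] with p h1 h2 h3 h4
  have h3 := h3 h4
  have hd := h2.resolve_left (not_not.2 ⟨h1, h4⟩)
  refine ⟨h1, ?_, ?_, ?_⟩
  · have := (uniqueDiffWithinAt_Iic p.1).eq_deriv _ (fderiv_sec1 h1).hasDerivWithinAt (S.U_dl h4)
    rw [this, h3]
    exact (if_pos h4).symm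
  · intro hp
    rw [hd, h3]; simp [ABSol.phm, hp.le]
  · intro hp
    rw [hd, h3]; simp [ABSol.phm, hp.not_ge]

theorem ABSol.hpl (S : ABSol fl fr A B u0) (hl : Continuous fl) (hr : Continuous fr) :
    HP fl S.U (fun p => S.u p.1 p.2) where
  lip := S.U_lip hl hr
  meas := S.meas
  bdd := by
    obtain ⟨M, hM⟩ := S.bdd
    exact ⟨M, fun p => hM _ _⟩
  grad := by
    filter_upwards [S.grad hl hr] with p h h1 h2
    exact ⟨(h h2).2.1, (h h2).2.2.1 h1⟩
  kru := by
    intro k φ h1 h2 h3 h4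
    have := S.kruzkov_l k (fun x t => φ (x, t)) h1 h2 (fun x t => h3 _) (fun x t h => h4 (x, t) h)
    have hd : Differentiable ℝ φ := h1.differentiable (by norm_num)
    have e1 : ∀ p : ℝ × ℝ, deriv (fun s => φ (p.1, s)) p.2 = fderiv ℝ φ p (0, 1) := fun p =>
      (fderiv_sec2 (hd p)).deriv
    have e2 : ∀ p : ℝ × ℝ, deriv (fun s => φ (s, p.2)) p.1 = fderiv ℝ φ p (1, 0) := fun p =>
      (fderiv_sec1 (hd p)).deriv
    simpa only [e1, e2] using this

def reflE : (ℝ × ℝ) ≃L[ℝ] (ℝ × ℝ) := (ContinuousLinearEquiv.neg ℝ).prodCongr (ContinuousLinearEquiv.refl ℝ ℝ)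

theorem reflE_apply (p : ℝ × ℝ) : reflE p = (-p.1, p.2) := rfl

theorem reflE_mp : MeasurePreserving reflE (volume : Measure (ℝ × ℝ)) volume :=
  (Measure.measurePreserving_neg (volume : Measure ℝ)).prod (MeasurePreserving.id volume)

theorem fderiv_refl (V : ℝ × ℝ → ℝ) (p w : ℝ × ℝ) :
    fderiv ℝ (fun p => V (-p.1, p.2)) p w = fderiv ℝ V (reflE p) (reflE w) := by
  have := reflE.comp_right_fderiv (f := V) (x := p)
  have e : (V ∘ reflE) = fun p => V (-p.1, p.2) := rfl
  rw [e] at this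
  rw [this]; rfl

theorem ABSol.hpr (S : ABSol fl fr A B u0) (hl : Continuous fl) (hr : Continuous fr) :
    HP (fun x => fr (-x)) (fun p => S.U (-p.1, p.2)) (fun p => - S.u (-p.1) p.2) where
  lip := by
    obtain ⟨K, hK⟩ := S.U_lip hl hr
    refine ⟨K, LipschitzWith.of_dist_le_mul fun p q => ?_⟩
    refine (hK.dist_le_mul _ _).trans (le_of_eq ?_)
    rw [Prod.dist_eq, Prod.dist_eq, dist_neg_neg]
  meas := (S.meas.comp reflE.continuous.measurable).neg
  bdd := by
    obtain ⟨M, hM⟩ := S.bdd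
    exact ⟨M, fun p => by rw [abs_neg]; exact hM _ _⟩
  grad := by
    filter_upwards [reflE_mp.quasiMeasurePreserving.ae (S.grad hl hr)] with p h h1 h2
    have h := h h2
    rw [fderiv_refl, fderiv_refl]
    have e1 : reflE (1, 0) = -((1:ℝ), (0:ℝ)) := by simp [reflE_apply]
    have e2 : reflE (0, 1) = ((0:ℝ), (1:ℝ)) := by simp [reflE_apply]
    rw [e1, e2, map_neg, h.2.1, h.2.2.2 (by simp only [reflE_apply]; linarith)]
    simp [reflE_apply]
  kru := by
    intro k φ h1 h2 h3 h4
    have hd : Differentiable ℝ φ := h1.differentiable (by norm_num)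
    have c1 : ContDiff ℝ 1 (fun p : ℝ × ℝ => φ (-p.1, p.2)) := h1.comp reflE.contDiff
    have hd' : Differentiable ℝ (fun p : ℝ × ℝ => φ (-p.1, p.2)) := c1.differentiable (by norm_num)
    have := S.kruzkov_r (-k) (fun x t => φ (-x, t)) c1
      (h2.comp_homeomorph reflE.toHomeomorph) (fun x t => h3 _)
      (fun x t h => h4 (-x, t) (h.imp (fun h => by simpa using h) id))
    have e1 : ∀ p : ℝ × ℝ, deriv (fun s => φ (-p.1, s)) p.2 = fderiv ℝ φ (reflE p) (0, 1) := fun p => by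
      rw [(fderiv_sec2 (hd' p)).deriv, fderiv_refl]; simp [reflE_apply]
    have e2 : ∀ p : ℝ × ℝ, deriv (fun s => φ (-s, p.2)) p.1 = - fderiv ℝ φ (reflE p) (1, 0) := fun p => by
      rw [(fderiv_sec1 (hd' p)).deriv, fderiv_refl, ← map_neg]; simp [reflE_apply]
    simp only [e1, e2] at this
    rw [← reflE_mp.integral_comp reflE.toHomeomorph.measurableEmbedding]
    refine this.trans (le_of_eq ?_)
    congr 1
    ext p
    simp only [reflE_apply, neg_neg]
    have a1 : |S.u p.1 p.2 - -k| = |- S.u p.1 p.2 - k| := by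
      rw [← abs_neg]; congr 1; ring
    have a2 : Real.sign (- S.u p.1 p.2 - k) = - Real.sign (S.u p.1 p.2 - -k) := by
      rw [← Real.sign_neg]; congr 1; ring
    rw [a1, a2]; ring

theorem ABSol.pot {a : ℝ} (S : ABSol fl fr A B u0) (hfl : UC fl a) (hfr : UC fr a) (hAB : fl A = fr B)
    (hA : deriv fl A ≤ 0) (hB : 0 ≤ deriv fr B) :
    Pot fl fr (fl A) S.U S.um S.up (fun s => fl (S.uz 0 s)) := by
  have hl := hfl.cont
  have hr := hfr.cont
  obtain ⟨M, C, hM0, hM, hMu, hMp, hCl, hCr, hC0⟩ := S.bounds hl hr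
  have base : ∀ᵐ t : ℝ, 0 < t → fl (S.um 0 t) = fr (S.up 0 t) ∧ fl A ≤ fl (S.um 0 t) ∧
      (S.um 0 t ≤ gInv fl 0 → gInv fr 0 ≤ S.up 0 t → fl (S.um 0 t) = fl A) := by
    filter_upwards [S.RH hl hr, S.IE hl hr] with t h1 h2 ht
    have e1 : S.uz 0 t = S.um 0 t := if_pos ht
    have e2 : S.pz 0 t = S.up 0 t := if_pos ht
    rw [e1, e2] at h1 h2
    exact ⟨h1 ht, iface_alg hfl hfr hAB hA hB (h1 ht) (h2 ht)⟩
  refine ⟨⟨_, S.hpl hl hr⟩, ⟨_, S.hpr hl hr⟩, fun x t => S.U_dl, fun x t => S.U_dr,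
    hl.measurable.comp (S.uz_meas.comp (measurable_const.prodMk measurable_id)),
    ⟨C, fun t => hCl _ (hMu _ _)⟩, ?_, ?_, ?_, ?_⟩
  · intro t1 t2 h1 h2
    have := S.U_t hl hr (x := 0) h1 h2
    simpa [ABSol.phm] using this
  · filter_upwards [base] with t h ht
    have e1 : S.uz 0 t = S.um 0 t := if_pos ht
    rw [e1]; exact (h ht).2.1
  · filter_upwards [base] with t h ht
    have e1 : S.uz 0 t = S.um 0 t := if_pos ht
    rw [e1]; exact ⟨rfl, (h ht).1⟩
  · filter_upwards [base] with t h ht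
    have e1 : S.uz 0 t = S.um 0 t := if_pos ht
    rw [e1]; exact (h ht).2.2

end sol

/-! ### Paths and costs -/

def okseg (x1 t1 x2 t2 : ℝ) : Prop :=
  t1 ≤ t2 ∧ (t1 = t2 → x1 = x2) ∧ ((x1 ≤ 0 ∧ x2 ≤ 0) ∨ (0 ≤ x1 ∧ 0 ≤ x2))

def kap (Ll Lr : ℝ → ℝ) (γ x1 t1 x2 t2 : ℝ) : ℝ :=
  (t2 - t1) * (if x1 < 0 ∨ x2 < 0 then Ll ((x2 - x1) / (t2 - t1)) else
    if 0 < x1 ∨ 0 < x2 then Lr ((x2 - x1) / (t2 - t1)) else -γ)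

theorem kap_l {Ll Lr : ℝ → ℝ} {γ x1 t1 x2 t2 : ℝ} (h : x1 < 0 ∨ x2 < 0) :
    kap Ll Lr γ x1 t1 x2 t2 = (t2 - t1) * Ll ((x2 - x1) / (t2 - t1)) := by
  unfold kap; rw [if_pos h]

theorem kap_r {Ll Lr : ℝ → ℝ} {γ x1 t1 x2 t2 : ℝ} (h1 : 0 ≤ x1) (h2 : 0 ≤ x2) (h : 0 < x1 ∨ 0 < x2) :
    kap Ll Lr γ x1 t1 x2 t2 = (t2 - t1) * Lr ((x2 - x1) / (t2 - t1)) := by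
  unfold kap; rw [if_neg (by push Not; exact ⟨h1, h2⟩), if_pos h]

theorem kap_0 {Ll Lr : ℝ → ℝ} {γ t1 t2 : ℝ} : kap Ll Lr γ 0 t1 0 t2 = (t2 - t1) * (-γ) := by
  unfold kap; simp

theorem kap_same {Ll Lr : ℝ → ℝ} {γ t x1 x2 : ℝ} : kap Ll Lr γ x1 t x2 t = 0 := by
  unfold kap; simp

theorem okseg_refl (x t : ℝ) : okseg x t x t :=
  ⟨le_rfl, fun _ => rfl, (le_total x 0).imp (fun h => ⟨h, h⟩) (fun h => ⟨h, h⟩)⟩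

theorem okseg_rev {x1 t1 x2 t2 : ℝ} (T : ℝ) (h : okseg x1 t1 x2 t2) :
    okseg (-x2) (T - t2) (-x1) (T - t1) := by
  refine ⟨by linarith [h.1], fun e => by rw [h.2.1 (by linarith)], ?_⟩
  rcases h.2.2 with ⟨a, b⟩ | ⟨a, b⟩
  · right; constructor <;> linarith
  · left; constructor <;> linarith

theorem kap_rev {x1 t1 x2 t2 : ℝ} (T : ℝ) (Ll Lr : ℝ → ℝ) (γ : ℝ) (h : okseg x1 t1 x2 t2) :
    kap Lr Ll γ (-x2) (T - t2) (-x1) (T - t1) = kap Ll Lr γ x1 t1 x2 t2 := by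
  have e1 : T - t1 - (T - t2) = t2 - t1 := by ring
  have e2 : -x1 - -x2 = x2 - x1 := by ring
  unfold kap
  rw [e1, e2]
  simp only [Left.neg_neg_iff, Left.neg_pos_iff]
  rcases h.2.2 with ⟨a, b⟩ | ⟨a, b⟩
  · by_cases hc : x1 < 0 ∨ x2 < 0
    · have h1 : ¬ (0 < x2 ∨ 0 < x1) := by push Not; exact ⟨b, a⟩
      rw [if_pos hc, if_neg h1, if_pos hc.symm]
    · have h1 : ¬ (0 < x2 ∨ 0 < x1) := by push Not; exact ⟨b, a⟩
      simp only [if_neg hc, if_neg h1, if_neg (fun h => hc (Or.symm h)), if_neg (fun h => h1 (Or.symm h))]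
  · have h1 : ¬ (x1 < 0 ∨ x2 < 0) := by push Not; exact ⟨a, b⟩
    rw [if_neg h1]
    by_cases hc : 0 < x1 ∨ 0 < x2
    · rw [if_pos hc, if_pos hc.symm]
    · rw [if_neg hc, if_neg (fun h => hc h.symm), if_neg (fun h => h1 h.symm)]

section pot
variable {fl fr : ℝ → ℝ} {a γ : ℝ} {U : ℝ × ℝ → ℝ} {um up : ℝ → ℝ → ℝ} {F : ℝ → ℝ}

theorem Pot.Fi (P : Pot fl fr γ U um up F) (a b : ℝ) : IntervalIntegrable F volume a b := by
  obtain ⟨C, hC⟩ := P.Fb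
  exact ivInt_of_bdd P.Fm hC a b

theorem Pot.up_l (P : Pot fl fr γ U um up F) (hl : UC fl a) {x1 t1 x2 t2 : ℝ}
    (h1 : x1 ≤ 0) (h2 : x2 ≤ 0) (ht1 : 0 ≤ t1) (ht : t1 < t2) :
    U (x2, t2) ≤ U (x1, t1) + (t2 - t1) * Leg fl ((x2 - x1) / (t2 - t1)) := by
  obtain ⟨u, H⟩ := P.hpl
  exact H.upper hl h1 h2 ht1 ht

theorem Pot.up_r (P : Pot fl fr γ U um up F) (hr : UC fr a) {x1 t1 x2 t2 : ℝ}
    (h1 : 0 ≤ x1) (h2 : 0 ≤ x2) (ht1 : 0 ≤ t1) (ht : t1 < t2) :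
    U (x2, t2) ≤ U (x1, t1) + (t2 - t1) * Leg fr ((x2 - x1) / (t2 - t1)) := by
  obtain ⟨u, H⟩ := P.hpr
  have := H.upper hr.neg (neg_nonpos.2 h1) (neg_nonpos.2 h2) ht1 ht
  rw [hr.leg_neg] at this
  simp only [neg_neg] at this
  rwa [← neg_div, show -(-x2 - -x1) = x2 - x1 by ring] at this

theorem Pot.ph1_r (P : Pot fl fr γ U um up F) (hr : UC fr a) {y t : ℝ} (ht : 0 < t) (hy : 0 < y) :
    (∃ x, 0 ≤ x ∧ U (y, t) = U (x, 0) + t * Leg fr ((y - x) / t)) ∨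
    ∃ s, 0 < s ∧ s < t ∧ U (y, t) = U (0, s) + (t - s) * Leg fr ((y - 0) / (t - s)) := by
  obtain ⟨u, H⟩ := P.hpr
  rcases H.phase1 hr.neg ht (y := -y) (by linarith) with ⟨x, hx, h⟩ | ⟨s, h1, h2, h⟩
  · left
    refine ⟨-x, by linarith, ?_⟩
    rw [hr.leg_neg] at h
    simp only [neg_neg] at h
    rwa [← neg_div, show -(-y - x) = y - -x by ring] at h
  · right
    refine ⟨s, h1, h2, ?_⟩
    rw [hr.leg_neg] at h
    simp only [neg_neg, neg_zero] at h
    rwa [← neg_div, show -(-y - 0) = y - 0 by ring] at h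

theorem Pot.ph2_r (P : Pot fl fr γ U um up F) (hr : UC fr a) {r : ℝ} (h0 : 0 < r) :
    (∃ x, 0 ≤ x ∧ U (0, r) = U (x, 0) + r * Leg fr ((0 - x) / r)) ∨
    ∃ δ > 0, δ ≤ r ∧ ∀ s, r - δ < s → s < r → gInv fr 0 ≤ up 0 s := by
  obtain ⟨u, H⟩ := P.hpr
  rcases H.phase2 hr.neg h0 with ⟨x, hx, h⟩ | ⟨δ, h1, h2, h⟩
  · left
    refine ⟨-x, by linarith, ?_⟩
    rw [hr.leg_neg] at h
    simp only [neg_zero] at h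
    rwa [← neg_div, show -(0 - x) = 0 - -x by ring] at h
  · right
    refine ⟨δ, h1, h2, fun s h3 h4 => ?_⟩
    have hd : HasDerivWithinAt (fun x => U (-x, s)) (-(up 0 s)) (Iic 0) 0 := by
      have h5 := P.dr 0 s (by linarith)
      have h6 : HasDerivWithinAt (fun x : ℝ => -x) (-1) (Iic 0) 0 := (hasDerivAt_neg 0).hasDerivWithinAt
      have := HasDerivWithinAt.comp (h₂ := fun y => U (y, s)) (h := fun x : ℝ => -x) (s' := Ici 0) (0:ℝ)
        (by simpa using h5) h6 (fun x hx => by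
          simp only [mem_Ici, mem_Iic] at *; linarith)
      simpa [Function.comp_def] using this
    have := h s h3 h4 _ hd
    rw [hr.g_neg] at this
    simp only [neg_zero] at this
    linarith

theorem Pot.up_0 (P : Pot fl fr γ U um up F) {t1 t2 : ℝ} (h1 : 0 ≤ t1) (h2 : t1 ≤ t2) :
    U (0, t2) ≤ U (0, t1) + (t2 - t1) * (-γ) := by
  rw [P.int t1 t2 h1 h2]
  have : ∫ t in t1..t2, γ ≤ ∫ t in t1..t2, F t := by
    rw [intervalIntegral.integral_of_le h2, intervalIntegral.integral_of_le h2]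
    refine setIntegral_mono_on_ae (integrableOn_const (measure_Ioc_lt_top.ne)) (P.Fi t1 t2).1 measurableSet_Ioc ?_
    filter_upwards [P.ge] with t ht hm
    exact ht (h1.trans_lt hm.1)
  rw [intervalIntegral.integral_const, smul_eq_mul] at this
  linarith

theorem Pot.upSeg (P : Pot fl fr γ U um up F) (hl : UC fl a) (hr : UC fr a) {x1 t1 x2 t2 : ℝ}
    (ht1 : 0 ≤ t1) (h : okseg x1 t1 x2 t2) :
    U (x2, t2) ≤ U (x1, t1) + kap (Leg fl) (Leg fr) γ x1 t1 x2 t2 := by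
  rcases h.1.eq_or_lt with he | hlt
  · rw [h.2.1 he, he, kap_same, add_zero]
  · by_cases hc : x1 < 0 ∨ x2 < 0
    · rw [kap_l hc]
      have : x1 ≤ 0 ∧ x2 ≤ 0 := by
        rcases h.2.2 with h' | h'
        · exact h'
        · exfalso; rcases hc with hc | hc <;> linarith [h'.1, h'.2]
      exact P.up_l hl this.1 this.2 ht1 hlt
    · push Not at hc
      by_cases hc' : 0 < x1 ∨ 0 < x2
      · rw [kap_r hc.1 hc.2 hc']
        exact P.up_r hr hc.1 hc.2 ht1 hlt
      · push Not at hc'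
        have e1 : x1 = 0 := le_antisymm hc'.1 hc.1
        have e2 : x2 = 0 := le_antisymm hc'.2 hc.2
        rw [e1, e2, kap_0]
        exact P.up_0 ht1 hlt.le

theorem Pot.contU (P : Pot fl fr γ U um up F) : Continuous U := by
  obtain ⟨u, H⟩ := P.hpl
  exact H.contU

theorem Pot.iface (P : Pot fl fr γ U um up F) (hl : UC fl a) (hr : UC fr a) (gl : -γ ≤ Leg fl 0)
    (gr : -γ ≤ Leg fr 0) {t : ℝ} (ht : 0 ≤ t) :
    ∃ r x, 0 ≤ r ∧ r ≤ t ∧ okseg x 0 0 r ∧ U (0, t) = U (0, r) + kap (Leg fl) (Leg fr) γ 0 r 0 t ∧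
      U (0, r) = U (x, 0) + kap (Leg fl) (Leg fr) γ x 0 0 r := by
  set R := {r | U (0, t) = U (0, r) + (t - r) * (-γ)} ∩ Icc 0 t with hR
  have hRc : IsCompact R := by
    refine isCompact_Icc.inter_left (isClosed_eq continuous_const ?_)
    have := P.contU
    fun_prop
  have hne : R.Nonempty := ⟨t, by simp [hR, ht]⟩
  obtain ⟨r, ⟨hr1, hr2⟩, hmin⟩ := hRc.exists_isLeast hne
  have hr1 : U (0, t) = U (0, r) + (t - r) * (-γ) := hr1
  have hnot : ∀ s, 0 ≤ s → s < r → U (0, r) ≠ U (0, s) + (r - s) * (-γ) := by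
    intro s h0 hs he
    have : s ∈ R := ⟨by change U (0, t) = U (0, s) + (t - s) * (-γ); rw [hr1, he]; ring, h0, hs.le.trans hr2.2⟩
    exact absurd (hmin this) (not_le.2 hs)
  rcases hr2.1.eq_or_lt with h0 | h0
  · refine ⟨0, 0, le_rfl, ht, okseg_refl _ _, ?_, by rw [kap_same, add_zero]⟩
    rw [← h0] at hr1; rw [kap_0]; exact hr1
  · have hno0 : U (0, r) < U (0, 0) + r * (-γ) := by
      have h1 := P.up_0 le_rfl h0.le
      have h2 := hnot 0 le_rfl h0
      rw [sub_zero] at h1 h2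
      exact lt_of_le_of_ne h1 h2
    obtain ⟨u, H⟩ := P.hpl
    rcases H.phase2 hl h0 with ⟨x, hx, h⟩ | ⟨δ1, d1, d1', h1⟩
    · rcases hx.eq_or_lt with hx0 | hx0
      · exfalso
        rw [hx0] at h
        simp only [sub_self, zero_div] at h
        nlinarith
      · refine ⟨r, x, hr2.1, hr2.2, ⟨hr2.1, fun e => absurd e h0.ne, Or.inl ⟨hx, le_rfl⟩⟩, ?_, ?_⟩
        · rw [kap_0]; exact hr1
        · rw [kap_l (Or.inl hx0), sub_zero]; exact h
    · rcases P.ph2_r hr h0 with ⟨x, hx, h⟩ | ⟨δ2, d2, d2', h2⟩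
      · rcases hx.eq_or_lt with hx0 | hx0
        · exfalso
          rw [← hx0] at h
          simp only [sub_self, zero_div] at h
          nlinarith
        · refine ⟨r, x, hr2.1, hr2.2, ⟨hr2.1, fun e => absurd e h0.ne, Or.inr ⟨hx, le_rfl⟩⟩, ?_, ?_⟩
          · rw [kap_0]; exact hr1
          · rw [kap_r hx le_rfl (Or.inl hx0), sub_zero]; exact h
      · exfalso
        have hm1 := min_le_left δ1 δ2
        have hm2 := min_le_right δ1 δ2
        have hm3 : 0 < min δ1 δ2 := lt_min d1 d2
        set δ := min δ1 δ2
        have hs0 : 0 ≤ r - δ / 2 := by linarith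
        apply hnot (r - δ / 2) hs0 (by linarith)
        rw [P.int (r - δ / 2) r hs0 (by linarith)]
        have : ∫ t in (r - δ / 2)..r, F t = ∫ t in (r - δ / 2)..r, γ := by
          apply intervalIntegral.integral_congr_ae
          rw [uIoc_of_le (by linarith)]
          filter_upwards [P.crit, Measure.ae_ne volume r] with s hs hne hm
          have hsr : s < r := lt_of_le_of_ne hm.2 hne
          have hs0' : 0 < s := by linarith [hm.1]
          exact hs hs0' (h1 s (by linarith [hm.1]) hsr _ (P.dl 0 s hs0')) (h2 s (by linarith [hm.1]) hsr)
        rw [this, intervalIntegral.integral_const, smul_eq_mul]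
        ring

def okpath (T x0 x1 t1 x2 t2 y : ℝ) : Prop := okseg x0 0 x1 t1 ∧ okseg x1 t1 x2 t2 ∧ okseg x2 t2 y T

def pcost (Ll Lr : ℝ → ℝ) (γ T x0 x1 t1 x2 t2 y : ℝ) : ℝ :=
  kap Ll Lr γ x0 0 x1 t1 + kap Ll Lr γ x1 t1 x2 t2 + kap Ll Lr γ x2 t2 y T

theorem okpath_rev {T x0 x1 t1 x2 t2 y : ℝ} (h : okpath T x0 x1 t1 x2 t2 y) :
    okpath T (-y) (-x2) (T - t2) (-x1) (T - t1) (-x0) := by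
  refine ⟨?_, okseg_rev T h.2.1, ?_⟩
  · have := okseg_rev T h.2.2; rwa [sub_self] at this
  · have := okseg_rev T h.1; rwa [sub_zero] at this

theorem pcost_rev {T x0 x1 t1 x2 t2 y : ℝ} (Ll Lr : ℝ → ℝ) (γ : ℝ) (h : okpath T x0 x1 t1 x2 t2 y) :
    pcost Lr Ll γ T (-y) (-x2) (T - t2) (-x1) (T - t1) (-x0) = pcost Ll Lr γ T x0 x1 t1 x2 t2 y := by
  have h1 := kap_rev T Ll Lr γ h.1
  have h2 := kap_rev T Ll Lr γ h.2.1
  have h3 := kap_rev T Ll Lr γ h.2.2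
  rw [sub_zero] at h1
  rw [sub_self] at h3
  unfold pcost
  rw [h1, h2, h3]; ring

theorem Pot.path_up (P : Pot fl fr γ U um up F) (hl : UC fl a) (hr : UC fr a) {T x0 x1 t1 x2 t2 y : ℝ}
    (h : okpath T x0 x1 t1 x2 t2 y) :
    U (y, T) ≤ U (x0, 0) + pcost (Leg fl) (Leg fr) γ T x0 x1 t1 x2 t2 y := by
  have h1 := P.upSeg hl hr le_rfl h.1
  have h2 := P.upSeg hl hr h.1.1 h.2.1
  have h3 := P.upSeg hl hr (h.1.1.trans h.2.1.1) h.2.2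
  unfold pcost; linarith

theorem Pot.path_ex (P : Pot fl fr γ U um up F) (hl : UC fl a) (hr : UC fr a) (gl : -γ ≤ Leg fl 0)
    (gr : -γ ≤ Leg fr 0) {T : ℝ} (hT : 0 < T) (y : ℝ) :
    ∃ x0 x1 t1 x2 t2, okpath T x0 x1 t1 x2 t2 y ∧
      U (y, T) = U (x0, 0) + pcost (Leg fl) (Leg fr) γ T x0 x1 t1 x2 t2 y := by
  rcases lt_trichotomy y 0 with hy | hy | hy
  · obtain ⟨u, H⟩ := P.hpl
    rcases H.phase1 hl hT hy with ⟨x, hx, h⟩ | ⟨s, hs1, hs2, h⟩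
    · refine ⟨x, y, T, y, T, ⟨⟨hT.le, fun e => absurd e hT.ne, Or.inl ⟨hx, hy.le⟩⟩, okseg_refl _ _,
        okseg_refl _ _⟩, ?_⟩
      unfold pcost
      rw [kap_same, kap_l (Or.inr hy), h]
      simp
    · obtain ⟨r, x, h0, h1, h2, h3, h4⟩ := P.iface hl hr gl gr hs1.le
      refine ⟨x, 0, r, 0, s, ⟨h2, ⟨h1, fun _ => rfl, Or.inl ⟨le_rfl, le_rfl⟩⟩,
        ⟨hs2.le, fun e => absurd e hs2.ne, Or.inl ⟨le_rfl, hy.le⟩⟩⟩, ?_⟩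
      unfold pcost
      rw [kap_l (x2 := y) (Or.inr hy), h, h3, h4]; ring
  · subst hy
    obtain ⟨r, x, h0, h1, h2, h3, h4⟩ := P.iface hl hr gl gr hT.le
    refine ⟨x, 0, r, 0, T, ⟨h2, ⟨h1, fun _ => rfl, Or.inl ⟨le_rfl, le_rfl⟩⟩, okseg_refl _ _⟩, ?_⟩
    unfold pcost
    rw [kap_same, h3, h4]; ring
  · rcases P.ph1_r hr hT hy with ⟨x, hx, h⟩ | ⟨s, hs1, hs2, h⟩
    · refine ⟨x, y, T, y, T, ⟨⟨hT.le, fun e => absurd e hT.ne, Or.inr ⟨hx, hy.le⟩⟩, okseg_refl _ _,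
        okseg_refl _ _⟩, ?_⟩
      unfold pcost
      rw [kap_same, kap_r hx hy.le (Or.inr hy), h]
      simp
    · obtain ⟨r, x, h0, h1, h2, h3, h4⟩ := P.iface hl hr gl gr hs1.le
      refine ⟨x, 0, r, 0, s, ⟨h2, ⟨h1, fun _ => rfl, Or.inl ⟨le_rfl, le_rfl⟩⟩,
        ⟨hs2.le, fun e => absurd e hs2.ne, Or.inr ⟨le_rfl, hy.le⟩⟩⟩, ?_⟩
      unfold pcost
      rw [kap_r (x2 := y) le_rfl hy.le (Or.inr hy), h, h3, h4]; ring

end pot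

/-! ### Polygons are characteristics -/

section gic
variable {fl fr : ℝ → ℝ} {a γ : ℝ} {U : ℝ × ℝ → ℝ} {um up : ℝ → ℝ → ℝ} {F : ℝ → ℝ}

theorem Pot.seg_l (P : Pot fl fr γ U um up F) (hl : UC fl a) {x1 t1 x2 t2 : ℝ}
    (h1 : x1 ≤ 0) (h2 : x2 ≤ 0) (ht1 : 0 ≤ t1)
    (hex : U (x2, t2) = U (x1, t1) + (t2 - t1) * Leg fl ((x2 - x1) / (t2 - t1))) {τ z : ℝ} (h3 : t1 < τ)
    (h4 : τ < t2) (hz : z = x1 + (x2 - x1) / (t2 - t1) * (τ - t1)) (hz0 : z < 0) :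
    deriv fl (um z τ) = (x2 - x1) / (t2 - t1) ∧ deriv fl (up z τ) = (x2 - x1) / (t2 - t1) := by
  obtain ⟨u, H⟩ := P.hpl
  have h := H.segment hl h1 h2 ht1 hex h3 h4 (by rw [← hz]; exact hz0)
  rw [← hz] at h
  have ht : 0 < τ := by linarith
  have e1 := (uniqueDiffWithinAt_Iic z).eq_deriv _ h.hasDerivWithinAt (P.dl z τ ht)
  have e2 := (uniqueDiffWithinAt_Ici z).eq_deriv _ h.hasDerivWithinAt (P.dr z τ ht)
  rw [← e1, ← e2, hl.d_g]; exact ⟨rfl, rfl⟩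

theorem Pot.seg_r (P : Pot fl fr γ U um up F) (hr : UC fr a) {x1 t1 x2 t2 : ℝ}
    (h1 : 0 ≤ x1) (h2 : 0 ≤ x2) (ht1 : 0 ≤ t1)
    (hex : U (x2, t2) = U (x1, t1) + (t2 - t1) * Leg fr ((x2 - x1) / (t2 - t1))) {τ z : ℝ} (h3 : t1 < τ)
    (h4 : τ < t2) (hz : z = x1 + (x2 - x1) / (t2 - t1) * (τ - t1)) (hz0 : 0 < z) :
    deriv fr (um z τ) = (x2 - x1) / (t2 - t1) ∧ deriv fr (up z τ) = (x2 - x1) / (t2 - t1) := by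
  obtain ⟨u, H⟩ := P.hpr
  have eq : (-x2 - -x1) / (t2 - t1) = - ((x2 - x1) / (t2 - t1)) := by rw [← neg_div]; congr 1; ring
  have ez : -x1 + (-x2 - -x1) / (t2 - t1) * (τ - t1) = -z := by rw [eq, hz]; ring
  have h := H.segment hr.neg (neg_nonpos.2 h1) (neg_nonpos.2 h2) ht1
    (by simp only [neg_neg]; rw [hr.leg_neg, eq, neg_neg]; exact hex) h3 h4 (by rw [ez]; linarith)
  rw [ez, eq, hr.g_neg, neg_neg] at h
  have h' : HasDerivAt (fun x => U (x, τ)) (gInv fr ((x2 - x1) / (t2 - t1))) z := by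
    have := HasDerivAt.comp (h₂ := fun x => U (-x, τ)) (h := fun x : ℝ => -x) z h (hasDerivAt_neg z)
    simpa [Function.comp_def] using this
  have ht : 0 < τ := by linarith
  have e1 := (uniqueDiffWithinAt_Iic z).eq_deriv _ h'.hasDerivWithinAt (P.dl z τ ht)
  have e2 := (uniqueDiffWithinAt_Ici z).eq_deriv _ h'.hasDerivWithinAt (P.dr z τ ht)
  rw [← e1, ← e2, hr.d_g]; exact ⟨rfl, rfl⟩

theorem Pot.seg_0 (P : Pot fl fr γ U um up F) {t1 t2 : ℝ} (ht1 : 0 ≤ t1) (ht : t1 < t2)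
    (hex : U (0, t2) = U (0, t1) + (t2 - t1) * (-γ)) :
    ∀ᵐ τ : ℝ, t1 < τ → τ < t2 → fl (um 0 τ) = γ ∧ fr (up 0 τ) = γ := by
  have h0 : ∫ t in t1..t2, (F t - γ) = 0 := by
    rw [intervalIntegral.integral_sub (P.Fi _ _) intervalIntegrable_const,
      intervalIntegral.integral_const, smul_eq_mul]
    have := P.int t1 t2 ht1 ht.le
    linarith
  have hi : IntegrableOn (fun t => F t - γ) (Ioc t1 t2) :=
    ((P.Fi t1 t2).sub intervalIntegrable_const).1
  rw [intervalIntegral.integral_of_le ht.le] at h0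
  have hnn : 0 ≤ᵐ[volume.restrict (Ioc t1 t2)] fun t => F t - γ := by
    rw [EventuallyLE, ae_restrict_iff' measurableSet_Ioc]
    filter_upwards [P.ge] with t h hm
    have := h (ht1.trans_lt hm.1)
    simp only [Pi.zero_apply]; linarith
  have := (integral_eq_zero_iff_of_nonneg_ae hnn hi).1 h0
  rw [EventuallyEq, ae_restrict_iff' measurableSet_Ioc] at this
  filter_upwards [this, P.tr] with τ h1 h2 h3 h4
  have h1 := h1 ⟨h3, h4.le⟩
  have h2 := h2 (ht1.trans_lt h3)
  simp only [Pi.zero_apply] at h1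
  constructor
  · rw [← h2.1]; linarith
  · rw [← h2.2]; linarith

theorem seg_pos {x1 t1 x2 t2 τ : ℝ} (h3 : t1 < τ) (h4 : τ < t2) (h1 : 0 ≤ x1) (h2 : 0 ≤ x2)
    (h : 0 < x1 ∨ 0 < x2) : 0 < x1 + (x2 - x1) / (t2 - t1) * (τ - t1) := by
  have ht : 0 < t2 - t1 := by linarith
  have e : x1 + (x2 - x1) / (t2 - t1) * (τ - t1) = (x1 * (t2 - τ) + x2 * (τ - t1)) / (t2 - t1) := by
    field_simp; ring
  rw [e]
  apply div_pos _ ht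
  have p1 : 0 < t2 - τ := by linarith
  have p2 : 0 < τ - t1 := by linarith
  rcases h with h | h
  · have := mul_pos h p1; have := mul_nonneg h2 p2.le; linarith
  · have := mul_pos h p2; have := mul_nonneg h1 p1.le; linarith

theorem seg_neg {x1 t1 x2 t2 τ : ℝ} (h3 : t1 < τ) (h4 : τ < t2) (h1 : x1 ≤ 0) (h2 : x2 ≤ 0)
    (h : x1 < 0 ∨ x2 < 0) : x1 + (x2 - x1) / (t2 - t1) * (τ - t1) < 0 := by
  have := seg_pos (x1 := -x1) (x2 := -x2) h3 h4 (by linarith) (by linarith)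
    (h.imp (fun h => by linarith) (fun h => by linarith))
  have eq : (-x2 - -x1) / (t2 - t1) = - ((x2 - x1) / (t2 - t1)) := by rw [← neg_div]; congr 1; ring
  rw [eq] at this; linarith

def gicAt (fl fr : ℝ → ℝ) (γ : ℝ) (um up : ℝ → ℝ → ℝ) (q z τ : ℝ) : Prop :=
  (z < 0 → deriv fl (um z τ) = q ∧ deriv fl (up z τ) = q) ∧
  (0 < z → deriv fr (um z τ) = q ∧ deriv fr (up z τ) = q) ∧
  (z = 0 → fl (um 0 τ) = γ ∧ fr (up 0 τ) = γ)

theorem Pot.seg_gic (P : Pot fl fr γ U um up F) (hl : UC fl a) (hr : UC fr a) {x1 t1 x2 t2 : ℝ}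
    (ht1 : 0 ≤ t1) (h : okseg x1 t1 x2 t2)
    (hex : U (x2, t2) = U (x1, t1) + kap (Leg fl) (Leg fr) γ x1 t1 x2 t2) :
    ∀ᵐ τ : ℝ, t1 < τ → τ < t2 →
      gicAt fl fr γ um up ((x2 - x1) / (t2 - t1)) (x1 + (x2 - x1) / (t2 - t1) * (τ - t1)) τ := by
  by_cases hc : x1 < 0 ∨ x2 < 0
  · have hx : x1 ≤ 0 ∧ x2 ≤ 0 := by
      rcases h.2.2 with h' | h'
      · exact h'
      · exfalso; rcases hc with hc | hc <;> linarith [h'.1, h'.2]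
    rw [kap_l hc] at hex
    refine Eventually.of_forall fun τ h3 h4 => ?_
    have hz := seg_neg h3 h4 hx.1 hx.2 hc
    exact ⟨fun _ => P.seg_l hl hx.1 hx.2 ht1 hex h3 h4 rfl hz, fun h => absurd h hz.not_gt,
      fun h => absurd h hz.ne⟩
  · push Not at hc
    by_cases hc' : 0 < x1 ∨ 0 < x2
    · rw [kap_r hc.1 hc.2 hc'] at hex
      refine Eventually.of_forall fun τ h3 h4 => ?_
      have hz := seg_pos h3 h4 hc.1 hc.2 hc'
      exact ⟨fun h => absurd h hz.not_gt, fun _ => P.seg_r hr hc.1 hc.2 ht1 hex h3 h4 rfl hz,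
        fun h => absurd h hz.ne'⟩
    · push Not at hc'
      have e1 : x1 = 0 := le_antisymm hc'.1 hc.1
      have e2 : x2 = 0 := le_antisymm hc'.2 hc.2
      subst e1 e2
      rw [kap_0] at hex
      rcases h.1.eq_or_lt with he | hlt
      · exact Eventually.of_forall fun τ h3 h4 => by linarith
      filter_upwards [P.seg_0 ht1 hlt hex] with τ hτ h3 h4
      have e : (0:ℝ) + (0 - 0) / (t2 - t1) * (τ - t1) = 0 := by simp
      rw [e]
      exact ⟨fun h => absurd h (lt_irrefl _), fun h => absurd h (lt_irrefl _), fun _ => hτ h3 h4⟩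

def poly (T x0 x1 t1 x2 t2 y : ℝ) (t : ℝ) : ℝ :=
  x0 + (x1 - x0) / (t1 - 0) * min t t1 + (x2 - x1) / (t2 - t1) * (max t1 (min t t2) - t1) +
    (y - x2) / (T - t2) * (max t2 t - t2)

theorem okseg_mul {x1 t1 x2 t2 : ℝ} (h : okseg x1 t1 x2 t2) :
    (x2 - x1) / (t2 - t1) * (t2 - t1) = x2 - x1 := by
  by_cases he : t1 = t2
  · rw [h.2.1 he]; simp
  · exact div_mul_cancel₀ _ (sub_ne_zero.2 (Ne.symm he))

theorem poly_1 {T x0 x1 t1 x2 t2 y t : ℝ} (h : okpath T x0 x1 t1 x2 t2 y) (ht : t < t1) :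
    poly T x0 x1 t1 x2 t2 y t = x0 + (x1 - x0) / (t1 - 0) * (t - 0) := by
  have h2 := h.2.1.1
  unfold poly
  rw [min_eq_left ht.le, min_eq_left (by linarith : t ≤ t2), max_eq_left ht.le, max_eq_left (by linarith : t ≤ t2)]
  ring

theorem poly_2 {T x0 x1 t1 x2 t2 y t : ℝ} (h : okpath T x0 x1 t1 x2 t2 y) (ht : t1 < t) (ht2 : t < t2) :
    poly T x0 x1 t1 x2 t2 y t = x1 + (x2 - x1) / (t2 - t1) * (t - t1) := by
  have e := okseg_mul h.1
  unfold poly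
  rw [min_eq_right ht.le, min_eq_left ht2.le, max_eq_right ht.le, max_eq_left ht2.le]
  rw [sub_zero] at *
  linarith

theorem poly_3 {T x0 x1 t1 x2 t2 y t : ℝ} (h : okpath T x0 x1 t1 x2 t2 y) (ht : t2 ≤ t) :
    poly T x0 x1 t1 x2 t2 y t = x2 + (y - x2) / (T - t2) * (t - t2) := by
  have e := okseg_mul h.1
  have e' := okseg_mul h.2.1
  have h2 := h.2.1.1
  unfold poly
  rw [min_eq_right (by linarith : t1 ≤ t), min_eq_right ht, max_eq_right h2, max_eq_right ht]
  rw [sub_zero] at *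
  linarith

theorem poly_T {T x0 x1 t1 x2 t2 y : ℝ} (h : okpath T x0 x1 t1 x2 t2 y) : poly T x0 x1 t1 x2 t2 y T = y := by
  rw [poly_3 h h.2.2.1, okseg_mul h.2.2]; ring

theorem poly_lip (T x0 x1 t1 x2 t2 y : ℝ) : ∃ K, LipschitzWith K (poly T x0 x1 t1 x2 t2 y) := by
  have i := LipschitzWith.id (α := ℝ)
  have l1 := (lipschitzWith_smul ((x1 - x0) / (t1 - 0))).comp (i.min_const t1)
  have c1 : LipschitzWith 0 (fun _ : ℝ => t1) := LipschitzWith.const t1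
  have c2 : LipschitzWith 0 (fun _ : ℝ => t2) := LipschitzWith.const t2
  have c0 : LipschitzWith 0 (fun _ : ℝ => x0) := LipschitzWith.const x0
  have l2 := (lipschitzWith_smul ((x2 - x1) / (t2 - t1))).comp (((i.min_const t2).const_max t1).sub c1)
  have l3 := (lipschitzWith_smul ((y - x2) / (T - t2))).comp ((i.const_max t2).sub c2)
  exact ⟨_, ((c0.add l1).add l2).add l3⟩

theorem aff_deriv {ζ : ℝ → ℝ} {b q s τ l r : ℝ} (h1 : l < τ) (h2 : τ < r)
    (h : ∀ t, l < t → t < r → ζ t = b + q * (t - s)) : HasDerivAt ζ q τ := by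
  have : HasDerivAt (fun t => b + q * (t - s)) q τ := by
    simpa using (((hasDerivAt_id τ).sub_const s).const_mul q).const_add b
  refine this.congr_of_eventuallyEq ?_
  filter_upwards [Ioo_mem_nhds h1 h2] with t ht
  exact h t ht.1 ht.2

theorem Pot.poly_gic (P : Pot fl fr γ U um up F) (hl : UC fl a) (hr : UC fr a) {T x0 x1 t1 x2 t2 y : ℝ}
    (h : okpath T x0 x1 t1 x2 t2 y)
    (hex : U (x0, 0) + pcost (Leg fl) (Leg fr) γ T x0 x1 t1 x2 t2 y ≤ U (y, T)) :
    ∀ᵐ τ : ℝ, 0 ≤ τ → τ ≤ T → ∃ q, HasDerivAt (poly T x0 x1 t1 x2 t2 y) q τ ∧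
      gicAt fl fr γ um up q (poly T x0 x1 t1 x2 t2 y τ) τ := by
  have h1 := P.upSeg hl hr le_rfl h.1
  have h2 := P.upSeg hl hr h.1.1 h.2.1
  have h3 := P.upSeg hl hr (h.1.1.trans h.2.1.1) h.2.2
  unfold pcost at hex
  filter_upwards [P.seg_gic hl hr le_rfl h.1 (by linarith), P.seg_gic hl hr h.1.1 h.2.1 (by linarith),
    P.seg_gic hl hr (h.1.1.trans h.2.1.1) h.2.2 (by linarith), Measure.ae_ne volume 0, Measure.ae_ne volume t1,
    Measure.ae_ne volume t2, Measure.ae_ne volume T] with τ g1 g2 g3 n0 n1 n2 nT a0 aT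
  have a0 : 0 < τ := lt_of_le_of_ne a0 (Ne.symm n0)
  have aT : τ < T := lt_of_le_of_ne aT nT
  rcases lt_or_gt_of_ne n1 with b1 | b1
  · refine ⟨_, aff_deriv a0 b1 (fun t _ ht => poly_1 h ht), ?_⟩
    rw [poly_1 h b1]; exact g1 a0 b1
  · rcases lt_or_gt_of_ne n2 with b2 | b2
    · refine ⟨_, aff_deriv b1 b2 (fun t ht ht' => poly_2 h ht ht'), ?_⟩
      rw [poly_2 h b1 b2]; exact g2 b1 b2
    · refine ⟨_, aff_deriv b2 aT (fun t ht _ => poly_3 h ht.le), ?_⟩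
      rw [poly_3 h b2.le]; exact g3 b2 aT

end gic

theorem ABSol.poly_charSet {fl fr : ℝ → ℝ} {A B a γ : ℝ} {u0 : ℝ → ℝ} (S : ABSol fl fr A B u0)
    (hl : UC fl a) (hr : UC fr a) {U : ℝ × ℝ → ℝ} {F : ℝ → ℝ} (P : Pot fl fr γ U S.um S.up F)
    {T x0 x1 t1 x2 t2 y : ℝ}
    (h : okpath T x0 x1 t1 x2 t2 y)
    (hex : U (x0, 0) + pcost (Leg fl) (Leg fr) γ T x0 x1 t1 x2 t2 y ≤ U (y, T)) :
    poly T x0 x1 t1 x2 t2 y ∈ charSet T fl fr γ S y := by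
  refine ⟨⟨?_, ?_⟩, poly_T h⟩
  · obtain ⟨K, hK⟩ := poly_lip T x0 x1 t1 x2 t2 y
    exact ⟨K, hK.lipschitzOnWith⟩
  · rw [ae_restrict_iff' measurableSet_Icc]
    filter_upwards [P.poly_gic hl hr h hex] with τ hτ hm
    obtain ⟨q, hd, g1, g2, g3⟩ := hτ hm.1 hm.2
    refine ⟨fun hz => ?_, fun hz => ?_, g3⟩
    · have := g1 hz
      rw [this.1, this.2]; exact ⟨hd, rfl⟩
    · have := g2 hz
      rw [this.1, this.2]; exact ⟨hd, rfl⟩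

theorem ABSol.U_slice {fl fr : ℝ → ℝ} {A B : ℝ} {u0 : ℝ → ℝ} (S : ABSol fl fr A B u0) {t : ℝ} (ht : 0 ≤ t)
    (x : ℝ) : S.U (x, t) = S.U (0, t) + ∫ y in (0:ℝ)..x, S.u y t := by
  unfold ABSol.U
  simp only [max_eq_left ht, intervalIntegral.integral_same]
  ring

/-- integrals of a.e. equal reflected profiles -/
theorem int_refl {g h : ℝ → ℝ} (e : ∀ᵐ x : ℝ, g x = h (-x)) (x : ℝ) :
    ∫ y in (0:ℝ)..x, g y = - ∫ y in (0:ℝ)..(-x), h y := by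
  have : ∫ y in (0:ℝ)..x, g y = ∫ y in (0:ℝ)..x, h (-y) :=
    intervalIntegral.integral_congr_ae (by filter_upwards [e] with y hy _ using hy)
  rw [this, intervalIntegral.integral_comp_neg, neg_zero, ← intervalIntegral.integral_symm]

/-- the backward-forward solution `u^*` and any AB-entropy
solution reaching `ω^T` at time `T` share an AB-genuine/interface
characteristic through every point `(x,T)` (Proposition 4.2 of the paper). -/
theorem common_characteristic
    {T a θl θr A B : ℝ} {fl fr : ℝ → ℝ}
    (hT : 0 < T)
    (hflC : ContDiff ℝ 2 fl) (hfrC : ContDiff ℝ 2 fr)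
    (ha : 0 < a)
    (hfl2 : ∀ w : ℝ, a ≤ deriv (deriv fl) w)
    (hfr2 : ∀ w : ℝ, a ≤ deriv (deriv fr) w)
    (hf0 : fl 0 = fr 0) (hf1 : fl 1 = fr 1)
    (hθl : deriv fl θl = 0) (hθr : deriv fr θr = 0)
    (hθl0 : 0 ≤ θl) (hθr1 : θr ≤ 1)
    (hAB : fl A = fr B) (hA' : deriv fl A ≤ 0) (hB' : 0 ≤ deriv fr B)
    {Bb Aa : ℝ} {ω : ℝ → ℝ}
    (hBb : Bb ≤ θr) (hBbf : fr Bb = fr B)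
    (hAa : θl ≤ Aa) (hAaf : fl Aa = fl A)
    (hω : Attainable T fl fr A B ω)
    (v : ABSol fr fl Bb Aa (fun x => ω (-x)))
    (ustar : ABSol fl fr A B (fun x => v.u (-x) T))
    {u0 : ℝ → ℝ} (hu0 : IsLinf u0)
    (usol : ABSol fl fr A B u0)
    (husolT : ∀ᵐ x : ℝ ∂volume, usol.u x T = ω x) :
    ∀ x : ℝ, (charSet T fl fr (fl A) ustar x ∩
      charSet T fl fr (fl A) usol x).Nonempty := by
  intro y
  have hl : UC fl a := ⟨hflC, ha, hfl2⟩
  have hr : UC fr a := ⟨hfrC, ha, hfr2⟩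
  have hγ : fr Bb = fl A := by rw [hBbf, hAB]
  have hb : deriv fr Bb ≤ 0 := by rw [← hθr]; exact hr.strictMono.monotone hBb
  have hc : 0 ≤ deriv fl Aa := by rw [← hθl]; exact hl.strictMono.monotone hAa
  have gl : -(fl A) ≤ Leg fl 0 := by have := hl.fenchel A 0; linarith
  have gr : -(fl A) ≤ Leg fr 0 := by have := hr.fenchel B 0; rw [hAB]; linarith
  have PU := usol.pot hl hr hAB hA' hB'
  have PS := ustar.pot hl hr hAB hA' hB'
  have PV := v.pot hr hl (by rw [hγ, hAaf]) hb hc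
  rw [hγ] at PV
  have s0 : ∀ x, v.U (-x, 0) = v.U (0, 0) - (usol.U (x, T) - usol.U (0, T)) := by
    intro x
    rw [v.U_slice le_rfl, usol.U_slice hT.le x]
    have e : ∀ᵐ x : ℝ, v.u x 0 = usol.u (-x) T := by
      have h := (Measure.measurePreserving_neg (volume : Measure ℝ)).quasiMeasurePreserving.ae husolT
      filter_upwards [v.init, h] with z h1 h2
      rw [h1, h2]
    rw [int_refl (h := fun z => usol.u z T) e, neg_neg]; ring
  have s1 : ∀ x, v.U (-x, T) = v.U (0, T) - (ustar.U (x, 0) - ustar.U (0, 0)) := by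
    intro x
    rw [v.U_slice hT.le, ustar.U_slice le_rfl x, int_refl (h := fun z => v.u z T) ustar.init]; ring
  obtain ⟨x0, x1, t1, x2, t2, hp, hex⟩ := PU.path_ex hl hr gl gr hT y
  have k1 : ustar.U (x0, 0) - ustar.U (0, 0) - v.U (0, T) ≤ usol.U (x0, 0) - v.U (0, 0) - usol.U (0, T) := by
    obtain ⟨w0, w1, r1, w2, r2, hq, hqe⟩ := PV.path_ex hr hl gr gl hT (-x0)
    have hq' := okpath_rev hq
    have := PU.path_up hl hr hq'
    rw [pcost_rev _ _ _ hq, neg_neg] at this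
    have e0 := s0 (-w0)
    have e1 := s1 x0
    rw [neg_neg] at e0
    linarith
  have k2 : usol.U (y, T) - usol.U (0, T) - v.U (0, 0) ≤ ustar.U (y, T) - ustar.U (0, 0) - v.U (0, T) := by
    obtain ⟨w0, w1, r1, w2, r2, hq, hqe⟩ := PS.path_ex hl hr gl gr hT y
    have := PV.path_up hr hl (okpath_rev hq)
    rw [pcost_rev _ _ _ hq] at this
    have e0 := s0 y
    have e1 := s1 w0
    linarith
  exact ⟨poly T x0 x1 t1 x2 t2 y, ustar.poly_charSet hl hr PS hp (by linarith),
    usol.poly_charSet hl hr PU hp hex.ge⟩
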